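/- Let k ≥ 2 be an integer, j ∈ {1,…,k−1}, and c ∈ ℝ a constant. Suppose (c_n) is a sequence of real numbers converging to c, and set p = p(n) = ((j+1)·log n + log log n + c_n)·(k−j)!/((k−j+1)·n^{k−j}). Then dim_{F_2} H^j(G_p;F_2) converges in distribution to a Poisson random variable with expectation λ_j := (j+1)·e^{−c}/((k−j+1)^2·j!), i.e. for every integer s ≥ 0, Pr(dim_{F_2} H^j(G_p;F_2) = s) → e^{−λ_j}·λ_j^s/s! as n → ∞; moreover with high probability H^0(G_p;F_2) ≅ F_2 and H^i(G_p;F_2) = 0 for all i ∈ {1,…,j−1}. In particular, Pr(G_p is F_2-cohomologically j-connected) → e^{−λ_j} as n → ∞. -/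

import Mathlib

open MeasureTheory Filter

attribute [local instance] Classical.propDecidable

namespace RSC

variable {V : Type*}

/-- `A` is an `i`-dimensional simplex of the complex `G`. -/
def IsSimplex (G : Set (Finset V)) (i : ℕ) (A : Finset V) : Prop :=
  A ∈ G ∧ A.card = i + 1

/-- A `k`-dimensional simplicial complex on vertex set `V`. -/
structure IsKComplex (G : Set (Finset V)) (k : ℕ) : Prop where
  down : ∀ A ∈ G, ∀ B, B ⊆ A → B.Nonempty → B ∈ G
  singletons : ∀ v : V, ({v} : Finset V) ∈ G
  dim : ∀ A ∈ G, A.card ≤ k + 1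

/-- `i`-cochains with `F₂`-coefficients. -/
abbrev Cochain (G : Set (Finset V)) (i : ℕ) : Type _ :=
  {A : Finset V // IsSimplex G i A} → ZMod 2

/-- The coboundary map `δ^i : C^i(G) → C^{i+1}(G)`. -/
noncomputable def coboundary (G : Set (Finset V)) (i : ℕ) :
    Cochain G i →ₗ[ZMod 2] Cochain G (i + 1) where
  toFun f := fun σ => ∑ τ ∈ Finset.powersetCard (i + 1) (σ : Finset V),
      if h : IsSimplex G i τ then f ⟨τ, h⟩ else 0
  map_add' f g := by
    funext σ
    simp only [Pi.add_apply, ← Finset.sum_add_distrib]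
    refine Finset.sum_congr rfl fun τ _ => ?_
    by_cases h : IsSimplex G i τ <;> simp [h]
  map_smul' c f := by
    funext σ
    simp only [Pi.smul_apply, RingHom.id_apply, Finset.smul_sum]
    refine Finset.sum_congr rfl fun τ _ => ?_
    by_cases h : IsSimplex G i τ <;> simp [h]

/-- The submodule of `i`-cocycles. -/
noncomputable def cocycles (G : Set (Finset V)) (i : ℕ) : Submodule (ZMod 2) (Cochain G i) :=
  LinearMap.ker (coboundary G i)

/-- The submodule of `i`-coboundaries (`δ^{-1}` is the zero map). -/
noncomputable def coboundaries (G : Set (Finset V)) : (i : ℕ) → Submodule (ZMod 2) (Cochain G i)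
  | 0 => ⊥
  | (i + 1) => LinearMap.range (coboundary G i)

/-- The `i`-th cohomology group `H^i(G;F₂) = ker δ^i / im δ^{i-1}`. -/
noncomputable abbrev cohomology (G : Set (Finset V)) (i : ℕ) :=
  (cocycles G i) ⧸ ((coboundaries G i).comap (cocycles G i).subtype)

/-- `F₂`-cohomological `j`-connectedness: `H^0 ≅ F₂` and `H^i = 0` for `1 ≤ i ≤ j`. -/
def CohomConnected (G : Set (Finset V)) (j : ℕ) : Prop :=
  Nonempty (cohomology G 0 ≃ₗ[ZMod 2] ZMod 2) ∧
    ∀ i, 1 ≤ i → i ≤ j → Subsingleton (cohomology G i)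

/-- The `j`-flower in `K` with centre `C`: the set of petals `C ∪ {w}`, `w ∈ K \ C`. -/
def Flower [DecidableEq V] (K C : Finset V) : Set (Finset V) :=
  {P | ∃ w ∈ K \ C, P = insert w C}

/-- A copy of `M_j^-`: a `k`-simplex `K` together with a `(j-1)`-simplex `C ⊆ K` such that
each petal of the flower `F(K,C)` is contained in no `k`-simplex other than `K`. -/
def IsMjMinus [DecidableEq V] (G : Set (Finset V)) (k j : ℕ) (K C : Finset V) : Prop :=
  IsSimplex G k K ∧ C ∈ G ∧ C.card = j ∧ C ⊆ K ∧
    ∀ P ∈ Flower K C, ∀ K', IsSimplex G k K' → P ⊆ K' → K' = K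

/-- A `j`-cycle: every `(j-1)`-simplex lies in an even number of members of `J`. -/
def IsCycle (G : Set (Finset V)) (j : ℕ) (J : Finset (Finset V)) : Prop :=
  (∀ σ ∈ J, IsSimplex G j σ) ∧
    ∀ τ : Finset V, τ.card = j → Even (J.filter (fun σ => τ ⊆ σ)).card

/-- A copy of `M_j`. -/
def IsMj [DecidableEq V] (G : Set (Finset V)) (k j : ℕ) (K C : Finset V)
    (J : Finset (Finset V)) : Prop :=
  IsMjMinus G k j K C ∧ IsCycle G j J ∧ ∃! P : Finset V, P ∈ J ∧ P ∈ Flower K C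

/-- A `j`-shell: a `(j+2)`-set all of whose `(j+1)`-subsets are `j`-simplices. -/
def IsShell (G : Set (Finset V)) (j : ℕ) (A : Finset V) : Prop :=
  A.card = j + 2 ∧ ∀ τ ⊆ A, τ.card = j + 1 → τ ∈ G

/-- A copy of `M_j^*`. -/
def IsMjStar [DecidableEq V] (G : Set (Finset V)) (k j : ℕ) (K C : Finset V) (w a : V) : Prop :=
  IsMjMinus G k j K C ∧ w ∈ K \ C ∧ a ∉ K ∧ IsShell G j (insert a (insert w C))

/-- The support of a cochain. -/
def cochainSupport {G : Set (Finset V)} {i : ℕ} (f : Cochain G i) : Set (Finset V) :=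
  {A | ∃ h : IsSimplex G i A, f ⟨A, h⟩ = 1}

/-- A cochain arising from a copy of `M_j^-`: its support is the flower `F(K,C)`. -/
def ArisesFrom [DecidableEq V] (G : Set (Finset V)) (k j : ℕ) (f : Cochain G j)
    (K C : Finset V) : Prop :=
  IsMjMinus G k j K C ∧ cochainSupport f = Flower K C

/-- A `j`-cocycle generated by copies of `M_j^-`: it differs by a `j`-coboundary from a sum
of `j`-cocycles arising from copies of `M_j^-`. -/
def GeneratedByMjMinus [DecidableEq V] (G : Set (Finset V)) (k j : ℕ) (f : Cochain G j) : Prop :=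
  ∃ (m : ℕ) (fs : Fin m → Cochain G j),
    (∀ i, ∃ K C, ArisesFrom G k j (fs i) K C) ∧
      f - (∑ i, fs i) ∈ coboundaries G j

/-- Membership in `N_G`: a `j`-cocycle not generated by copies of `M_j^-`. -/
def InNG [DecidableEq V] (G : Set (Finset V)) (k j : ℕ) (f : Cochain G j) : Prop :=
  f ∈ cocycles G j ∧ ¬ GeneratedByMjMinus G k j f

/-- Traversability: the transitive closure of "lying in a common `k`-simplex" is `S × S`. -/
def Traversable (G : Set (Finset V)) (k : ℕ) (S : Set (Finset V)) : Prop :=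
  ∀ σ₁ ∈ S, ∀ σ₂ ∈ S,
    Relation.TransGen
      (fun a b => a ∈ S ∧ b ∈ S ∧ ∃ K, IsSimplex G k K ∧ a ⊆ K ∧ b ⊆ K) σ₁ σ₂

/-- A local obstacle: a `k`-simplex containing at least `k-j+1` many `j`-simplices,
each lying in no other `k`-simplex. -/
def IsLocalObstacle (G : Set (Finset V)) (k j : ℕ) (K : Finset V) : Prop :=
  IsSimplex G k K ∧
    k - j + 1 ≤ {σ : Finset V | IsSimplex G j σ ∧ σ ⊆ K ∧
      ∀ K', IsSimplex G k K' → σ ⊆ K' → K' = K}.ncard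

/-- The random complex `G_p` given birth times `t`: all singletons together with all
non-empty subsets of `(k+1)`-sets with birth time at most `p`. -/
def complexAt (k n : ℕ) (t : Finset (Fin n) → ℝ) (p : ℝ) : Set (Finset (Fin n)) :=
  {A | (∃ v, A = {v}) ∨
    (A.Nonempty ∧ ∃ K : Finset (Fin n), K.card = k + 1 ∧ t K ≤ p ∧ A ⊆ K)}

/-- The distribution of birth times: i.i.d. uniform on `[0,1]`. -/
noncomputable def birthMeasure (n : ℕ) : Measure (Finset (Fin n) → ℝ) :=
  Measure.pi fun _ => volume.restrict (Set.Icc (0 : ℝ) 1)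

/-- `p_{M_j}`: the supremum of the probabilities `p ∈ [0,1]` at which `G_p` contains
a copy of `M_j`. -/
noncomputable def pMj (k j n : ℕ) (t : Finset (Fin n) → ℝ) : ℝ :=
  sSup {p : ℝ | p ∈ Set.Icc (0 : ℝ) 1 ∧
    ∃ K C J, IsMj (complexAt k n t p) k j K C J}

/-- The threshold `p_j`. -/
noncomputable def pjThreshold (k j n : ℕ) : ℝ :=
  ((j + 1 : ℝ) * Real.log n + Real.log (Real.log n)) * (Nat.factorial (k - j)) /
    (((k - j + 1 : ℕ) : ℝ) * (n : ℝ) ^ (k - j))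

/-- `p_j^-`. -/
noncomputable def pjMinus (k j n : ℕ) : ℝ :=
  (1 - 1 / Real.sqrt (Real.log n)) * ((j + 1 : ℝ) * Real.log n) * (Nat.factorial (k - j)) /
    (((k - j + 1 : ℕ) : ℝ) * (n : ℝ) ^ (k - j))

/-- `p_{j-1}^-`. -/
noncomputable def pjPrevMinus (k j n : ℕ) : ℝ :=
  (1 - 1 / Real.sqrt (Real.log n)) * ((j : ℝ) * Real.log n) * (Nat.factorial (k - j + 1)) /
    (((k - j + 2 : ℕ) : ℝ) * (n : ℝ) ^ (k - j + 1))

/-- `p_j^{(1)}`. -/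
noncomputable def pjOne (k j n : ℕ) : ℝ :=
  1 / (10 * ((j : ℝ) + 1) * (Nat.choose (k + 1) (j + 1)) * (n : ℝ) ^ (k - j))

/-- The number of copies of `M_j^-` in `G`. -/
noncomputable def countMjMinus (k j : ℕ) {n : ℕ} (G : Set (Finset (Fin n))) : ℕ :=
  {x : Finset (Fin n) × Finset (Fin n) | IsMjMinus G k j x.1 x.2}.ncard

/-- The number of copies of `M_j^*` in `G`. -/
noncomputable def countMjStar (k j : ℕ) {n : ℕ} (G : Set (Finset (Fin n))) : ℕ :=
  {x : Finset (Fin n) × Finset (Fin n) × Fin n × Fin n |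
    IsMjStar G k j x.1 x.2.1 x.2.2.1 x.2.2.2}.ncard

/-- `λ_j = (j+1)·e^{-c}/((k-j+1)²·j!)`. -/
noncomputable def lamj (k j : ℕ) (c : ℝ) : ℝ :=
  ((j : ℝ) + 1) * Real.exp (-c) / (((k - j + 1 : ℕ) : ℝ) ^ 2 * (Nat.factorial j))

/-! In the critical window `p` is of order `log n / n ^ (k - j)`. Summing `δ f` over all cones shows
that a cochain `f` of smallest support modulo coboundaries has a coboundary of size at least
`n * |supp f| / (j + 2)` on the full simplex. In degree `j - 1` this forces every cochain that is
not a cocycle on the full simplex to violate the cocycle condition on more than `n` of the random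
`k`-simplices, so that the cohomology below degree `j` is that of the full simplex.

For a `j`-cocycle of smallest support the `k`-simplices that meet its support can be explored by
common `j`-simplices and form clusters, whose number is bounded by a Catalan recursion. With high
probability, no small cluster covers a set of more than `k - j + 1` `j`-simplices unless one
`k`-simplex contains exactly one of them, and no large cluster covers a set with a large
coboundary unless this set fails to be a cocycle on some `k`-simplex. Hence the support has at
most `k - j + 1` elements and is the flower of a copy of `M_j^-`. The flowers are independent
modulo coboundaries by the expansion in degree `j - 1`, because each copy of `M_j^-` accounts for
a single `k`-simplex; therefore `dim H^j` is the number of copies of `M_j^-`.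

The factorial moments of this number converge to the powers of `λ_j`, and the Bonferroni
inequalities turn this into convergence in distribution. -/

/-- The `F₂`-coboundary operator of the full simplex on `V`, in all degrees at once: a cochain of
any degree is a function on all finite sets, the empty face included. -/
noncomputable def fullCoboundary : (Finset V → ZMod 2) →ₗ[ZMod 2] (Finset V → ZMod 2) where
  toFun f ρ := ∑ x ∈ ρ, f (ρ.erase x)
  map_add' f g := by ext ρ; simp [Finset.sum_add_distrib]
  map_smul' c f := by ext ρ; simp [Finset.mul_sum]

local notation "δ" => fullCoboundary

section FullSimplex

lemma fullCoboundary_apply (f : Finset V → ZMod 2) (ρ : Finset V) :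
    δ f ρ = ∑ x ∈ ρ, f (ρ.erase x) := rfl

lemma fullCoboundary_insert {v : V} {σ : Finset V} (hv : v ∉ σ) (f : Finset V → ZMod 2) :
    δ f (insert v σ) = f σ + ∑ x ∈ σ, f (insert v (σ.erase x)) := by
  rw [fullCoboundary_apply, Finset.sum_insert hv, Finset.erase_insert hv]
  congr 1
  refine Finset.sum_congr rfl fun x hx => ?_
  rw [Finset.erase_insert_of_ne (ne_of_mem_of_not_mem hx hv).symm]

lemma fullCoboundary_congr {f g : Finset V → ZMod 2} {ρ : Finset V} {m : ℕ}
    (hρ : ρ.card = m + 1) (h : ∀ σ ⊆ ρ, σ.card = m → f σ = g σ) : δ f ρ = δ g ρ := by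
  refine Finset.sum_congr rfl fun x hx => h _ (Finset.erase_subset _ _) ?_
  rw [Finset.card_erase_of_mem hx, hρ, Nat.add_sub_cancel]

lemma fullCoboundary_fullCoboundary (f : Finset V → ZMod 2) : δ (δ f) = 0 := by
  ext ρ
  simp only [fullCoboundary_apply, Finset.sum_sigma', Pi.zero_apply]
  refine Finset.sum_involution (fun a _ => ⟨a.2, a.1⟩) ?_ ?_ ?_ ?_
  · rintro ⟨x, y⟩ _
    simp only [Finset.erase_right_comm (a := x) (b := y)]
    exact CharTwo.add_self_eq_zero _
  · rintro ⟨x, y⟩ hxy _ heq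
    simp only [Finset.mem_sigma, Finset.mem_erase] at hxy
    exact hxy.2.1 (Sigma.mk.inj_iff.1 heq).1
  · rintro ⟨x, y⟩ hxy
    simp only [Finset.mem_sigma, Finset.mem_erase] at hxy ⊢
    exact ⟨hxy.2.2, hxy.2.1.symm, hxy.1⟩
  · exact fun _ _ => rfl

/-- The contraction of a cochain along the vertex `v`, the dual of coning a chain off at `v`. -/
noncomputable def contract (v : V) (f : Finset V → ZMod 2) (τ : Finset V) : ZMod 2 :=
  if v ∈ τ then 0 else f (insert v τ)

lemma fullCoboundary_contract_of_mem {v : V} {σ : Finset V} (hv : v ∈ σ)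
    (f : Finset V → ZMod 2) : δ (contract v f) σ = f σ := by
  rw [fullCoboundary_apply, Finset.sum_eq_single_of_mem v hv]
  · simp [contract, Finset.insert_erase hv]
  · intro x _ hxv
    simp [contract, hv, hxv.symm]

lemma add_fullCoboundary_contract (v : V) (f : Finset V → ZMod 2) (σ : Finset V) :
    f σ + δ (contract v f) σ = if v ∈ σ then 0 else δ f (insert v σ) := by
  split_ifs with hv
  · rw [fullCoboundary_contract_of_mem hv, CharTwo.add_self_eq_zero]
  · rw [fullCoboundary_insert hv, fullCoboundary_apply]
    simp [contract, hv]

/-- The support of a cochain among the `m`-element subsets of `K`. -/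
noncomputable def supportIn (K : Finset V) (m : ℕ) (f : Finset V → ZMod 2) : Finset (Finset V) :=
  (K.powersetCard m).filter fun σ => f σ ≠ 0

lemma mem_supportIn {K : Finset V} {m : ℕ} {f : Finset V → ZMod 2} {σ : Finset V} :
    σ ∈ supportIn K m f ↔ σ ⊆ K ∧ σ.card = m ∧ f σ ≠ 0 := by
  simp [supportIn, Finset.mem_powersetCard, and_assoc]

lemma mem_supportIn_univ [Fintype V] {m : ℕ} {f : Finset V → ZMod 2} {σ : Finset V} :
    σ ∈ supportIn Finset.univ m f ↔ σ.card = m ∧ f σ ≠ 0 := by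
  simp [mem_supportIn]

lemma mem_supportIn_add_contract [Fintype V] {v : V} {m : ℕ} {f : Finset V → ZMod 2}
    {σ : Finset V} :
    σ ∈ supportIn Finset.univ m (f + δ (contract v f)) ↔
      σ.card = m ∧ v ∉ σ ∧ δ f (insert v σ) ≠ 0 := by
  simp [mem_supportIn_univ, add_fullCoboundary_contract]

lemma card_supportIn_add_contract_le [Fintype V] (v : V) (m : ℕ) (f : Finset V → ZMod 2) :
    (supportIn Finset.univ m (f + δ (contract v f))).card ≤
      ((supportIn Finset.univ (m + 1) (δ f)).filter (v ∈ ·)).card := by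
  refine Finset.card_le_card_of_injOn (insert v) (fun σ hσ => ?_) fun σ hσ τ hτ heq => ?_
  · obtain ⟨hcard, hv, hne⟩ := mem_supportIn_add_contract.1 hσ
    simp [mem_supportIn_univ, hne, Finset.card_insert_of_notMem hv, hcard]
  · have hvσ := (mem_supportIn_add_contract.1 hσ).2.1
    have hvτ := (mem_supportIn_add_contract.1 hτ).2.1
    rw [← Finset.erase_insert hvσ, heq, Finset.erase_insert hvτ]

/- Summing over `v`, a face `ρ` in the support of `δ f` is counted once for each of its `m + 1`
vertices. -/
lemma card_mul_card_supportIn_le [Fintype V] {m : ℕ} {f : Finset V → ZMod 2}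
    (hmin : ∀ g, (supportIn Finset.univ m f).card ≤ (supportIn Finset.univ m (f + δ g)).card) :
    Fintype.card V * (supportIn Finset.univ m f).card ≤
      (m + 1) * (supportIn Finset.univ (m + 1) (δ f)).card := by
  calc Fintype.card V * (supportIn Finset.univ m f).card
      = ∑ _v : V, (supportIn Finset.univ m f).card := by simp
    _ ≤ ∑ v : V, ((supportIn Finset.univ (m + 1) (δ f)).filter (v ∈ ·)).card :=
      Finset.sum_le_sum fun v _ => (hmin _).trans (card_supportIn_add_contract_le v m f)
    _ = ∑ ρ ∈ supportIn Finset.univ (m + 1) (δ f), ρ.card := by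
      simp only [Finset.card_filter]
      rw [Finset.sum_comm]
      simp
    _ = (m + 1) * (supportIn Finset.univ (m + 1) (δ f)).card := by
      rw [Finset.sum_congr rfl fun ρ hρ => (mem_supportIn_univ.1 hρ).1]
      simp [mul_comm]

end FullSimplex

section CocyclesOnASimplex

/-- The degree `m` part of `f` (a function on `m`-sets) is a cocycle on the full simplex `K`. -/
def IsCocycleOn (f : Finset V → ZMod 2) (m : ℕ) (K : Finset V) : Prop :=
  ∀ ρ ⊆ K, ρ.card = m + 1 → δ f ρ = 0

lemma IsCocycleOn.congr {f g : Finset V → ZMod 2} {m : ℕ} {K : Finset V}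
    (hf : IsCocycleOn f m K) (h : ∀ σ ⊆ K, σ.card = m → f σ = g σ) : IsCocycleOn g m K :=
  fun ρ hρ hcard => by
    rw [← fullCoboundary_congr hcard fun σ hσ => h σ (hσ.trans hρ)]
    exact hf ρ hρ hcard

lemma IsCocycleOn.add {f g : Finset V → ZMod 2} {m : ℕ} {K : Finset V}
    (hf : IsCocycleOn f m K) (hg : IsCocycleOn g m K) : IsCocycleOn (f + g) m K :=
  fun ρ hρ hcard => by
    rw [map_add, Pi.add_apply, hf ρ hρ hcard, hg ρ hρ hcard, add_zero]

lemma isCocycleOn_zero (m : ℕ) (K : Finset V) : IsCocycleOn 0 m K :=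
  fun ρ _ _ => by rw [map_zero, Pi.zero_apply]

lemma isCocycleOn_fullCoboundary (g : Finset V → ZMod 2) (m : ℕ) (K : Finset V) :
    IsCocycleOn (δ g) m K :=
  fun ρ _ _ => by rw [fullCoboundary_fullCoboundary, Pi.zero_apply]

/-- The flower `F(K, C)` as a finset, compare `Flower`. -/
noncomputable def petals (K C : Finset V) : Finset (Finset V) :=
  (K \ C).image fun w => insert w C

lemma mem_petals {K C P : Finset V} : P ∈ petals K C ↔ ∃ w ∈ K \ C, insert w C = P :=
  Finset.mem_image

lemma card_petals {K C : Finset V} (hC : C ⊆ K) : (petals K C).card = K.card - C.card := by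
  rw [petals, Finset.card_image_of_injOn, Finset.card_sdiff_of_subset hC]
  exact (Finset.insert_inj_on C).mono fun w hw => (Finset.mem_sdiff.1 hw).2

lemma card_of_mem_petals {K C P : Finset V} (hP : P ∈ petals K C) : P.card = C.card + 1 := by
  obtain ⟨w, hw, rfl⟩ := mem_petals.1 hP
  exact Finset.card_insert_of_notMem (Finset.mem_sdiff.1 hw).2

lemma subset_of_mem_petals {K C P : Finset V} (hC : C ⊆ K) (hP : P ∈ petals K C) : P ⊆ K := by
  obtain ⟨w, hw, rfl⟩ := mem_petals.1 hP
  exact Finset.insert_subset (Finset.mem_sdiff.1 hw).1 hC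

/-- The set `σ` together with one exchange `σ - x w + w` for each `w ∈ K \ σ`. -/
noncomputable def exchanges (K σ : Finset V) (x : V → V) : Finset (Finset V) :=
  insert σ ((K \ σ).image fun w => insert w (σ.erase (x w)))

lemma exchanges_const {K σ : Finset V} {x₀ : V} (hσ : σ ⊆ K) (hx₀ : x₀ ∈ σ) :
    exchanges K σ (fun _ => x₀) = petals K (σ.erase x₀) := by
  rw [petals, Finset.sdiff_erase (hσ hx₀), Finset.image_insert, Finset.insert_erase hx₀,
    exchanges]

lemma card_exchanges {K σ : Finset V} (hσ : σ ⊆ K) (x : V → V) :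
    (exchanges K σ x).card = K.card - σ.card + 1 := by
  have hinj : Set.InjOn (fun w => insert w (σ.erase (x w))) (K \ σ : Finset V) := by
    intro a ha b _ hab
    have hab : insert a (σ.erase (x a)) = insert b (σ.erase (x b)) := hab
    have hmem : a ∈ insert b (σ.erase (x b)) := hab ▸ Finset.mem_insert_self a _
    refine (Finset.mem_insert.1 hmem).resolve_right fun h => ?_
    exact (Finset.mem_sdiff.1 ha).2 (Finset.mem_of_mem_erase h)
  rw [exchanges, Finset.card_insert_of_notMem, Finset.card_image_of_injOn hinj,
    Finset.card_sdiff_of_subset hσ]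
  intro hmem
  obtain ⟨w, hw, heq⟩ := Finset.mem_image.1 hmem
  exact (Finset.mem_sdiff.1 hw).2 (heq ▸ Finset.mem_insert_self w _)

variable {f : Finset V → ZMod 2} {m : ℕ} {K σ : Finset V}

lemma IsCocycleOn.exists_exchange (hf : IsCocycleOn f m K) (hσ : σ ∈ supportIn K m f) {w : V}
    (hw : w ∈ K \ σ) : ∃ x ∈ σ, insert w (σ.erase x) ∈ supportIn K m f := by
  obtain ⟨hσK, hcard, hne⟩ := mem_supportIn.1 hσ
  obtain ⟨hwK, hwσ⟩ := Finset.mem_sdiff.1 hw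
  have hcocycle := hf (insert w σ) (Finset.insert_subset hwK hσK)
    (by rw [Finset.card_insert_of_notMem hwσ, hcard])
  rw [fullCoboundary_insert hwσ] at hcocycle
  have hsum : ∑ x ∈ σ, f (insert w (σ.erase x)) ≠ 0 := fun h0 => by
    rw [h0, add_zero] at hcocycle
    exact hne hcocycle
  obtain ⟨x, hx, hfx⟩ := Finset.exists_ne_zero_of_sum_ne_zero hsum
  refine ⟨x, hx, mem_supportIn.2 ⟨?_, ?_, hfx⟩⟩
  · exact Finset.insert_subset hwK ((Finset.erase_subset _ _).trans hσK)
  · rw [Finset.card_insert_of_notMem (fun h => hwσ (Finset.mem_of_mem_erase h)),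
      Finset.card_erase_add_one hx, hcard]

lemma IsCocycleOn.exists_mem_supportIn (hf : IsCocycleOn f m K) (hσ : σ ∈ supportIn K m f)
    {w : V} (hw : w ∈ K) : ∃ τ ∈ supportIn K m f, w ∈ τ := by
  by_cases hwσ : w ∈ σ
  · exact ⟨σ, hσ, hwσ⟩
  · obtain ⟨x, _, hx⟩ := hf.exists_exchange hσ (Finset.mem_sdiff.2 ⟨hw, hwσ⟩)
    exact ⟨_, hx, Finset.mem_insert_self w _⟩

lemma IsCocycleOn.exists_exchanges_subset (hf : IsCocycleOn f m K)
    (hσ : σ ∈ supportIn K m f) :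
    ∃ x : V → V, (∀ w ∈ K \ σ, x w ∈ σ) ∧ exchanges K σ x ⊆ supportIn K m f := by
  choose! x hxσ hx using fun w (hw : w ∈ K \ σ) => hf.exists_exchange hσ hw
  refine ⟨x, hxσ, Finset.insert_subset hσ fun τ hτ => ?_⟩
  obtain ⟨w, hw, rfl⟩ := Finset.mem_image.1 hτ
  exact hx w hw

lemma IsCocycleOn.le_card_supportIn (hf : IsCocycleOn f m K) (hσ : σ ∈ supportIn K m f) :
    K.card - m + 1 ≤ (supportIn K m f).card := by
  obtain ⟨x, _, hsub⟩ := hf.exists_exchanges_subset hσ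
  obtain ⟨hσK, hcard, _⟩ := mem_supportIn.1 hσ
  rw [← hcard, ← card_exchanges hσK x, hcard]
  exact Finset.card_le_card hsub

/- If `x w ≠ x w'`, exchanging some `y` for `w'` in `τ = σ - x w + w` gives a member of the support
that contains `w'`. The only such member is `σ - x w' + w'`, but it contains `x w` while `τ` does
not. -/
lemma IsCocycleOn.exchange_unique (hf : IsCocycleOn f m K) {x : V → V}
    (hxσ : ∀ w ∈ K \ σ, x w ∈ σ) (heq : exchanges K σ x = supportIn K m f) {w w' : V}
    (hw : w ∈ K \ σ) (hw' : w' ∈ K \ σ) : x w = x w' := by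
  by_contra hne
  have hww : w ≠ w' := fun h => hne (congrArg x h)
  have hwσ := (Finset.mem_sdiff.1 hw).2
  obtain ⟨hw'K, hw'σ⟩ := Finset.mem_sdiff.1 hw'
  set τ := insert w (σ.erase (x w)) with hτ
  have hτmem : τ ∈ supportIn K m f := by
    rw [← heq]
    exact Finset.mem_insert_of_mem (Finset.mem_image_of_mem (fun u => insert u (σ.erase (x u))) hw)
  obtain ⟨y, _, hy⟩ := hf.exists_exchange hτmem (w := w')
    (Finset.mem_sdiff.2 ⟨hw'K, by simp [hτ, hww.symm, hw'σ]⟩)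
  have hxw : x w ∉ insert w' (τ.erase y) := by
    have h1 : x w ≠ w' := ne_of_mem_of_not_mem (hxσ w hw) hw'σ
    have h2 : x w ≠ w := ne_of_mem_of_not_mem (hxσ w hw) hwσ
    simp [hτ, h1, h2]
  rw [← heq, exchanges, Finset.mem_insert, Finset.mem_image] at hy
  obtain hy | ⟨u, hu, hy⟩ := hy
  · exact hw'σ (hy ▸ Finset.mem_insert_self w' _)
  · have hmem : w' ∈ insert u (σ.erase (x u)) := hy ▸ Finset.mem_insert_self w' _
    obtain rfl | hmem := Finset.mem_insert.1 hmem
    · exact hxw (hy ▸ Finset.mem_insert_of_mem (Finset.mem_erase.2 ⟨hne, hxσ w hw⟩))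
    · exact hw'σ (Finset.mem_of_mem_erase hmem)

lemma IsCocycleOn.exists_supportIn_eq_petals (hf : IsCocycleOn f m K)
    (hσ : σ ∈ supportIn K m f) (hm : m < K.card)
    (hle : (supportIn K m f).card ≤ K.card - m + 1) :
    ∃ C ⊆ K, C.card + 1 = m ∧ supportIn K m f = petals K C := by
  obtain ⟨x, hxσ, hsub⟩ := hf.exists_exchanges_subset hσ
  obtain ⟨hσK, hcard, _⟩ := mem_supportIn.1 hσ
  have heq : exchanges K σ x = supportIn K m f :=
    Finset.eq_of_subset_of_card_le hsub (by rwa [card_exchanges hσK, hcard])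
  obtain ⟨w₀, hw₀⟩ : (K \ σ).Nonempty := by
    rw [← Finset.card_pos, Finset.card_sdiff_of_subset hσK, hcard]
    omega
  refine ⟨σ.erase (x w₀), (Finset.erase_subset _ _).trans hσK, ?_, ?_⟩
  · rw [Finset.card_erase_add_one (hxσ w₀ hw₀), hcard]
  · rw [← heq, ← exchanges_const hσK (hxσ w₀ hw₀), exchanges, exchanges]
    exact congrArg _ (Finset.image_congr fun w hw => by
      rw [hf.exchange_unique hxσ heq hw hw₀])

end CocyclesOnASimplex

section Clusters

variable {α : Type*} {adj : α → α → Prop}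

/-- The finite sets that are connected for the relation `adj`, presented as the sets that can be
built from a singleton by adding one neighbour at a time. -/
inductive IsCluster (adj : α → α → Prop) : Finset α → Prop
  | singleton (a : α) : IsCluster adj {a}
  | grow {A : Finset α} {a b : α} :
      IsCluster adj A → a ∈ A → adj a b → b ∉ A → IsCluster adj (insert b A)

lemma IsCluster.nonempty {A : Finset α} (hA : IsCluster adj A) : A.Nonempty := by
  cases hA <;> simp

lemma IsCluster.exists_split [Std.Symm adj] {A : Finset α} (hA : IsCluster adj A) :
    ∀ r ∈ A, 2 ≤ A.card → ∃ A₁ A₂, IsCluster adj A₁ ∧ IsCluster adj A₂ ∧ Disjoint A₁ A₂ ∧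
      A₁ ∪ A₂ = A ∧ r ∈ A₁ ∧ ∃ b ∈ A₂, adj r b := by
  induction hA with
  | singleton a => intro r _ h; simp at h
  | @grow A a b hA ha hab hb ih =>
    intro r hr _
    obtain rfl | hr := Finset.mem_insert.1 hr
    · exact ⟨{r}, A, .singleton r, hA, by simpa using hb, rfl, Finset.mem_singleton_self r, a, ha,
        Std.Symm.symm _ _ hab⟩
    obtain hA2 | hA1 := le_or_gt 2 A.card
    · obtain ⟨A₁, A₂, hA₁, hA₂, hdisj, rfl, hrA₁, c, hc, hrc⟩ := ih r hr hA2
      obtain ⟨hbA₁, hbA₂⟩ := not_or.1 (Finset.mem_union.not.1 hb)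
      obtain ha | ha := Finset.mem_union.1 ha
      · exact ⟨insert b A₁, A₂, hA₁.grow ha hab hbA₁, hA₂,
          Finset.disjoint_insert_left.2 ⟨hbA₂, hdisj⟩, Finset.insert_union _ _ _,
          Finset.mem_insert_of_mem hrA₁, c, hc, hrc⟩
      · exact ⟨A₁, insert b A₂, hA₁, hA₂.grow ha hab hbA₂,
          Finset.disjoint_insert_right.2 ⟨hbA₁, hdisj⟩, Finset.union_insert _ _ _, hrA₁, c,
          Finset.mem_insert_of_mem hc, hrc⟩
    · have hA_eq : A = {r} := Finset.eq_singleton_iff_unique_mem.2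
        ⟨hr, fun x hx => Finset.card_le_one.1 (by omega) x hx r hr⟩
      subst hA_eq
      obtain rfl := Finset.mem_singleton.1 ha
      exact ⟨{a}, {b}, .singleton a, .singleton b, Finset.disjoint_singleton_left.2
        fun h => hb (by simp_all), by rw [Finset.union_comm]; rfl,
        Finset.mem_singleton_self a, b, Finset.mem_singleton_self b, hab⟩

/-- The clusters with `m + 1` elements inside `U`. -/
noncomputable def clusters (adj : α → α → Prop) (U : Finset α) (m : ℕ) : Finset (Finset α) :=
  U.powerset.filter fun A => IsCluster adj A ∧ A.card = m + 1

lemma mem_clusters {U : Finset α} {m : ℕ} {A : Finset α} :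
    A ∈ clusters adj U m ↔ A ⊆ U ∧ IsCluster adj A ∧ A.card = m + 1 := by
  simp [clusters]

/-- The clusters with `m + 1` elements inside `U` that contain `r`. -/
noncomputable def rootedClusters (adj : α → α → Prop) (U : Finset α) (m : ℕ) (r : α) :
    Finset (Finset α) :=
  (clusters adj U m).filter (r ∈ ·)

lemma mem_rootedClusters {U : Finset α} {m : ℕ} {r : α} {A : Finset α} :
    A ∈ rootedClusters adj U m r ↔ (A ⊆ U ∧ IsCluster adj A ∧ A.card = m + 1) ∧ r ∈ A := by
  rw [rootedClusters, Finset.mem_filter, mem_clusters]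

lemma card_rootedClusters_zero_le (U : Finset α) (r : α) :
    (rootedClusters adj U 0 r).card ≤ 1 := by
  have hsingle : ∀ A ∈ rootedClusters adj U 0 r, A = {r} := fun A hA => by
    obtain ⟨⟨-, -, hcard⟩, hr⟩ := mem_rootedClusters.1 hA
    exact Finset.eq_singleton_iff_unique_mem.2
      ⟨hr, fun x hx => Finset.card_le_one.1 hcard.le x hx r hr⟩
  exact Finset.card_le_one.2 fun A hA B hB => (hsingle A hA).trans (hsingle B hB).symm

lemma rootedClusters_succ_subset [Std.Symm adj] (U : Finset α) (m : ℕ) (r : α) :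
    rootedClusters adj U (m + 1) r ⊆
      (Finset.HasAntidiagonal.antidiagonal m).biUnion fun ij =>
        (rootedClusters adj U ij.1 r).biUnion fun A₁ =>
          (U.filter (adj r)).biUnion fun b => (rootedClusters adj U ij.2 b).image (A₁ ∪ ·) := by
  intro A hA
  obtain ⟨⟨hAU, hA, hcard⟩, hr⟩ := mem_rootedClusters.1 hA
  obtain ⟨A₁, A₂, hA₁, hA₂, hdisj, rfl, hrA₁, b, hb, hrb⟩ :=
    hA.exists_split r hr (by omega)
  rw [Finset.card_union_of_disjoint hdisj] at hcard
  have hpos₁ := hA₁.nonempty.card_pos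
  have hpos₂ := hA₂.nonempty.card_pos
  have hU₁ := Finset.subset_union_left.trans hAU
  have hU₂ := Finset.subset_union_right.trans hAU
  simp only [Finset.mem_biUnion, Finset.HasAntidiagonal.mem_antidiagonal, Finset.mem_image,
    Finset.mem_filter, mem_rootedClusters]
  exact ⟨(A₁.card - 1, A₂.card - 1), by dsimp only; omega, A₁,
    ⟨⟨hU₁, hA₁, by dsimp only; omega⟩, hrA₁⟩, b, ⟨hU₂ hb, hrb⟩, A₂,
    ⟨⟨hU₂, hA₂, by dsimp only; omega⟩, hb⟩, rfl⟩

/- Splitting a rooted cluster at its root gives the recursion of the Catalan numbers. -/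
lemma card_rootedClusters_le [Std.Symm adj] {U : Finset α} {d : ℕ}
    (hd : ∀ a ∈ U, (U.filter (adj a)).card ≤ d) (m : ℕ) :
    ∀ r ∈ U, (rootedClusters adj U m r).card ≤ d ^ m * catalan m := by
  induction m using Nat.strong_induction_on with
  | _ m ih =>
  intro r hr
  cases m with
  | zero => simpa using card_rootedClusters_zero_le U r
  | succ m =>
    refine (Finset.card_le_card (rootedClusters_succ_subset U m r)).trans ?_
    refine Finset.card_biUnion_le.trans ?_
    rw [catalan_succ', Finset.mul_sum]
    refine Finset.sum_le_sum fun ij hij => ?_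
    rw [Finset.HasAntidiagonal.mem_antidiagonal] at hij
    calc _ ≤ (rootedClusters adj U ij.1 r).card * (d * (d ^ ij.2 * catalan ij.2)) := by
          refine Finset.card_biUnion_le_card_mul _ _ _ fun A₁ _ => ?_
          refine (Finset.card_biUnion_le_card_mul _ _ _ fun b hb => ?_).trans
            (Nat.mul_le_mul_right _ (hd r hr))
          exact Finset.card_image_le.trans (ih ij.2 (by omega) b (Finset.mem_filter.1 hb).1)
      _ ≤ (d ^ ij.1 * catalan ij.1) * (d * (d ^ ij.2 * catalan ij.2)) :=
          Nat.mul_le_mul_right _ (ih ij.1 (by omega) r hr)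
      _ = d ^ (m + 1) * (catalan ij.1 * catalan ij.2) := by rw [← hij]; ring

lemma catalan_le_four_pow (m : ℕ) : catalan m ≤ 4 ^ m :=
  calc catalan m ≤ m.centralBinom := by
        rw [catalan_eq_centralBinom_div]
        exact Nat.div_le_self _ _
    _ ≤ 2 ^ (2 * m) := Nat.centralBinom_eq_two_mul_choose m ▸ Nat.choose_le_two_pow _ _
    _ = 4 ^ m := by rw [pow_mul]; norm_num

lemma card_clusters_le [Std.Symm adj] {U : Finset α} {d : ℕ}
    (hd : ∀ a ∈ U, (U.filter (adj a)).card ≤ d) (m : ℕ) :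
    (clusters adj U m).card ≤ U.card * (4 * d) ^ m := by
  have hsub : clusters adj U m ⊆ U.biUnion (rootedClusters adj U m) := by
    intro A hA
    obtain ⟨r, hr⟩ := (mem_clusters.1 hA).2.1.nonempty
    exact Finset.mem_biUnion.2
      ⟨r, (mem_clusters.1 hA).1 hr, Finset.mem_filter.2 ⟨hA, hr⟩⟩
  refine (Finset.card_le_card hsub).trans (Finset.card_biUnion_le_card_mul _ _ _ fun r hr => ?_)
  calc (rootedClusters adj U m r).card ≤ d ^ m * catalan m :=
        card_rootedClusters_le hd m r hr
    _ ≤ d ^ m * 4 ^ m := Nat.mul_le_mul_left _ (catalan_le_four_pow m)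
    _ = (4 * d) ^ m := by rw [mul_pow, mul_comm]

end Clusters

section BinomialSubset

variable {α : Type*}

/-- The probability that the binomial random subset of `U`, to which every element of `U` belongs
independently with probability `p`, is equal to `H`. -/
noncomputable def binomWeight (p : ℝ) (U H : Finset α) : ℝ :=
  p ^ H.card * (1 - p) ^ (U \ H).card

/-- The expectation of `F` evaluated at the binomial random subset of `U`. -/
noncomputable def binomExp (p : ℝ) (U : Finset α) (F : Finset α → ℝ) : ℝ :=
  ∑ H ∈ U.powerset, binomWeight p U H * F H

/-- The probability that the binomial random subset of `U` has the property `Q`. -/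
noncomputable def binomProb (p : ℝ) (U : Finset α) (Q : Finset α → Prop) : ℝ :=
  binomExp p U fun H => if Q H then 1 else 0

variable {p : ℝ} {U : Finset α}

lemma binomWeight_nonneg (hp : p ∈ Set.Icc 0 1) (U H : Finset α) : 0 ≤ binomWeight p U H :=
  mul_nonneg (pow_nonneg hp.1 _) (pow_nonneg (sub_nonneg.2 hp.2) _)

lemma binomExp_mono (hp : p ∈ Set.Icc 0 1) {F F' : Finset α → ℝ} (h : ∀ H ⊆ U, F H ≤ F' H) :
    binomExp p U F ≤ binomExp p U F' :=
  Finset.sum_le_sum fun H hH =>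
    mul_le_mul_of_nonneg_left (h H (Finset.mem_powerset.1 hH)) (binomWeight_nonneg hp U H)

lemma binomExp_congr {F F' : Finset α → ℝ} (h : ∀ H ⊆ U, F H = F' H) :
    binomExp p U F = binomExp p U F' :=
  Finset.sum_congr rfl fun H hH => by rw [h H (Finset.mem_powerset.1 hH)]

lemma binomExp_sum {ι : Type*} (s : Finset ι) (F : ι → Finset α → ℝ) :
    binomExp p U (fun H => ∑ i ∈ s, F i H) = ∑ i ∈ s, binomExp p U (F i) := by
  simp only [binomExp, Finset.mul_sum]
  exact Finset.sum_comm

lemma binomExp_const_mul (c : ℝ) (F : Finset α → ℝ) :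
    binomExp p U (fun H => c * F H) = c * binomExp p U F := by
  simp only [binomExp, Finset.mul_sum, mul_left_comm]

lemma binomExp_add (F F' : Finset α → ℝ) :
    binomExp p U (fun H => F H + F' H) = binomExp p U F + binomExp p U F' := by
  simp only [binomExp, mul_add, Finset.sum_add_distrib]

lemma binomExp_prod_piecewise (a b : α → ℝ) :
    binomExp p U (fun H => ∏ K ∈ U, H.piecewise a b K) =
      ∏ K ∈ U, (p * a K + (1 - p) * b K) := by
  rw [Finset.prod_add]
  refine Finset.sum_congr rfl fun H hH => ?_
  beta_reduce
  rw [Finset.prod_piecewise, Finset.inter_eq_right.2 (Finset.mem_powerset.1 hH),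
    Finset.prod_mul_distrib, Finset.prod_mul_distrib, Finset.prod_const, Finset.prod_const,
    binomWeight]
  ring

lemma binomExp_one : binomExp p U (fun _ => 1) = 1 := by
  simpa [Finset.piecewise] using binomExp_prod_piecewise (p := p) (U := U) (fun _ => 1) fun _ => 1

lemma binomProb_eq_sum_filter (Q : Finset α → Prop) :
    binomProb p U Q = ∑ H ∈ U.powerset.filter Q, binomWeight p U H := by
  simp [binomProb, binomExp, Finset.sum_filter]

lemma binomProb_nonneg (hp : p ∈ Set.Icc 0 1) (Q : Finset α → Prop) : 0 ≤ binomProb p U Q := by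
  rw [binomProb_eq_sum_filter]
  exact Finset.sum_nonneg fun H _ => binomWeight_nonneg hp U H

lemma binomProb_mono (hp : p ∈ Set.Icc 0 1) {Q Q' : Finset α → Prop}
    (h : ∀ H ⊆ U, Q H → Q' H) : binomProb p U Q ≤ binomProb p U Q' :=
  binomExp_mono hp fun H hH => by
    by_cases hQ : Q H
    · simp [hQ, h H hH hQ]
    · rw [if_neg hQ]
      positivity

lemma binomProb_congr {Q Q' : Finset α → Prop} (h : ∀ H ⊆ U, (Q H ↔ Q' H)) :
    binomProb p U Q = binomProb p U Q' :=
  binomExp_congr fun H hH => by simp only [h H hH]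

lemma binomProb_or_le (hp : p ∈ Set.Icc 0 1) (Q Q' : Finset α → Prop) :
    binomProb p U (fun H => Q H ∨ Q' H) ≤ binomProb p U Q + binomProb p U Q' := by
  rw [binomProb, binomProb, binomProb, ← binomExp_add]
  refine binomExp_mono hp fun H _ => ?_
  by_cases hQ : Q H <;> by_cases hQ' : Q' H <;> simp [hQ, hQ']

lemma binomProb_exists_le (hp : p ∈ Set.Icc 0 1) {ι : Type*} (s : Finset ι)
    (Q : ι → Finset α → Prop) :
    binomProb p U (fun H => ∃ i ∈ s, Q i H) ≤ ∑ i ∈ s, binomProb p U (Q i) := by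
  simp only [binomProb, ← binomExp_sum]
  refine binomExp_mono hp fun H _ => ?_
  have hnonneg : ∀ i ∈ s, (0 : ℝ) ≤ if Q i H then 1 else 0 := fun i _ => by positivity
  split_ifs with h
  · obtain ⟨i, hi, hQ⟩ := h
    simpa [hQ] using Finset.single_le_sum hnonneg hi
  · exact Finset.sum_nonneg hnonneg

lemma binomProb_subset_and_disjoint {A B : Finset α} (hA : A ⊆ U) (hB : B ⊆ U)
    (hAB : Disjoint A B) :
    binomProb p U (fun H => A ⊆ H ∧ Disjoint B H) = p ^ A.card * (1 - p) ^ B.card := by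
  have hindicator : binomProb p U (fun H => A ⊆ H ∧ Disjoint B H) = binomExp p U fun H =>
      ∏ K ∈ U, H.piecewise (fun K => if K ∈ B then (0 : ℝ) else 1)
        (fun K => if K ∈ A then 0 else 1) K := by
    refine binomExp_congr fun H _ => ?_
    have hite : ∀ K, H.piecewise (fun K => if K ∈ B then (0 : ℝ) else 1)
        (fun K => if K ∈ A then 0 else 1) K =
          if (K ∈ A → K ∈ H) ∧ (K ∈ B → K ∉ H) then 1 else 0 := by
      intro K
      by_cases hK : K ∈ H <;> simp [hK, ite_not]
    have hiff : (A ⊆ H ∧ Disjoint B H) ↔ ∀ K ∈ U, (K ∈ A → K ∈ H) ∧ (K ∈ B → K ∉ H) := by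
      rw [Finset.disjoint_left]
      exact ⟨fun h K _ => ⟨@h.1 K, @h.2 K⟩,
        fun h => ⟨fun K hK => (h K (hA hK)).1 hK, fun K hK => (h K (hB hK)).2 hK⟩⟩
    rw [Finset.prod_congr rfl fun K _ => hite K, Finset.prod_ite_zero, Finset.prod_const_one]
    by_cases h : A ⊆ H ∧ Disjoint B H
    · rw [if_pos h, if_pos (hiff.1 h)]
    · rw [if_neg h, if_neg (mt hiff.2 h)]
  have hfactor : ∀ K, p * (if K ∈ B then 0 else 1) + (1 - p) * (if K ∈ A then 0 else 1) =
      (if K ∈ A then p else 1) * if K ∈ B then 1 - p else 1 := by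
    intro K
    by_cases hKA : K ∈ A
    · simp [hKA, Finset.disjoint_left.1 hAB hKA]
    · by_cases hKB : K ∈ B <;> simp [hKA, hKB]
  rw [hindicator, binomExp_prod_piecewise]
  simp only [hfactor, Finset.prod_mul_distrib, Finset.prod_ite_mem, Finset.inter_eq_right.2 hA,
    Finset.inter_eq_right.2 hB, Finset.prod_const]

lemma binomProb_subset_and_disjoint_le (hp : p ∈ Set.Icc 0 1) {A B : Finset α} (hA : A ⊆ U)
    (hB : B ⊆ U) :
    binomProb p U (fun H => A ⊆ H ∧ Disjoint B H) ≤ p ^ A.card * (1 - p) ^ B.card := by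
  by_cases hAB : Disjoint A B
  · exact (binomProb_subset_and_disjoint hA hB hAB).le
  · have hfalse : ∀ H, ¬ (A ⊆ H ∧ Disjoint B H) := fun H h => hAB (h.2.symm.mono_left h.1)
    simp only [binomProb_eq_sum_filter, hfalse, Finset.filter_false, Finset.sum_empty]
    exact mul_nonneg (pow_nonneg hp.1 _) (pow_nonneg (sub_nonneg.2 hp.2) _)

/- The exponential Markov inequality for `(1 / 2) ^ |B ∩ H|`. -/
lemma binomProb_card_inter_le (hp : p ∈ Set.Icc 0 1) {B : Finset α} (hB : B ⊆ U) (L : ℕ) :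
    binomProb p U (fun H => (B ∩ H).card ≤ L) ≤ 2 ^ L * (1 - p / 2) ^ B.card := by
  have hprod : ∀ H ⊆ U, ∏ K ∈ U, H.piecewise (fun K => if K ∈ B then (1 / 2 : ℝ) else 1)
      (fun _ => 1) K = (1 / 2) ^ (B ∩ H).card := by
    intro H hH
    rw [Finset.prod_piecewise, Finset.prod_const_one, mul_one, Finset.inter_eq_right.2 hH,
      Finset.prod_ite_mem, Finset.prod_const, Finset.inter_comm]
  have hfactor : ∀ K, p * (if K ∈ B then 1 / 2 else 1) + (1 - p) * 1 =
      if K ∈ B then 1 - p / 2 else 1 := by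
    intro K
    split_ifs <;> ring
  have hexp : binomExp p U (fun H => (1 / 2) ^ (B ∩ H).card) = (1 - p / 2) ^ B.card := by
    rw [← binomExp_congr hprod, binomExp_prod_piecewise]
    simp only [hfactor, Finset.prod_ite_mem, Finset.inter_eq_right.2 hB, Finset.prod_const]
  rw [← hexp, ← binomExp_const_mul]
  refine binomExp_mono hp fun H _ => ?_
  split_ifs with hcard
  · rw [one_div, inv_pow, ← div_eq_mul_inv, one_le_div (by positivity)]
    exact pow_le_pow_right₀ one_le_two hcard
  · positivity

lemma binomProb_lt_le_binomExp_div (hp : p ∈ Set.Icc 0 1) (X : Finset α → ℕ) {L : ℕ}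
    (hL : 0 < L) :
    binomProb p U (fun H => L < X H) ≤ binomExp p U (fun H => (X H : ℝ)) / L := by
  rw [le_div_iff₀ (by exact_mod_cast hL), mul_comm, binomProb, ← binomExp_const_mul]
  refine binomExp_mono hp fun H _ => ?_
  split_ifs with h
  · rw [mul_one]
    exact_mod_cast h.le
  · simp

lemma restrict_Icc_Iic (hp : p ∈ Set.Icc 0 1) :
    volume.restrict (Set.Icc (0 : ℝ) 1) (Set.Iic p) = ENNReal.ofReal p := by
  rw [Measure.restrict_apply measurableSet_Iic, ← Set.Ici_inter_Iic, Set.inter_left_comm,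
    Set.Iic_inter_Iic, min_eq_left hp.2, Set.Ici_inter_Iic, Real.volume_Icc, sub_zero]

lemma restrict_Icc_Ioi (hp : p ∈ Set.Icc 0 1) :
    volume.restrict (Set.Icc (0 : ℝ) 1) (Set.Ioi p) = ENNReal.ofReal (1 - p) := by
  have hinter : Set.Ioi p ∩ Set.Icc 0 1 = Set.Ioc p 1 := by
    ext x
    exact ⟨fun h => ⟨h.1, h.2.2⟩, fun h => ⟨h.1, hp.1.trans h.1.le, h.2⟩⟩
  rw [Measure.restrict_apply measurableSet_Ioi, hinter, Real.volume_Ioc]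

lemma setOf_filter_le_eq_pi {H : Finset α} (hH : H ⊆ U) :
    {t : α → ℝ | U.filter (fun a => t a ≤ p) = H} =
      Set.pi Set.univ fun a => if a ∈ U then (if a ∈ H then Set.Iic p else Set.Ioi p)
        else Set.univ := by
  ext t
  simp only [Set.mem_ofPred_eq, Set.mem_pi, Set.mem_univ, forall_true_left, Finset.ext_iff,
    Finset.mem_filter]
  refine forall_congr' fun a => ?_
  by_cases haU : a ∈ U
  · by_cases haH : a ∈ H <;> simp [haU, haH]
  · simpa [haU] using fun h => haU (hH h)

lemma measurableSet_filter_le_eq [Countable α] {H : Finset α} (hH : H ⊆ U) :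
    MeasurableSet {t : α → ℝ | U.filter (fun a => t a ≤ p) = H} := by
  rw [setOf_filter_le_eq_pi hH]
  refine MeasurableSet.univ_pi fun a => ?_
  split_ifs
  exacts [measurableSet_Iic, measurableSet_Ioi, MeasurableSet.univ]

lemma pi_uniform_filter_le_eq [Fintype α] (hp : p ∈ Set.Icc 0 1) {H : Finset α} (hH : H ⊆ U) :
    Measure.pi (fun _ : α => volume.restrict (Set.Icc (0 : ℝ) 1))
      {t | U.filter (fun a => t a ≤ p) = H} = ENNReal.ofReal (binomWeight p U H) := by
  have hcoord : ∀ a, volume.restrict (Set.Icc (0 : ℝ) 1)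
      (if a ∈ U then (if a ∈ H then Set.Iic p else Set.Ioi p) else Set.univ) =
        ENNReal.ofReal (if a ∈ U then H.piecewise (fun _ => p) (fun _ => 1 - p) a else 1) := by
    intro a
    by_cases haU : a ∈ U
    · by_cases haH : a ∈ H <;> simp [haU, haH, restrict_Icc_Iic hp, restrict_Icc_Ioi hp]
    · simp [haU]
  have hnonneg : ∀ a ∈ Finset.univ,
      0 ≤ if a ∈ U then H.piecewise (fun _ => p) (fun _ => 1 - p) a else 1 := by
    intro a _
    have := sub_nonneg.2 hp.2
    unfold Finset.piecewise
    split_ifs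
    exacts [hp.1, this, zero_le_one]
  rw [setOf_filter_le_eq_pi hH, Measure.pi_pi, Finset.prod_congr rfl fun a _ => hcoord a,
    ← ENNReal.ofReal_prod_of_nonneg hnonneg, Finset.prod_ite_mem, Finset.univ_inter,
    Finset.prod_piecewise, Finset.inter_eq_right.2 hH, Finset.prod_const, Finset.prod_const,
    binomWeight]

lemma pi_uniform_eq_binomProb [Fintype α] (hp : p ∈ Set.Icc 0 1) (U : Finset α)
    (Q : Finset α → Prop) :
    Measure.pi (fun _ : α => volume.restrict (Set.Icc (0 : ℝ) 1))
      {t | Q (U.filter fun a => t a ≤ p)} = ENNReal.ofReal (binomProb p U Q) := by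
  have hunion : {t : α → ℝ | Q (U.filter fun a => t a ≤ p)} =
      ⋃ H ∈ U.powerset.filter Q, {t | U.filter (fun a => t a ≤ p) = H} := by
    ext t
    simp
  have hsub : ∀ H ∈ U.powerset.filter Q, H ⊆ U := fun H hH =>
    Finset.mem_powerset.1 (Finset.mem_filter.1 hH).1
  have hdisj : (U.powerset.filter Q : Set (Finset α)).PairwiseDisjoint
      fun H => {t : α → ℝ | U.filter (fun a => t a ≤ p) = H} := fun H _ H' _ hne =>
    Set.disjoint_left.2 fun t ht ht' => hne (ht.symm.trans ht')
  rw [hunion, measure_biUnion_finset hdisj fun H hH => measurableSet_filter_le_eq (hsub H hH),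
    binomProb_eq_sum_filter, ENNReal.ofReal_sum_of_nonneg fun H _ => binomWeight_nonneg hp U H]
  exact Finset.sum_congr rfl fun H hH => pi_uniform_filter_le_eq hp (hsub H hH)

end BinomialSubset

section Bonferroni

/-- The Bonferroni sum of length `m + 1` for the indicator of the event that exactly `s` of a family
of events occur, as a function of the number `X` of events that occur. -/
noncomputable def bonferroniSum (X s m : ℕ) : ℝ :=
  ∑ i ∈ Finset.range (m + 1), (-1 : ℝ) ^ i * ((s + i).choose s) * (X.choose (s + i))

lemma bonferroniSum_of_lt {X s : ℕ} (h : X < s) (m : ℕ) : bonferroniSum X s m = 0 :=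
  Finset.sum_eq_zero fun i _ => by
    rw [Nat.choose_eq_zero_of_lt (show X < s + i by omega), Nat.cast_zero, mul_zero]

lemma bonferroniSum_self (s m : ℕ) : bonferroniSum s s m = 1 := by
  rw [bonferroniSum, Finset.sum_range_succ', Finset.sum_eq_zero fun i _ => ?_]
  · simp
  · rw [Nat.choose_eq_zero_of_lt (show s < s + (i + 1) by omega), Nat.cast_zero, mul_zero]

lemma bonferroniSum_add_succ (s N m : ℕ) :
    bonferroniSum (s + (N + 1)) s m = (-1) ^ m * ((s + (N + 1)).choose s * N.choose m) := by
  have hterm : ∀ i, ((s + i).choose s : ℝ) * (s + (N + 1)).choose (s + i) =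
      (s + (N + 1)).choose s * (N + 1).choose i := by
    intro i
    have h := Nat.choose_mul (n := s + (N + 1)) (k := s + i) (s := s) (Nat.le_add_right s i)
    rw [Nat.add_sub_cancel_left, Nat.add_sub_cancel_left] at h
    rw [mul_comm]
    exact_mod_cast h
  have halternating : ∑ i ∈ Finset.range (m + 1), (-1 : ℝ) ^ i * (N + 1).choose i =
      (-1) ^ m * N.choose m := by
    exact_mod_cast Int.alternating_sum_range_choose_eq_choose (n := N) (m := m)
  simp only [bonferroniSum, mul_assoc, hterm, mul_left_comm _ ((s + (N + 1)).choose s : ℝ),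
    ← Finset.mul_sum, halternating]

lemma ite_eq_le_bonferroniSum (X s : ℕ) {m : ℕ} (hm : Even m) :
    (if X = s then (1 : ℝ) else 0) ≤ bonferroniSum X s m := by
  obtain h | rfl | h := lt_trichotomy X s
  · rw [bonferroniSum_of_lt h, if_neg h.ne]
  · rw [bonferroniSum_self, if_pos rfl]
  · obtain ⟨N, rfl⟩ := Nat.exists_eq_add_of_lt h
    rw [if_neg h.ne', add_assoc, bonferroniSum_add_succ, hm.neg_one_pow]
    positivity

lemma bonferroniSum_le_ite_eq (X s : ℕ) {m : ℕ} (hm : Odd m) :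
    bonferroniSum X s m ≤ if X = s then (1 : ℝ) else 0 := by
  obtain h | rfl | h := lt_trichotomy X s
  · rw [bonferroniSum_of_lt h, if_neg h.ne]
  · rw [bonferroniSum_self, if_pos rfl]
  · obtain ⟨N, rfl⟩ := Nat.exists_eq_add_of_lt h
    rw [if_neg h.ne', add_assoc, bonferroniSum_add_succ, hm.neg_one_pow, neg_one_mul,
      Left.neg_nonpos_iff]
    positivity

lemma tendsto_bonferroni_poisson (lam : ℝ) (s : ℕ) :
    Tendsto (fun m => ∑ i ∈ Finset.range (m + 1),
      (-1 : ℝ) ^ i * ((s + i).choose s) * (lam ^ (s + i) / (s + i).factorial)) atTop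
      (nhds (Real.exp (-lam) * lam ^ s / s.factorial)) := by
  have hterm : ∀ i, (-1 : ℝ) ^ i * ((s + i).choose s) * (lam ^ (s + i) / (s + i).factorial) =
      lam ^ s / s.factorial * ((-lam) ^ i / i.factorial) := by
    intro i
    rw [Nat.cast_add_choose, neg_pow lam, pow_add]
    have := Nat.factorial_ne_zero (s + i)
    field_simp
  have hexp : Tendsto (fun m => ∑ i ∈ Finset.range m, (-lam) ^ i / (i.factorial : ℝ)) atTop
      (nhds (Real.exp (-lam))) := by
    rw [Real.exp_eq_exp_ℝ]
    exact (NormedSpace.expSeries_div_hasSum_exp (-lam)).tendsto_sum_nat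
  simp only [hterm, ← Finset.mul_sum]
  rw [mul_div_assoc, mul_comm (Real.exp (-lam))]
  exact ((tendsto_add_atTop_iff_nat 1).2 hexp).const_mul _

theorem tendsto_binomProb_poisson {α : ℕ → Type*} {p : ℕ → ℝ} {U : ∀ n, Finset (α n)}
    (hp : ∀ᶠ n in atTop, p n ∈ Set.Icc 0 1) {X : ∀ n, Finset (α n) → ℕ} {lam : ℝ}
    (hmoment : ∀ r : ℕ, Tendsto (fun n => binomExp (p n) (U n) fun H => ((X n H).choose r : ℝ))
      atTop (nhds (lam ^ r / r.factorial))) (s : ℕ) :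
    Tendsto (fun n => binomProb (p n) (U n) fun H => X n H = s) atTop
      (nhds (Real.exp (-lam) * lam ^ s / s.factorial)) := by
  have hbonferroni : ∀ m, Tendsto
      (fun n => binomExp (p n) (U n) fun H => bonferroniSum (X n H) s m) atTop
      (nhds (∑ i ∈ Finset.range (m + 1),
        (-1 : ℝ) ^ i * ((s + i).choose s) * (lam ^ (s + i) / (s + i).factorial))) := by
    intro m
    simp only [bonferroniSum, binomExp_sum, binomExp_const_mul]
    exact tendsto_finsetSum _ fun i _ => (hmoment (s + i)).const_mul _
  have hlim := tendsto_order.1 (tendsto_bonferroni_poisson lam s)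
  refine tendsto_order.2 ⟨fun a ha => ?_, fun a ha => ?_⟩
  · obtain ⟨M, hM⟩ := eventually_atTop.1 (hlim.1 a ha)
    filter_upwards [(tendsto_order.1 (hbonferroni (2 * M + 1))).1 a (hM _ (by omega)), hp]
      with n hn hpn
    refine hn.trans_le (binomExp_mono hpn fun H _ => ?_)
    convert bonferroniSum_le_ite_eq (X n H) s (odd_two_mul_add_one M) using 2
  · obtain ⟨M, hM⟩ := eventually_atTop.1 (hlim.2 a ha)
    filter_upwards [(tendsto_order.1 (hbonferroni (2 * M))).2 a (hM _ (by omega)), hp]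
      with n hn hpn
    refine (binomExp_mono hpn fun H _ => ?_).trans_lt hn
    convert ite_eq_le_bonferroniSum (X n H) s (even_two_mul M) using 2

end Bonferroni

section Faces

/-- The `k`-dimensional faces of the full simplex on `V`. -/
def faces (V : Type*) [Fintype V] (k : ℕ) : Finset (Finset V) :=
  Finset.powersetCard (k + 1) Finset.univ

/-- The `m`-element subsets of the members of `A`. -/
noncomputable def subfaces (m : ℕ) (A : Finset (Finset V)) : Finset (Finset V) :=
  A.biUnion (Finset.powersetCard m)

/-- Two faces are adjacent if they have `m` common vertices. -/
def FaceAdj (m : ℕ) (K K' : Finset V) : Prop :=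
  ∃ σ : Finset V, σ.card = m ∧ σ ⊆ K ∧ σ ⊆ K'

/-- The cochain with support `S`. -/
noncomputable def indicator (S : Finset (Finset V)) (σ : Finset V) : ZMod 2 :=
  if σ ∈ S then 1 else 0

instance (m : ℕ) : Std.Symm (FaceAdj (V := V) m) where
  symm := fun _ _ ⟨σ, hσ, hK, hK'⟩ => ⟨σ, hσ, hK', hK⟩

lemma mem_subfaces {m : ℕ} {A : Finset (Finset V)} {σ : Finset V} :
    σ ∈ subfaces m A ↔ σ.card = m ∧ ∃ K ∈ A, σ ⊆ K := by
  simp only [subfaces, Finset.mem_biUnion, Finset.mem_powersetCard]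
  grind

lemma indicator_ne_zero {S : Finset (Finset V)} {σ : Finset V} :
    indicator S σ ≠ 0 ↔ σ ∈ S := by
  simp [indicator]

variable [Fintype V] {k m : ℕ}

lemma mem_faces {K : Finset V} : K ∈ faces V k ↔ K.card = k + 1 :=
  Finset.mem_powersetCard_univ

lemma card_faces (V : Type*) [Fintype V] (k : ℕ) :
    (faces V k).card = (Fintype.card V).choose (k + 1) := by
  rw [faces, Finset.card_powersetCard, Finset.card_univ]

/-- The faces that contain a member of `S`. -/
noncomputable def facesContaining (k : ℕ) (S : Finset (Finset V)) : Finset (Finset V) :=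
  (faces V k).filter fun K => ∃ σ ∈ S, σ ⊆ K

lemma mem_facesContaining {S : Finset (Finset V)} {K : Finset V} :
    K ∈ facesContaining k S ↔ K ∈ faces V k ∧ ∃ σ ∈ S, σ ⊆ K :=
  Finset.mem_filter

lemma card_filter_subset_faces {σ : Finset V} (hσ : σ.card ≤ k + 1) :
    ((faces V k).filter (σ ⊆ ·)).card =
      (Fintype.card V - σ.card).choose (k + 1 - σ.card) := by
  rw [← Finset.card_univ, ← Finset.card_filter_powersetCard_subset σ _ _ (Finset.subset_univ σ) hσ]
  rfl

lemma card_filter_subset_faces_le (k : ℕ) (σ : Finset V) :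
    ((faces V k).filter (σ ⊆ ·)).card ≤ Fintype.card V ^ (k + 1 - σ.card) := by
  obtain hσ | hσ := le_or_gt σ.card (k + 1)
  · rw [card_filter_subset_faces hσ]
    exact (Nat.choose_le_pow _ _).trans (Nat.pow_le_pow_left (Nat.sub_le _ _) _)
  · rw [Finset.filter_false_of_mem, Finset.card_empty]
    · exact Nat.zero_le _
    · exact fun K hK hσK => hσ.not_ge (mem_faces.1 hK ▸ Finset.card_le_card hσK)

lemma sum_card_filter_subset (hm : m ≤ k + 1) {S : Finset (Finset V)}
    (hS : ∀ σ ∈ S, σ.card = m) :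
    ∑ K ∈ faces V k, (S.filter (· ⊆ K)).card =
      S.card * (Fintype.card V - m).choose (k + 1 - m) := by
  simp only [Finset.card_filter]
  rw [Finset.sum_comm, Finset.sum_const_nat fun σ hσ => ?_]
  rw [← Finset.card_filter, card_filter_subset_faces ((hS σ hσ).trans_le hm), hS σ hσ]

lemma card_mul_choose_le_card_facesContaining_mul (hm : m ≤ k + 1) {S : Finset (Finset V)}
    (hS : ∀ σ ∈ S, σ.card = m) :
    S.card * (Fintype.card V - m).choose (k + 1 - m) ≤
      (facesContaining k S).card * 2 ^ (k + 1) := by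
  rw [← sum_card_filter_subset hm hS, facesContaining, Finset.card_filter, Finset.sum_mul]
  refine Finset.sum_le_sum fun K hK => ?_
  split_ifs with h
  · rw [one_mul, ← mem_faces.1 hK, ← Finset.card_powerset]
    exact Finset.card_le_card fun σ hσ => Finset.mem_powerset.2 (Finset.mem_filter.1 hσ).2
  · rw [Finset.filter_false_of_mem fun σ hσ hσK => h ⟨σ, hσ, hσK⟩, Finset.card_empty]
    exact Nat.zero_le _

lemma card_subfaces_le {A : Finset (Finset V)} (hA : A ⊆ faces V k) :
    (subfaces m A).card ≤ A.card * 2 ^ (k + 1) := by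
  refine Finset.card_biUnion_le_card_mul _ _ _ fun K hK => ?_
  rw [← mem_faces.1 (hA hK), Finset.card_powersetCard]
  exact Nat.choose_le_two_pow _ _

lemma card_filter_faceAdj_le {K : Finset V} (hK : K ∈ faces V k) :
    ((faces V k).filter (FaceAdj m K)).card ≤
      2 ^ (k + 1) * Fintype.card V ^ (k + 1 - m) := by
  have hsub : (faces V k).filter (FaceAdj m K) ⊆
      (K.powersetCard m).biUnion fun σ => (faces V k).filter (σ ⊆ ·) := by
    intro K' hK'
    obtain ⟨hfaces, σ, hcard, hσK, hσK'⟩ := Finset.mem_filter.1 hK'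
    exact Finset.mem_biUnion.2
      ⟨σ, Finset.mem_powersetCard.2 ⟨hσK, hcard⟩, Finset.mem_filter.2 ⟨hfaces, hσK'⟩⟩
  refine (Finset.card_le_card hsub).trans ?_
  refine (Finset.card_biUnion_le_card_mul _ _ (Fintype.card V ^ (k + 1 - m)) fun σ hσ => ?_).trans
    (Nat.mul_le_mul_right _ ?_)
  · rw [← (Finset.mem_powersetCard.1 hσ).2]
    exact card_filter_subset_faces_le k σ
  · rw [← mem_faces.1 hK, Finset.card_powersetCard]
    exact Nat.choose_le_two_pow _ _

end Faces

section IsolatingFaces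

variable [Fintype V] {k m : ℕ}

/-- The faces that contain exactly one member of `S`. -/
noncomputable def isolatingFaces (k : ℕ) (S : Finset (Finset V)) : Finset (Finset V) :=
  (faces V k).filter fun K => (S.filter (· ⊆ K)).card = 1

/-- The faces on which the degree `m` part of `f` is not a cocycle. -/
noncomputable def nonCocycleFaces (k m : ℕ) (f : Finset V → ZMod 2) : Finset (Finset V) :=
  (faces V k).filter fun K => ¬ IsCocycleOn f m K

lemma card_filter_union_subset_le (hm : m ≤ k) {σ τ : Finset V} (hσ : σ.card = m)
    (hτ : τ.card = m) (hne : σ ≠ τ) :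
    ((faces V k).filter (σ ∪ τ ⊆ ·)).card ≤ Fintype.card V ^ (k - m) := by
  have hlt : m < (σ ∪ τ).card := by
    by_contra! hle
    have hσ_eq : σ = σ ∪ τ :=
      Finset.eq_of_subset_of_card_le Finset.subset_union_left (hle.trans hσ.ge)
    have hτ_eq : τ = σ ∪ τ :=
      Finset.eq_of_subset_of_card_le Finset.subset_union_right (hle.trans hτ.ge)
    exact hne (hσ_eq.trans hτ_eq.symm)
  have hpos : 0 < Fintype.card V := (Nat.zero_le m).trans_lt (hlt.trans_le (Finset.card_le_univ _))
  exact (card_filter_subset_faces_le k _).trans (Nat.pow_le_pow_right hpos (by omega))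

lemma sum_card_offDiag_filter_le (hm : m ≤ k) {S : Finset (Finset V)}
    (hS : ∀ σ ∈ S, σ.card = m) :
    ∑ K ∈ faces V k, (S.filter (· ⊆ K)).offDiag.card ≤
      S.card ^ 2 * Fintype.card V ^ (k - m) := by
  have hoffDiag : ∀ K, (S.filter (· ⊆ K)).offDiag.card =
      ∑ x ∈ S.offDiag, if x.1 ∪ x.2 ⊆ K then 1 else 0 := by
    intro K
    rw [← Finset.card_filter]
    congr 1
    ext x
    simp only [Finset.mem_offDiag, Finset.mem_filter, Finset.union_subset_iff]
    tauto
  simp only [hoffDiag]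
  rw [Finset.sum_comm]
  refine (Finset.sum_le_card_nsmul _ _ (Fintype.card V ^ (k - m)) fun x hx => ?_).trans ?_
  · rw [← Finset.card_filter]
    obtain ⟨h1, h2, hne⟩ := Finset.mem_offDiag.1 hx
    exact card_filter_union_subset_le hm (hS _ h1) (hS _ h2) hne
  · rw [smul_eq_mul, Finset.offDiag_card, sq]
    exact Nat.mul_le_mul_right _ (Nat.sub_le _ _)

/- Every face with at least two members of `S` contains at least as many ordered pairs of distinct
members as members. -/
lemma card_mul_choose_le_card_isolatingFaces_add (hm : m ≤ k) {S : Finset (Finset V)}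
    (hS : ∀ σ ∈ S, σ.card = m) :
    S.card * (Fintype.card V - m).choose (k + 1 - m) ≤
      (isolatingFaces k S).card + S.card ^ 2 * Fintype.card V ^ (k - m) := by
  have hpairs : ∀ d : ℕ, d ≤ (if d = 1 then 1 else 0) + (d * d - d) := by
    rintro (_ | _ | d)
    · simp
    · simp
    · rw [if_neg (by omega), ← Nat.mul_sub_one, zero_add]
      exact Nat.le_mul_of_pos_right _ (by omega)
  calc S.card * (Fintype.card V - m).choose (k + 1 - m)
      = ∑ K ∈ faces V k, (S.filter (· ⊆ K)).card :=
        (sum_card_filter_subset (by omega) hS).symm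
    _ ≤ ∑ K ∈ faces V k, ((if (S.filter (· ⊆ K)).card = 1 then 1 else 0) +
          (S.filter (· ⊆ K)).offDiag.card) :=
        Finset.sum_le_sum fun K _ => by
          rw [Finset.offDiag_card]
          exact hpairs _
    _ ≤ (isolatingFaces k S).card + S.card ^ 2 * Fintype.card V ^ (k - m) := by
        rw [Finset.sum_add_distrib, isolatingFaces, Finset.card_filter]
        exact Nat.add_le_add_left (sum_card_offDiag_filter_le hm hS) _

lemma not_isCocycleOn_iff {f : Finset V → ZMod 2} {K : Finset V} :
    ¬ IsCocycleOn f m K ↔ ∃ ρ ∈ supportIn Finset.univ (m + 1) (δ f), ρ ⊆ K := by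
  simp only [IsCocycleOn, mem_supportIn_univ]
  push Not
  exact exists_congr fun ρ => by tauto

lemma nonCocycleFaces_eq (k m : ℕ) (f : Finset V → ZMod 2) :
    nonCocycleFaces k m f = facesContaining k (supportIn Finset.univ (m + 1) (δ f)) := by
  ext K
  rw [nonCocycleFaces, Finset.mem_filter, mem_facesContaining, not_isCocycleOn_iff]

lemma isolatingFaces_subset_nonCocycleFaces (hm : m ≤ k) {S : Finset (Finset V)}
    (hS : ∀ σ ∈ S, σ.card = m) :
    isolatingFaces k S ⊆ nonCocycleFaces k m (indicator S) := by
  intro K hK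
  obtain ⟨hKface, hcard⟩ := Finset.mem_filter.1 hK
  obtain ⟨σ, hunique⟩ := Finset.card_eq_one.1 hcard
  have honly : ∀ τ, τ ∈ S ∧ τ ⊆ K ↔ τ = σ := fun τ => by
    rw [← Finset.mem_singleton, ← hunique, Finset.mem_filter]
  obtain ⟨hσS, hσK⟩ := (honly σ).2 rfl
  obtain ⟨w, hw⟩ : (K \ σ).Nonempty := by
    rw [← Finset.card_pos, Finset.card_sdiff_of_subset hσK, hS σ hσS, mem_faces.1 hKface]
    omega
  obtain ⟨hwK, hwσ⟩ := Finset.mem_sdiff.1 hw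
  have hinsert : insert w σ ⊆ K := Finset.insert_subset hwK hσK
  have hvanish : ∀ x ∈ σ, indicator S (insert w (σ.erase x)) = 0 := fun x _ => by
    have hsub : insert w (σ.erase x) ⊆ K :=
      (Finset.insert_subset_insert _ (Finset.erase_subset _ _)).trans hinsert
    by_contra hne
    have heq := (honly _).1 ⟨indicator_ne_zero.1 hne, hsub⟩
    exact hwσ (heq ▸ Finset.mem_insert_self w _)
  refine Finset.mem_filter.2 ⟨hKface, fun hcocycle => indicator_ne_zero.2 hσS ?_⟩
  have h := hcocycle _ hinsert (by rw [Finset.card_insert_of_notMem hwσ, hS σ hσS])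
  rwa [fullCoboundary_insert hwσ, Finset.sum_eq_zero hvanish, add_zero] at h

end IsolatingFaces

section GeneratedComplex

variable {H : Finset (Finset V)} {i : ℕ} {f : Finset V → ZMod 2}

/-- The complex that consists of all singletons and of the nonempty subsets of members of `H`. -/
def generatedComplex (H : Finset (Finset V)) : Set (Finset V) :=
  {A | (∃ v, A = {v}) ∨ (A.Nonempty ∧ ∃ K ∈ H, A ⊆ K)}

lemma mem_generatedComplex_of_subset {A B : Finset V} (hA : A ∈ generatedComplex H) (hB : B ⊆ A)
    (hne : B.Nonempty) : B ∈ generatedComplex H := by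
  obtain ⟨v, rfl⟩ | ⟨-, K, hK, hAK⟩ := hA
  · exact Or.inl ⟨v, (Finset.Nonempty.subset_singleton_iff hne).1 hB⟩
  · exact Or.inr ⟨hne, K, hK, hB.trans hAK⟩

lemma mem_generatedComplex_iff {A : Finset V} (hA : 2 ≤ A.card) :
    A ∈ generatedComplex H ↔ ∃ K ∈ H, A ⊆ K := by
  refine ⟨?_, fun h => Or.inr ⟨Finset.card_pos.1 (by omega), h⟩⟩
  rintro (⟨v, rfl⟩ | ⟨-, h⟩)
  · simp at hA
  · exact h

/-- The restriction of a cochain of the full simplex to the `i`-simplices of `G`. -/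
def restrict (G : Set (Finset V)) (i : ℕ) : (Finset V → ZMod 2) →ₗ[ZMod 2] Cochain G i where
  toFun f A := f A.1
  map_add' _ _ := rfl
  map_smul' _ _ := rfl

lemma restrict_surjective (G : Set (Finset V)) (i : ℕ) : Function.Surjective (restrict G i) :=
  fun f => ⟨fun A => if h : IsSimplex G i A then f ⟨A, h⟩ else 0, funext fun A => dif_pos A.2⟩

lemma restrict_eq_restrict_iff {G : Set (Finset V)} {g : Finset V → ZMod 2} :
    restrict G i f = restrict G i g ↔ ∀ σ ∈ G, σ.card = i + 1 → f σ = g σ :=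
  ⟨fun h σ hσ hcard => congrFun h ⟨σ, hσ, hcard⟩, fun h => funext fun σ => h σ.1 σ.2.1 σ.2.2⟩

lemma fullCoboundary_eq_sum_powersetCard {σ : Finset V} {m : ℕ} (hσ : σ.card = m + 1) :
    δ f σ = ∑ τ ∈ σ.powersetCard m, f τ := by
  have hfacets : σ.powersetCard m = σ.image σ.erase := by
    ext τ
    rw [Finset.mem_image, ← Finset.covBy_iff_exists_erase, Finset.covBy_iff_card_sdiff_eq_one,
      Finset.mem_powersetCard]
    refine and_congr_right fun hτ => ?_
    have := Finset.card_le_card hτ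
    rw [Finset.card_sdiff_of_subset hτ]
    omega
  rw [hfacets, Finset.sum_image (Finset.erase_injOn σ), fullCoboundary_apply]

lemma coboundary_restrict (H : Finset (Finset V)) (i : ℕ) (f : Finset V → ZMod 2) :
    coboundary (generatedComplex H) i (restrict _ i f) =
      restrict (generatedComplex H) (i + 1) (δ f) := by
  ext σ
  change _ = δ f σ.1
  rw [fullCoboundary_eq_sum_powersetCard σ.2.2]
  refine Finset.sum_congr rfl fun τ hτ => ?_
  obtain ⟨hτσ, hcard⟩ := Finset.mem_powersetCard.1 hτ
  exact dif_pos
    ⟨mem_generatedComplex_of_subset σ.2.1 hτσ (Finset.card_pos.1 (by omega)), hcard⟩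

lemma restrict_mem_cocycles_iff :
    restrict (generatedComplex H) i f ∈ cocycles (generatedComplex H) i ↔
      ∀ K ∈ H, IsCocycleOn f (i + 1) K := by
  rw [cocycles, LinearMap.mem_ker, coboundary_restrict, ← map_zero (restrict _ (i + 1)),
    restrict_eq_restrict_iff]
  constructor
  · intro h K hK ρ hρ hcard
    exact h ρ ((mem_generatedComplex_iff (by omega)).2 ⟨K, hK, hρ⟩) hcard
  · intro h σ hσ hcard
    obtain ⟨K, hK, hσK⟩ := (mem_generatedComplex_iff (by omega)).1 hσ
    exact h K hK σ hσK hcard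

lemma restrict_mem_coboundaries_iff :
    restrict (generatedComplex H) (i + 1) f ∈ coboundaries (generatedComplex H) (i + 1) ↔
      ∃ g, ∀ σ ∈ subfaces (i + 2) H, f σ = δ g σ := by
  have hsubfaces : ∀ σ : Finset V, σ ∈ generatedComplex H ∧ σ.card = i + 2 ↔
      σ ∈ subfaces (i + 2) H := fun σ => by
    rw [mem_subfaces, and_comm]
    exact and_congr_right fun hcard => mem_generatedComplex_iff (by omega)
  change _ ∈ LinearMap.range (coboundary (generatedComplex H) i) ↔ _
  rw [LinearMap.mem_range, (restrict_surjective _ i).exists]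
  simp only [coboundary_restrict, restrict_eq_restrict_iff, ← hsubfaces, and_imp]
  exact exists_congr fun g => forall₃_congr fun σ _ _ => eq_comm

end GeneratedComplex

section MinusCopies

/-- A copy of `M_j^-` in the complex generated by `H`, see `IsMjMinus`. -/
def IsMinusCopy (H : Finset (Finset V)) (j : ℕ) (K C : Finset V) : Prop :=
  K ∈ H ∧ C ⊆ K ∧ C.card = j ∧ ∀ P ∈ petals K C, ∀ K' ∈ H, P ⊆ K' → K' = K

lemma indicator_petals {K C σ : Finset V} (hσ : σ.card = C.card + 1) (hσK : σ ⊆ K) :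
    indicator (petals K C) σ = δ (indicator {C}) σ := by
  by_cases hC : C ⊆ σ
  · obtain ⟨w, hw, rfl⟩ := Finset.exists_eq_insert_iff.2 ⟨hC, hσ.symm⟩
    have hpetal : insert w C ∈ petals K C :=
      mem_petals.2 ⟨w, Finset.mem_sdiff.2 ⟨hσK (Finset.mem_insert_self w C), hw⟩, rfl⟩
    have hne : ∀ x ∈ C, indicator {C} (insert w (C.erase x)) = 0 := fun x _ => by
      refine if_neg fun h => hw ?_
      exact Finset.mem_singleton.1 h ▸ Finset.mem_insert_self w _
    rw [fullCoboundary_insert hw, Finset.sum_eq_zero hne, indicator, indicator, if_pos hpetal,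
      if_pos (Finset.mem_singleton_self C), add_zero]
  · have hpetal : σ ∉ petals K C := fun h => by
      obtain ⟨w, _, rfl⟩ := mem_petals.1 h
      exact hC (Finset.subset_insert w C)
    rw [fullCoboundary_apply, Finset.sum_eq_zero fun x _ => ?_, indicator, if_neg hpetal]
    exact if_neg fun h =>
      hC ((Finset.mem_singleton.1 h).symm.subset.trans (Finset.erase_subset x σ))

lemma IsMinusCopy.isCocycleOn {H : Finset (Finset V)} {j : ℕ} {K C : Finset V}
    (hM : IsMinusCopy H j K C) {K' : Finset V} (hK' : K' ∈ H) :
    IsCocycleOn (indicator (petals K C)) (j + 1) K' := by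
  obtain ⟨-, -, rfl, honly⟩ := hM
  obtain rfl | hne := eq_or_ne K' K
  · exact (isCocycleOn_fullCoboundary (indicator {C}) _ _).congr fun σ hσ hcard =>
      (indicator_petals hcard hσ).symm
  · refine (isCocycleOn_zero _ K').congr fun σ hσ _ => ?_
    exact (if_neg fun hpetal => hne (honly σ hpetal K' hK' hσ)).symm

lemma petals_injOn {K : Finset V} {j : ℕ} (hj : j + 2 ≤ K.card) :
    Set.InjOn (petals K) (K.powersetCard j : Set (Finset V)) := by
  intro C hC C' hC' h
  obtain ⟨hCK, hcard⟩ := Finset.mem_powersetCard.1 hC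
  obtain ⟨-, hcard'⟩ := Finset.mem_powersetCard.1 hC'
  by_contra hne
  obtain ⟨x, hxC', hxC⟩ := Finset.not_subset.1 fun hsub : C' ⊆ C =>
    hne (Finset.eq_of_subset_of_card_le hsub (by omega)).symm
  obtain ⟨w, hw, hwx⟩ : ∃ w ∈ K \ C, w ≠ x :=
    Finset.exists_mem_ne (by rw [Finset.card_sdiff_of_subset hCK]; omega) x
  obtain ⟨w', -, heq⟩ := mem_petals.1 (h ▸ mem_petals.2 ⟨w, hw, rfl⟩ : insert w C ∈ petals K C')
  have hx : x ∈ insert w C := heq ▸ Finset.mem_insert_of_mem hxC'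
  exact (Finset.mem_insert.1 hx).elim (fun h => hwx h.symm) hxC

end MinusCopies

section CoboundaryExpansion

/-- A weak coboundary expansion property in degree `j - 1`: a cochain which is not a cocycle on
the full simplex fails to be one on more than `|V|` members of `H`. -/
def HasCoboundaryExpansion [Fintype V] (j : ℕ) (H : Finset (Finset V)) : Prop :=
  ∀ g, ¬ IsCocycleOn g j Finset.univ →
    Fintype.card V < (H.filter fun K => ¬ IsCocycleOn g j K).card

lemma fullCoboundary_indicator_singleton_ne_zero {C σ : Finset V} (hσ : σ.card = C.card + 1) :
    δ (indicator {C}) σ ≠ 0 ↔ C ⊆ σ := by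
  rw [← indicator_petals hσ subset_rfl, indicator_ne_zero, mem_petals]
  constructor
  · rintro ⟨w, -, rfl⟩
    exact Finset.subset_insert w C
  · intro hC
    obtain ⟨w, hw, rfl⟩ := Finset.exists_eq_insert_iff.2 ⟨hC, hσ.symm⟩
    exact ⟨w, Finset.mem_sdiff.2 ⟨Finset.mem_insert_self w C, hw⟩, rfl⟩

namespace HasCoboundaryExpansion

variable [Fintype V] {i j : ℕ} {H : Finset (Finset V)} {f : Finset V → ZMod 2}

lemma exists_superset (h : HasCoboundaryExpansion j H) (hj : j < Fintype.card V) {τ : Finset V}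
    (hτ : τ.card ≤ j) : ∃ K ∈ H, τ ⊆ K := by
  obtain ⟨C, hτC, rfl⟩ := Finset.exists_superset_card_eq hτ hj.le
  obtain ⟨ρ, hCρ, -, hρ⟩ := Finset.exists_subsuperset_card_eq (Finset.subset_univ C)
    (Nat.le_succ C.card) (by rw [Finset.card_univ]; omega)
  have hnot : ¬ IsCocycleOn (indicator {C}) C.card Finset.univ := fun hcoc =>
    (fullCoboundary_indicator_singleton_ne_zero hρ).2 hCρ (hcoc ρ (Finset.subset_univ ρ) hρ)
  obtain ⟨K, hK⟩ := Finset.card_pos.1 (pos_of_gt (h _ hnot))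
  obtain ⟨hKH, hK⟩ := Finset.mem_filter.1 hK
  obtain ⟨σ, hσ, hσK⟩ := not_isCocycleOn_iff.1 hK
  obtain ⟨hcard, hne⟩ := mem_supportIn_univ.1 hσ
  exact ⟨K, hKH, hτC.trans
    (((fullCoboundary_indicator_singleton_ne_zero hcard).1 hne).trans hσK)⟩

lemma isCocycleOn_univ (h : HasCoboundaryExpansion j H) (hj : j < Fintype.card V)
    (hi : i + 1 ≤ j) (hf : ∀ K ∈ H, IsCocycleOn f (i + 1) K) :
    IsCocycleOn f (i + 1) Finset.univ := by
  obtain rfl | hij := eq_or_lt_of_le hi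
  · by_contra hnot
    have hcard := h f hnot
    rw [Finset.filter_eq_empty_iff.2 fun K hK => not_not.2 (hf K hK)] at hcard
    exact Nat.not_lt_zero _ hcard
  · intro σ _ hσ
    obtain ⟨K, hK, hσK⟩ := h.exists_superset hj (τ := σ) (by omega)
    exact hf K hK σ hσK hσ

lemma subsingleton_cohomology (h : HasCoboundaryExpansion j H) (hj : j < Fintype.card V)
    (hi : 1 ≤ i) (hij : i + 1 ≤ j) : Subsingleton (cohomology (generatedComplex H) i) := by
  obtain ⟨i, rfl⟩ := Nat.exists_eq_add_of_le' hi
  obtain ⟨v⟩ : Nonempty V := Fintype.card_pos_iff.1 (by omega)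
  rw [Submodule.Quotient.subsingleton_iff, eq_top_iff]
  rintro ⟨f, hf⟩ -
  obtain ⟨f, rfl⟩ := restrict_surjective _ _ f
  have hcoc := h.isCocycleOn_univ hj hij (restrict_mem_cocycles_iff.1 hf)
  refine restrict_mem_coboundaries_iff.2 ⟨contract v f, fun σ hσ => ?_⟩
  have hcontract := add_fullCoboundary_contract v f σ
  split_ifs at hcontract with hv
  · exact CharTwo.add_eq_zero.1 hcontract
  · rw [hcoc _ (Finset.subset_univ _)
      (by rw [Finset.card_insert_of_notMem hv, (mem_subfaces.1 hσ).1])] at hcontract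
    exact CharTwo.add_eq_zero.1 hcontract

lemma apply_singleton_eq (h : HasCoboundaryExpansion j H) (hj : j < Fintype.card V)
    (hj1 : 1 ≤ j) (hf : ∀ K ∈ H, IsCocycleOn f 1 K) (v w : V) : f {v} = f {w} := by
  obtain rfl | hvw := eq_or_ne v w
  · rfl
  have hv : v ∉ ({w} : Finset V) := Finset.notMem_singleton.2 hvw
  have hzero := h.isCocycleOn_univ hj hj1 hf _ (Finset.subset_univ _) (Finset.card_pair hvw)
  rw [fullCoboundary_insert hv, Finset.sum_singleton, Finset.erase_singleton] at hzero
  exact (CharTwo.add_eq_zero.1 hzero).symm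

lemma nonempty_cohomology_zero_equiv (h : HasCoboundaryExpansion j H) (hj : j < Fintype.card V)
    (hj1 : 1 ≤ j) : Nonempty (cohomology (generatedComplex H) 0 ≃ₗ[ZMod 2] ZMod 2) := by
  obtain ⟨v⟩ : Nonempty V := Fintype.card_pos_iff.1 (by omega)
  have hbot : (coboundaries (generatedComplex H) 0).comap
      (cocycles (generatedComplex H) 0).subtype = ⊥ :=
    (Submodule.comap_bot _).trans (Submodule.ker_subtype _)
  let eval : cocycles (generatedComplex H) 0 →ₗ[ZMod 2] ZMod 2 :=
    LinearMap.proj ⟨{v}, Or.inl ⟨v, rfl⟩, Finset.card_singleton v⟩ ∘ₗ Submodule.subtype _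
  have hinj : Function.Injective eval := by
    rw [injective_iff_map_eq_zero]
    rintro ⟨f, hf⟩ hfv
    obtain ⟨f, rfl⟩ := restrict_surjective _ _ f
    refine Subtype.ext (funext fun σ => ?_)
    obtain ⟨w, hw⟩ := Finset.card_eq_one.1 σ.2.2
    change f σ.1 = 0
    rw [hw, h.apply_singleton_eq hj hj1 (restrict_mem_cocycles_iff.1 hf) w v]
    exact hfv
  have hsurj : Function.Surjective eval := by
    refine fun y => ⟨⟨restrict _ 0 fun _ => y, restrict_mem_cocycles_iff.2 ?_⟩, rfl⟩
    intro _ _ ρ _ hρ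
    rw [fullCoboundary_apply, Finset.sum_const, hρ, two_nsmul, CharTwo.add_self_eq_zero]
  exact ⟨(Submodule.quotEquivOfEqBot _ hbot).trans
    (LinearEquiv.ofBijective eval ⟨hinj, hsurj⟩)⟩

end HasCoboundaryExpansion

end CoboundaryExpansion

section Exploration

variable {H T : Finset (Finset V)} {m : ℕ} {f : Finset V → ZMod 2}

lemma indicator_supportIn_apply [Fintype V] {σ : Finset V} (hσ : σ.card = m) :
    indicator (supportIn Finset.univ m f) σ = f σ := by
  obtain h | h := eq_or_ne (f σ) 0
  · rw [h, indicator, if_neg fun hmem => (mem_supportIn_univ.1 hmem).2 h]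
  · exact (if_pos (mem_supportIn_univ.2 ⟨hσ, h⟩)).trans (Fin.eq_one_of_ne_zero _ h).symm

lemma supportIn_fullCoboundary_indicator_supportIn [Fintype V] :
    supportIn Finset.univ (m + 1) (δ (indicator (supportIn Finset.univ m f))) =
      supportIn Finset.univ (m + 1) (δ f) := by
  ext ρ
  rw [mem_supportIn_univ, mem_supportIn_univ]
  refine and_congr_right fun hρ => ?_
  rw [fullCoboundary_congr hρ fun _ _ hσ => indicator_supportIn_apply hσ]

lemma subfaces_mono {A B : Finset (Finset V)} (h : A ⊆ B) : subfaces m A ⊆ subfaces m B :=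
  Finset.biUnion_subset_biUnion_of_subset_left _ h

/-- The members of `T` are partitioned into classes by the faces of `H`; this says that the
members of `T` covered by `A` form a union of classes. -/
def IsClosedUnder (H : Finset (Finset V)) (m : ℕ) (T A : Finset (Finset V)) : Prop :=
  ∀ K ∈ H, ∀ σ ∈ T, ∀ τ ∈ T, σ ⊆ K → τ ⊆ K → σ ∈ subfaces m A → τ ∈ subfaces m A

/- A cluster that is maximal subject to each of its faces having contributed a new member of `T`
cannot be left through a face of `H`. -/
lemma exists_cluster_isClosedUnder (hT : ∀ σ ∈ T, σ.card = m) {σ₀ K₀ : Finset V} (hσ₀ : σ₀ ∈ T)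
    (hK₀ : K₀ ∈ H) (hσK : σ₀ ⊆ K₀) :
    ∃ A ⊆ H, IsCluster (FaceAdj m) A ∧ A.card ≤ (T ∩ subfaces m A).card ∧
      IsClosedUnder H m T A := by
  let admissible : Set (Finset (Finset V)) :=
    {A | A ⊆ H ∧ IsCluster (FaceAdj m) A ∧ A.card ≤ (T ∩ subfaces m A).card}
  have hfinite : admissible.Finite :=
    H.powerset.finite_toSet.subset fun A hA => Finset.mem_powerset.2 hA.1
  have hsingleton : {K₀} ∈ admissible := by
    refine ⟨Finset.singleton_subset_iff.2 hK₀, .singleton K₀, Finset.card_pos.2 ⟨σ₀, ?_⟩⟩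
    exact Finset.mem_inter.2
      ⟨hσ₀, mem_subfaces.2 ⟨hT σ₀ hσ₀, K₀, Finset.mem_singleton_self K₀, hσK⟩⟩
  obtain ⟨A, ⟨hAH, hcluster, hcard⟩, hmax⟩ :=
    Set.exists_max_image admissible Finset.card hfinite ⟨_, hsingleton⟩
  refine ⟨A, hAH, hcluster, hcard, fun K hK σ hσ τ hτ hσK hτK hσA => ?_⟩
  by_contra hτA
  have hKA : K ∉ A := fun h => hτA (mem_subfaces.2 ⟨hT τ hτ, K, h, hτK⟩)
  obtain ⟨-, K₁, hK₁, hσK₁⟩ := mem_subfaces.1 hσA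
  have hnew : insert τ (T ∩ subfaces m A) ⊆ T ∩ subfaces m (insert K A) :=
    Finset.insert_subset
      (Finset.mem_inter.2
        ⟨hτ, mem_subfaces.2 ⟨hT τ hτ, K, Finset.mem_insert_self K A, hτK⟩⟩)
      (Finset.inter_subset_inter_left (subfaces_mono (Finset.subset_insert K A)))
  have hgrow : insert K A ∈ admissible := by
    refine ⟨Finset.insert_subset hK hAH,
      by convert hcluster.grow hK₁ ⟨σ, hT σ hσ, hσK₁, hσK⟩ hKA, ?_⟩
    have := Finset.card_le_card hnew
    rw [Finset.card_insert_of_notMem fun h => hτA (Finset.mem_inter.1 h).2] at this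
    rw [Finset.card_insert_of_notMem hKA]
    omega
  have := hmax _ hgrow
  rw [Finset.card_insert_of_notMem hKA] at this
  omega

lemma IsClosedUnder.isCocycleOn_piecewise [Fintype V] {A : Finset (Finset V)}
    (h : IsClosedUnder H m (supportIn Finset.univ m f) A) {K : Finset V} (hK : K ∈ H)
    (hf : IsCocycleOn f m K) : IsCocycleOn ((subfaces m A).piecewise f 0) m K := by
  by_cases hmeet : ∃ σ ∈ supportIn Finset.univ m f, σ ⊆ K ∧ σ ∈ subfaces m A
  · obtain ⟨σ, hσ, hσK, hσA⟩ := hmeet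
    refine hf.congr fun τ hτ hcard => ?_
    by_cases hzero : f τ = 0
    · simp [Finset.piecewise, hzero]
    · have hτA := h K hK σ hσ τ (mem_supportIn_univ.2 ⟨hcard, hzero⟩) hσK hτ hσA
      rw [Finset.piecewise_eq_of_mem _ _ _ hτA]
  · refine (isCocycleOn_zero m K).congr fun τ hτ hcard => ?_
    by_cases hτA : τ ∈ subfaces m A
    · rw [Finset.piecewise_eq_of_mem _ _ _ hτA]
      by_contra hne
      exact hmeet ⟨τ, mem_supportIn_univ.2 ⟨hcard, fun h => hne h.symm⟩, hτ, hτA⟩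
    · rw [Finset.piecewise_eq_of_notMem _ _ _ hτA]

end Exploration

section MinimalCocycles

variable [Fintype V] {k j M : ℕ} {H : Finset (Finset V)} {f : Finset V → ZMod 2}

/-- Every set of more than `k - j + 1` simplices of dimension `j` that is covered by a cluster of
at most `M` members of `H` has an isolating face in `H`. -/
def SmallClustersIsolate (k j M : ℕ) (H : Finset (Finset V)) : Prop :=
  ∀ A ⊆ H, IsCluster (FaceAdj (j + 1)) A → A.card ≤ M →
    ∀ S ⊆ subfaces (j + 1) A, k - j + 2 ≤ S.card → ¬ Disjoint (isolatingFaces k S) H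

/-- The indicator of a set of simplices of dimension `j` which has a large coboundary and is
covered by a cluster of more than `M` members of `H` is not a cocycle on `H`. -/
def LargeClustersExpand (k j M : ℕ) (H : Finset (Finset V)) : Prop :=
  ∀ A ⊆ H, IsCluster (FaceAdj (j + 1)) A → M < A.card →
    ∀ S ⊆ subfaces (j + 1) A, A.card ≤ S.card →
      Fintype.card V * S.card ≤
        (j + 2) * (supportIn Finset.univ (j + 2) (δ (indicator S))).card →
      ¬ Disjoint (nonCocycleFaces k (j + 1) (indicator S)) H

lemma card_supportIn_le_of_minimal (hjk : j < k) (hsmall : SmallClustersIsolate k j M H)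
    (hlarge : LargeClustersExpand k j M H) (hf : ∀ K ∈ H, IsCocycleOn f (j + 1) K)
    (hmin : ∀ g, (supportIn Finset.univ (j + 1) f).card ≤
      (supportIn Finset.univ (j + 1) (f + δ g)).card)
    {A : Finset (Finset V)} (hA : A ⊆ H) (hcluster : IsCluster (FaceAdj (j + 1)) A)
    (hcard : A.card ≤ (supportIn Finset.univ (j + 1) f).card)
    (hcover : supportIn Finset.univ (j + 1) f ⊆ subfaces (j + 1) A) :
    (supportIn Finset.univ (j + 1) f).card ≤ k - j + 1 := by
  have hdisjoint :
      Disjoint (nonCocycleFaces k (j + 1) (indicator (supportIn Finset.univ (j + 1) f))) H := by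
    rw [Finset.disjoint_left]
    intro K hK hKH
    exact (Finset.mem_filter.1 hK).2
      ((hf K hKH).congr fun _ _ hσ => (indicator_supportIn_apply hσ).symm)
  by_contra! hcontra
  obtain hM | hM := le_or_gt A.card M
  · refine hsmall A hA hcluster hM _ hcover hcontra (hdisjoint.mono_left ?_)
    exact isolatingFaces_subset_nonCocycleFaces (by omega) fun σ hσ => (mem_supportIn_univ.1 hσ).1
  · refine hlarge A hA hcluster hM _ hcover hcard ?_ hdisjoint
    rw [supportIn_fullCoboundary_indicator_supportIn]
    exact card_mul_card_supportIn_le hmin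

/- A cocycle on `K` has support of size `0` or at least `k - j + 1`, so a support of that size
lies in every face it meets, and it is the flower of a copy of `M_j^-`. -/
lemma exists_isMinusCopy_of_card_supportIn_le (hjk : j < k) (hH : H ⊆ faces V k)
    (hf : ∀ K ∈ H, IsCocycleOn f (j + 1) K)
    (hcard : (supportIn Finset.univ (j + 1) f).card ≤ k - j + 1) {σ K : Finset V}
    (hσ : σ ∈ supportIn Finset.univ (j + 1) f) (hK : K ∈ H) (hσK : σ ⊆ K) :
    ∃ C, IsMinusCopy H j K C ∧ supportIn Finset.univ (j + 1) f = petals K C := by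
  have hcardK : ∀ K ∈ H, K.card = k + 1 := fun K hK => mem_faces.1 (hH hK)
  have hlocal : ∀ K ∈ H, ∀ τ ∈ supportIn Finset.univ (j + 1) f, τ ⊆ K →
      supportIn K (j + 1) f = supportIn Finset.univ (j + 1) f := fun K hK τ hτ hτK => by
    refine Finset.eq_of_subset_of_card_le (fun ρ hρ => ?_) ?_
    · exact mem_supportIn_univ.2 (mem_supportIn.1 hρ).2
    · have := (hf K hK).le_card_supportIn (mem_supportIn.2 ⟨hτK, mem_supportIn_univ.1 hτ⟩)
      rw [hcardK K hK] at this
      omega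
  have hσ' : σ ∈ supportIn K (j + 1) f := (hlocal K hK σ hσ hσK).symm ▸ hσ
  obtain ⟨C, hCK, hC, hpetals⟩ := (hf K hK).exists_supportIn_eq_petals hσ'
    (by rw [hcardK K hK]; omega) (by rw [hlocal K hK σ hσ hσK, hcardK K hK]; omega)
  rw [hlocal K hK σ hσ hσK] at hpetals
  refine ⟨C, ⟨hK, hCK, by omega, fun P hP K' hK' hPK' => ?_⟩, hpetals⟩
  have hKK' : K ⊆ K' := fun w hw => by
    obtain ⟨τ, hτ, hwτ⟩ := (hf K hK).exists_mem_supportIn hσ' hw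
    rw [hlocal K hK σ hσ hσK, ← hlocal K' hK' P (hpetals ▸ hP) hPK'] at hτ
    exact (mem_supportIn.1 hτ).1 hwτ
  exact (Finset.eq_of_subset_of_card_le hKK' (by rw [hcardK K hK, hcardK K' hK'])).symm

end MinimalCocycles

section GeneratedCocycles

variable [Fintype V] {k j M : ℕ} {H : Finset (Finset V)} {f f' : Finset V → ZMod 2}

/-- The pairs `(K, C)` of a `k`-simplex and a `(j - 1)`-simplex that may form a copy of `M_j^-`. -/
noncomputable def flags (V : Type*) [Fintype V] (k j : ℕ) : Finset (Finset V × Finset V) :=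
  (faces V k ×ˢ Finset.powersetCard j Finset.univ).filter fun a => a.2 ⊆ a.1

lemma mem_flags {a : Finset V × Finset V} :
    a ∈ flags V k j ↔ a.1.card = k + 1 ∧ a.2.card = j ∧ a.2 ⊆ a.1 := by
  simp only [flags, Finset.mem_filter, Finset.mem_product, mem_faces,
    Finset.mem_powersetCard_univ, and_assoc]

lemma card_petals_of_mem_flags (hjk : j ≤ k) {a : Finset V × Finset V} (ha : a ∈ flags V k j) :
    (petals a.1 a.2).card = k - j + 1 := by
  obtain ⟨hcard, hcenter, hsub⟩ := mem_flags.1 ha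
  rw [card_petals hsub, hcard, hcenter, Nat.sub_add_comm hjk]

lemma card_petals_lt_card_petals_union (hjk : j < k) {K C C' : Finset V}
    (hC : (K, C) ∈ flags V k j) (hC' : (K, C') ∈ flags V k j) (hne : C ≠ C') :
    k - j + 1 < (petals K C ∪ petals K C').card := by
  rw [← card_petals_of_mem_flags hjk.le hC]
  refine Finset.card_lt_card (Finset.subset_union_left.ssubset_of_ne fun heq => hne ?_)
  have hcard : (petals K C).card = (petals K C').card :=
    (card_petals_of_mem_flags hjk.le hC).trans (card_petals_of_mem_flags hjk.le hC').symm
  have hpetals : petals K C' = petals K C :=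
    Finset.eq_of_subset_of_card_le (Finset.union_eq_left.1 heq.symm) hcard.le
  obtain ⟨hK, hcenter, hsub⟩ := mem_flags.1 hC
  obtain ⟨-, hcenter', hsub'⟩ := mem_flags.1 hC'
  have hjK : j + 2 ≤ K.card := by
    change K.card = k + 1 at hK
    omega
  exact petals_injOn hjK (Finset.mem_powersetCard.2 ⟨hsub, hcenter⟩)
    (Finset.mem_powersetCard.2 ⟨hsub', hcenter'⟩) hpetals.symm

/-- The copies of `M_j^-` in the complex generated by `H`. -/
noncomputable def minusCopies (k j : ℕ) (H : Finset (Finset V)) : Finset (Finset V × Finset V) :=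
  (flags V k j).filter fun a => IsMinusCopy H j a.1 a.2

lemma mem_minusCopies (hH : H ⊆ faces V k) {a : Finset V × Finset V} :
    a ∈ minusCopies k j H ↔ IsMinusCopy H j a.1 a.2 := by
  rw [minusCopies, Finset.mem_filter, mem_flags, and_iff_right_iff_imp]
  exact fun h => ⟨mem_faces.1 (hH h.1), h.2.2.1, h.2.1⟩

lemma IsMinusCopy.mem_flags (hH : H ⊆ faces V k) {K C : Finset V} (h : IsMinusCopy H j K C) :
    (K, C) ∈ flags V k j :=
  Finset.filter_subset _ _ ((mem_minusCopies hH (a := (K, C))).2 h)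

/-- The linear combinations of the cocycles that arise from copies of `M_j^-`. -/
noncomputable def flowerSum (k j : ℕ) (H : Finset (Finset V)) :
    (minusCopies k j H → ZMod 2) →ₗ[ZMod 2] (Finset V → ZMod 2) :=
  Fintype.linearCombination (ZMod 2) fun a => indicator (petals a.1.1 a.1.2)

lemma flowerSum_apply (c : minusCopies k j H → ZMod 2) (σ : Finset V) :
    flowerSum k j H c σ = ∑ a, c a * indicator (petals a.1.1 a.1.2) σ := by
  simp only [flowerSum, Fintype.linearCombination_apply, Finset.sum_apply, Pi.smul_apply,
    smul_eq_mul]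

/-- On the `j`-simplices of the complex generated by `H`, the cochain `f` is generated by copies
of `M_j^-`, up to a coboundary. -/
def IsGeneratedByFlowers (k j : ℕ) (H : Finset (Finset V)) (f : Finset V → ZMod 2) : Prop :=
  ∃ c g, ∀ σ ∈ subfaces (j + 1) H, f σ = flowerSum k j H c σ + δ g σ

namespace IsGeneratedByFlowers

lemma congr (hf : IsGeneratedByFlowers k j H f) (h : ∀ σ ∈ subfaces (j + 1) H, f σ = f' σ) :
    IsGeneratedByFlowers k j H f' := by
  obtain ⟨c, g, hcg⟩ := hf
  exact ⟨c, g, fun σ hσ => (h σ hσ).symm.trans (hcg σ hσ)⟩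

lemma of_add (h : IsGeneratedByFlowers k j H (f + f')) (hf' : IsGeneratedByFlowers k j H f') :
    IsGeneratedByFlowers k j H f := by
  obtain ⟨c, g, hcg⟩ := h
  obtain ⟨c', g', hcg'⟩ := hf'
  refine ⟨c + c', g + g', fun σ hσ => ?_⟩
  calc f σ = f σ + f' σ + f' σ := by rw [add_assoc, CharTwo.add_self_eq_zero, add_zero]
    _ = flowerSum k j H c σ + δ g σ + (flowerSum k j H c' σ + δ g' σ) := by
      rw [← hcg σ hσ, ← hcg' σ hσ, Pi.add_apply]
    _ = flowerSum k j H (c + c') σ + δ (g + g') σ := by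
      rw [map_add, map_add, Pi.add_apply, Pi.add_apply, add_add_add_comm]

end IsGeneratedByFlowers

lemma isGeneratedByFlowers_fullCoboundary (g : Finset V → ZMod 2) :
    IsGeneratedByFlowers k j H (δ g) :=
  ⟨0, g, fun σ _ => by rw [map_zero, Pi.zero_apply, zero_add]⟩

lemma isGeneratedByFlowers_zero : IsGeneratedByFlowers k j H (0 : Finset V → ZMod 2) :=
  map_zero (fullCoboundary (V := V)) ▸ isGeneratedByFlowers_fullCoboundary 0

lemma isGeneratedByFlowers_indicator_petals (hH : H ⊆ faces V k) {K C : Finset V}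
    (h : IsMinusCopy H j K C) : IsGeneratedByFlowers k j H (indicator (petals K C)) := by
  refine ⟨Pi.single ⟨(K, C), (mem_minusCopies hH).2 h⟩ 1, 0, fun σ _ => ?_⟩
  rw [flowerSum, Fintype.linearCombination_apply_single, one_smul, map_zero, Pi.zero_apply,
    add_zero]

lemma supportIn_piecewise (S : Finset (Finset V)) (m : ℕ) (f : Finset V → ZMod 2) :
    supportIn Finset.univ m (S.piecewise f 0) = supportIn Finset.univ m f ∩ S := by
  ext σ
  by_cases hσ : σ ∈ S <;> simp [mem_supportIn_univ, Finset.piecewise, hσ]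

lemma supportIn_add_piecewise (S : Finset (Finset V)) (m : ℕ) (f : Finset V → ZMod 2) :
    supportIn Finset.univ m (f + S.piecewise f 0) = supportIn Finset.univ m f \ S := by
  ext σ
  by_cases hσ : σ ∈ S <;>
    simp [mem_supportIn_univ, Finset.piecewise, hσ, CharTwo.add_self_eq_zero]

/- Cutting a cocycle along a union of classes splits it into two cocycles of smaller support. -/
lemma IsClosedUnder.isGeneratedByFlowers {A : Finset (Finset V)}
    (hclosed : IsClosedUnder H (j + 1) (supportIn Finset.univ (j + 1) f) A)
    (hf : ∀ K ∈ H, IsCocycleOn f (j + 1) K)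
    (ih : ∀ f', (supportIn Finset.univ (j + 1) f').card < (supportIn Finset.univ (j + 1) f).card →
      (∀ K ∈ H, IsCocycleOn f' (j + 1) K) → IsGeneratedByFlowers k j H f')
    (hmeet : (supportIn Finset.univ (j + 1) f ∩ subfaces (j + 1) A).Nonempty)
    (hcover : ¬ supportIn Finset.univ (j + 1) f ⊆ subfaces (j + 1) A) :
    IsGeneratedByFlowers k j H f := by
  have hcut : ∀ K ∈ H, IsCocycleOn ((subfaces (j + 1) A).piecewise f 0) (j + 1) K :=
    fun K hK => hclosed.isCocycleOn_piecewise hK (hf K hK)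
  refine IsGeneratedByFlowers.of_add (ih _ ?_ fun K hK => (hf K hK).add (hcut K hK))
    (ih _ ?_ hcut)
  · rw [supportIn_add_piecewise]
    refine Finset.card_lt_card (sdiff_lt_left.2 ?_)
    rwa [disjoint_comm, Finset.not_disjoint_iff_nonempty_inter]
  · rw [supportIn_piecewise]
    exact Finset.card_lt_card (inf_lt_left.2 hcover)

theorem isGeneratedByFlowers_of_isCocycleOn (hjk : j < k) (hH : H ⊆ faces V k)
    (hsmall : SmallClustersIsolate k j M H) (hlarge : LargeClustersExpand k j M H)
    (hf : ∀ K ∈ H, IsCocycleOn f (j + 1) K) : IsGeneratedByFlowers k j H f := by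
  induction hN : (supportIn Finset.univ (j + 1) f).card using Nat.strong_induction_on
    generalizing f with | _ N ih
  subst hN
  replace ih := fun f' hlt hf' => ih _ hlt (f := f') hf' rfl
  by_cases! hmin : ∃ g, (supportIn Finset.univ (j + 1) (f + δ g)).card <
      (supportIn Finset.univ (j + 1) f).card
  · obtain ⟨g, hg⟩ := hmin
    exact (ih _ hg fun K hK => (hf K hK).add (isCocycleOn_fullCoboundary g _ K)).of_add
      (isGeneratedByFlowers_fullCoboundary g)
  by_cases hmeet : (supportIn Finset.univ (j + 1) f ∩ subfaces (j + 1) H).Nonempty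
  swap
  · refine isGeneratedByFlowers_zero.congr fun σ hσ => ?_
    by_contra hne
    exact hmeet ⟨σ, Finset.mem_inter.2
      ⟨mem_supportIn_univ.2 ⟨(mem_subfaces.1 hσ).1, fun h => hne h.symm⟩, hσ⟩⟩
  obtain ⟨σ, hσ⟩ := id hmeet
  obtain ⟨hσ, hσH⟩ := Finset.mem_inter.1 hσ
  obtain ⟨-, K, hK, hσK⟩ := mem_subfaces.1 hσH
  obtain ⟨A, hAH, hcluster, hcard, hclosed⟩ := exists_cluster_isClosedUnder
    (fun τ hτ => (mem_supportIn_univ.1 hτ).1) hσ hK hσK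
  by_cases hcover : supportIn Finset.univ (j + 1) f ⊆ subfaces (j + 1) A
  swap
  · exact hclosed.isGeneratedByFlowers hf ih
      (Finset.card_pos.1 ((Finset.card_pos.2 hcluster.nonempty).trans_le hcard)) hcover
  rw [Finset.inter_eq_left.2 hcover] at hcard
  obtain ⟨C, hC, hpetals⟩ := exists_isMinusCopy_of_card_supportIn_le hjk hH hf
    (card_supportIn_le_of_minimal hjk hsmall hlarge hf hmin hAH hcluster hcard hcover) hσ hK hσK
  refine (isGeneratedByFlowers_indicator_petals hH hC).congr fun τ hτ => ?_
  rw [← hpetals, indicator_supportIn_apply (mem_subfaces.1 hτ).1]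

end GeneratedCocycles

section CohomologyDimension

variable [Fintype V] {k j M : ℕ} {H : Finset (Finset V)}

lemma isolatingFaces_disjoint_of_isMinusCopy {K C C' : Finset V}
    (h : IsMinusCopy H j K C) (h' : IsMinusCopy H j K C')
    (hcard : 1 < (petals K C ∪ petals K C').card) :
    Disjoint (isolatingFaces k (petals K C ∪ petals K C')) H := by
  rw [Finset.disjoint_left]
  intro K' hiso hK'
  have hone : ((petals K C ∪ petals K C').filter (· ⊆ K')).card = 1 :=
    (Finset.mem_filter.1 hiso).2
  have hsub : ∀ P ∈ petals K C ∪ petals K C', P ⊆ K := fun P hP =>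
    (Finset.mem_union.1 hP).elim (subset_of_mem_petals h.2.1) (subset_of_mem_petals h'.2.1)
  obtain ⟨P, hP⟩ := Finset.card_pos.1 (hone ▸ Nat.one_pos)
  obtain ⟨hP, hPK'⟩ := Finset.mem_filter.1 hP
  obtain rfl : K' = K := (Finset.mem_union.1 hP).elim
    (fun hP => h.2.2.2 P hP K' hK' hPK') (fun hP => h'.2.2.2 P hP K' hK' hPK')
  rw [Finset.filter_eq_self.2 hsub] at hone
  omega

lemma IsMinusCopy.center_unique (hjk : j < k) (hM : 1 ≤ M) (hH : H ⊆ faces V k)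
    (hsmall : SmallClustersIsolate k j M H) {K C C' : Finset V} (h : IsMinusCopy H j K C)
    (h' : IsMinusCopy H j K C') : C = C' := by
  by_contra hne
  have hlt := card_petals_lt_card_petals_union hjk (h.mem_flags hH) (h'.mem_flags hH) hne
  refine hsmall {K} (Finset.singleton_subset_iff.2 h.1) (.singleton K) hM _ (fun P hP => ?_)
    (by omega) (isolatingFaces_disjoint_of_isMinusCopy h h' (by omega))
  refine mem_subfaces.2 ⟨?_, K, Finset.mem_singleton_self K, ?_⟩
  · exact (Finset.mem_union.1 hP).elim (fun hP => h.2.2.1 ▸ card_of_mem_petals hP)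
      (fun hP => h'.2.2.1 ▸ card_of_mem_petals hP)
  · exact (Finset.mem_union.1 hP).elim (subset_of_mem_petals h.2.1)
      (subset_of_mem_petals h'.2.1)

lemma isCocycleOn_flowerSum (hH : H ⊆ faces V k) (c : minusCopies k j H → ZMod 2)
    {K : Finset V} (hK : K ∈ H) : IsCocycleOn (flowerSum k j H c) (j + 1) K := by
  intro ρ hρ hcard
  rw [flowerSum, Fintype.linearCombination_apply, map_sum, Finset.sum_apply]
  refine Finset.sum_eq_zero fun a _ => ?_
  rw [map_smul, Pi.smul_apply, ((mem_minusCopies hH).1 a.2).isCocycleOn hK ρ hρ hcard, smul_zero]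

lemma flowerSum_apply_of_mem_petals (hjk : j < k) (hM : 1 ≤ M) (hH : H ⊆ faces V k)
    (hsmall : SmallClustersIsolate k j M H) (c : minusCopies k j H → ZMod 2)
    (a : minusCopies k j H) {P : Finset V} (hP : P ∈ petals a.1.1 a.1.2) :
    flowerSum k j H c P = c a := by
  rw [flowerSum_apply, Finset.sum_eq_single a _ fun h => absurd (Finset.mem_univ a) h]
  · rw [indicator, if_pos hP, mul_one]
  · intro b _ hne
    rw [indicator, if_neg fun hPb => hne ?_, mul_zero]
    have ha := (mem_minusCopies hH).1 a.2
    have hb := (mem_minusCopies hH).1 b.2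
    have hface : b.1.1 = a.1.1 :=
      ha.2.2.2 P hP b.1.1 hb.1 (subset_of_mem_petals hb.2.1 hPb)
    exact Subtype.ext (Prod.ext hface ((hface ▸ hb).center_unique hjk hM hH hsmall ha))

/- Each copy of `M_j^-` spoils the cocycle condition of `g` on a single member of `H`, so expansion
turns a coboundary `δ g` that is a sum of flowers into zero. -/
lemma eq_zero_of_flowerSum_eq_fullCoboundary (hjk : j < k) (hM : 1 ≤ M) (hH : H ⊆ faces V k)
    (hexp : HasCoboundaryExpansion j H) (hsmall : SmallClustersIsolate k j M H)
    (hX : (minusCopies k j H).card ≤ Fintype.card V) {c : minusCopies k j H → ZMod 2}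
    {g : Finset V → ZMod 2} (h : ∀ σ ∈ subfaces (j + 1) H, flowerSum k j H c σ = δ g σ) :
    c = 0 := by
  have hcoc : IsCocycleOn g j Finset.univ := by
    by_contra hnot
    refine (hexp g hnot).not_ge (le_trans (Finset.card_le_card fun K hK => ?_)
      ((Finset.card_image_le (s := minusCopies k j H) (f := Prod.fst)).trans hX))
    obtain ⟨hKH, hK⟩ := Finset.mem_filter.1 hK
    obtain ⟨ρ, hρ, hρK⟩ := not_isCocycleOn_iff.1 hK
    obtain ⟨hcard, hne⟩ := mem_supportIn_univ.1 hρ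
    rw [← h ρ (mem_subfaces.2 ⟨hcard, K, hKH, hρK⟩), flowerSum_apply] at hne
    obtain ⟨a, -, ha⟩ := Finset.exists_ne_zero_of_sum_ne_zero hne
    have hρa := indicator_ne_zero.1 (right_ne_zero_of_mul ha)
    exact Finset.mem_image.2
      ⟨a.1, a.2, (((mem_minusCopies hH).1 a.2).2.2.2 ρ hρa K hKH hρK).symm⟩
  funext a
  obtain ⟨haH, hCK, hC, -⟩ := (mem_minusCopies hH).1 a.2
  obtain ⟨P, hP⟩ : (petals a.1.1 a.1.2).Nonempty := by
    rw [← Finset.card_pos, card_petals hCK, mem_faces.1 (hH haH), hC]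
    omega
  have hcard : P.card = j + 1 := hC ▸ card_of_mem_petals hP
  rw [← flowerSum_apply_of_mem_petals hjk hM hH hsmall c a hP,
    h P (mem_subfaces.2 ⟨hcard, _, haH, subset_of_mem_petals hCK hP⟩),
    hcoc P (Finset.subset_univ P) hcard, Pi.zero_apply]

theorem finrank_cohomology_eq_card_minusCopies (hj : 1 ≤ j) (hjk : j < k) (hM : 1 ≤ M)
    (hH : H ⊆ faces V k) (hexp : HasCoboundaryExpansion j H)
    (hsmall : SmallClustersIsolate k j M H) (hlarge : LargeClustersExpand k j M H)
    (hX : (minusCopies k j H).card ≤ Fintype.card V) :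
    Module.finrank (ZMod 2) (cohomology (generatedComplex H) j) = (minusCopies k j H).card := by
  obtain ⟨i, rfl⟩ := Nat.exists_eq_add_of_le' hj
  let flowers : (minusCopies k (i + 1) H → ZMod 2) →ₗ[ZMod 2]
      cocycles (generatedComplex H) (i + 1) :=
    (restrict _ (i + 1) ∘ₗ flowerSum k (i + 1) H).codRestrict _ fun c =>
      restrict_mem_cocycles_iff.2 fun _ hK => isCocycleOn_flowerSum hH c hK
  let classes : (minusCopies k (i + 1) H → ZMod 2) →ₗ[ZMod 2]
      cohomology (generatedComplex H) (i + 1) := Submodule.mkQ _ ∘ₗ flowers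
  have hinj : Function.Injective classes := by
    rw [injective_iff_map_eq_zero]
    intro c hc
    have hmem := (Submodule.Quotient.mk_eq_zero (x := flowers c) _).1 hc
    obtain ⟨g, hg⟩ := restrict_mem_coboundaries_iff.1 (Submodule.mem_comap.1 hmem)
    exact eq_zero_of_flowerSum_eq_fullCoboundary hjk hM hH hexp hsmall hX hg
  have hsurj : Function.Surjective classes := by
    intro y
    obtain ⟨⟨f, hf⟩, rfl⟩ := Submodule.Quotient.mk_surjective _ y
    obtain ⟨f, rfl⟩ := restrict_surjective _ _ f
    obtain ⟨c, g, hcg⟩ := isGeneratedByFlowers_of_isCocycleOn hjk hH hsmall hlarge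
      (restrict_mem_cocycles_iff.1 hf)
    refine ⟨c, (Submodule.Quotient.eq _).2 ?_⟩
    change restrict _ (i + 1) (flowerSum k (i + 1) H c) - restrict _ (i + 1) f ∈ coboundaries _ _
    rw [← map_sub]
    refine restrict_mem_coboundaries_iff.2 ⟨g, fun σ hσ => ?_⟩
    rw [Pi.sub_apply, hcg σ hσ, sub_add_cancel_left, CharTwo.neg_eq]
  rw [← (LinearEquiv.ofBijective classes ⟨hinj, hsurj⟩).finrank_eq,
    Module.finrank_fintype_fun_eq_card, Fintype.card_coe]

end CohomologyDimension

section FailureProbabilities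

lemma one_sub_pow_le_exp_neg_mul {q : ℝ} (hq : q ≤ 1) (N : ℕ) :
    (1 - q) ^ N ≤ Real.exp (-(q * N)) :=
  (pow_le_pow_left₀ (sub_nonneg.2 hq) (Real.one_sub_le_exp_neg q) N).trans_eq
    (by rw [← Real.exp_nat_mul]; ring_nf)

lemma sum_pow_card_powerset_erase_empty_le {α : Type*} [DecidableEq α] (s : Finset α)
    {x : ℝ} (hx : 0 ≤ x) :
    ∑ S ∈ s.powerset.erase ∅, x ^ S.card ≤ Real.exp (s.card * x) - 1 := by
  have hprod : ∑ S ∈ s.powerset, x ^ S.card = (1 + x) ^ s.card := by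
    simpa using (Finset.prod_one_add (s := s) (f := fun _ => x)).symm
  have hsplit := Finset.sum_erase_add s.powerset (fun S => x ^ S.card) (Finset.empty_mem_powerset s)
  have hexp : (1 + x) ^ s.card ≤ Real.exp (s.card * x) := by
    rw [Real.exp_nat_mul, add_comm]
    exact pow_le_pow_left₀ (by positivity) (Real.add_one_le_exp x) _
  rw [hprod, Finset.card_empty, pow_zero] at hsplit
  linarith

/-- The factor by which each further face of a cluster increases the union bound over clusters of
`(k + 1)`-sets and sets of simplices covered by them. -/
noncomputable def clusterGrowth (k : ℕ) : ℝ :=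
  4 * 2 ^ (k + 1) * 2 ^ 2 ^ (k + 1)

/-- A bound on the expected number of pairs of a cluster of `m + 1` random faces and a set of
simplices of dimension `j` covered by it, on `n` vertices. -/
noncomputable def expectedClustersBound (k j m n : ℕ) (p : ℝ) : ℝ :=
  (n : ℝ) ^ (k + 1) * p * clusterGrowth k ^ (m + 1) * (p * (n : ℝ) ^ (k - j)) ^ m

/-- In a set `S` of `m`-sets on `n` vertices whose coboundary is as large as the expansion of the
full simplex guarantees, each member accounts for this many faces on which the indicator of `S`
is not a cocycle. -/
noncomputable def expansionRate (k m n : ℕ) : ℝ :=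
  n * (n - (m + 1)).choose (k - m) / (2 ^ (k + 1) * (m + 1))

variable [Fintype V] {p : ℝ} {k j m M : ℕ}

lemma card_clusters_faces_le (k j m : ℕ) :
    (clusters (FaceAdj (j + 1)) (faces V k) m).card ≤
      Fintype.card V ^ (k + 1) * (4 * (2 ^ (k + 1) * Fintype.card V ^ (k - j))) ^ m := by
  refine (card_clusters_le (fun K hK => card_filter_faceAdj_le hK) m).trans ?_
  rw [card_faces, Nat.add_sub_add_right]
  exact Nat.mul_le_mul_right _ (Nat.choose_le_pow _ _)

lemma binomProb_exists_powerset_subfaces_le (hp : p ∈ Set.Icc 0 1) {b : ℝ} (hb : 0 ≤ b)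
    {A : Finset (Finset V)} (hA : A ⊆ faces V k) (Q : Finset (Finset V) → Prop)
    {B : Finset (Finset V) → Finset (Finset V)} (hB : ∀ S, B S ⊆ faces V k)
    (hbound : ∀ S ⊆ subfaces m A, Q S → (1 - p) ^ (B S).card ≤ b) :
    binomProb p (faces V k)
        (fun H => ∃ S ∈ (subfaces m A).powerset, Q S ∧ A ⊆ H ∧ Disjoint (B S) H) ≤
      2 ^ (2 ^ (k + 1) * A.card) * (p ^ A.card * b) := by
  have hp0 := hp.1
  have hterm : ∀ S ∈ (subfaces m A).powerset,
      binomProb p (faces V k) (fun H => Q S ∧ A ⊆ H ∧ Disjoint (B S) H) ≤ p ^ A.card * b := by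
    intro S hS
    by_cases hQ : Q S
    · calc binomProb p (faces V k) (fun H => Q S ∧ A ⊆ H ∧ Disjoint (B S) H)
          ≤ binomProb p (faces V k) (fun H => A ⊆ H ∧ Disjoint (B S) H) :=
            binomProb_mono hp fun _ _ h => h.2
        _ ≤ p ^ A.card * (1 - p) ^ (B S).card := binomProb_subset_and_disjoint_le hp hA (hB S)
        _ ≤ p ^ A.card * b := by gcongr; exact hbound S (Finset.mem_powerset.1 hS) hQ
    · simp only [binomProb_eq_sum_filter, hQ, false_and, Finset.filter_false, Finset.sum_empty]
      positivity
  have hcard : (subfaces m A).card ≤ 2 ^ (k + 1) * A.card :=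
    (card_subfaces_le hA).trans_eq (mul_comm _ _)
  calc binomProb p (faces V k)
        (fun H => ∃ S ∈ (subfaces m A).powerset, Q S ∧ A ⊆ H ∧ Disjoint (B S) H)
      ≤ ∑ S ∈ (subfaces m A).powerset,
          binomProb p (faces V k) (fun H => Q S ∧ A ⊆ H ∧ Disjoint (B S) H) :=
        binomProb_exists_le hp _ _
    _ ≤ ∑ _S ∈ (subfaces m A).powerset, p ^ A.card * b := Finset.sum_le_sum hterm
    _ = 2 ^ (subfaces m A).card * (p ^ A.card * b) := by simp
    _ ≤ 2 ^ (2 ^ (k + 1) * A.card) * (p ^ A.card * b) := by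
        gcongr
        norm_num

lemma binomProb_exists_clusters_le (hp : p ∈ Set.Icc 0 1) {b : ℝ} (hb : 0 ≤ b)
    (Q : Finset (Finset V) → Prop) {B : Finset (Finset V) → Finset (Finset V)}
    (hB : ∀ S, B S ⊆ faces V k)
    (hbound : ∀ A ∈ clusters (FaceAdj (j + 1)) (faces V k) m, ∀ S ⊆ subfaces (j + 1) A, Q S →
      (1 - p) ^ (B S).card ≤ b) :
    binomProb p (faces V k) (fun H => ∃ A ∈ clusters (FaceAdj (j + 1)) (faces V k) m,
        ∃ S ∈ (subfaces (j + 1) A).powerset, Q S ∧ A ⊆ H ∧ Disjoint (B S) H) ≤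
      expectedClustersBound k j m (Fintype.card V) p * b := by
  have hp0 := hp.1
  have hterm : ∀ A ∈ clusters (FaceAdj (j + 1)) (faces V k) m, binomProb p (faces V k)
      (fun H => ∃ S ∈ (subfaces (j + 1) A).powerset, Q S ∧ A ⊆ H ∧ Disjoint (B S) H) ≤
        2 ^ (2 ^ (k + 1) * (m + 1)) * (p ^ (m + 1) * b) := by
    intro A hA
    obtain ⟨hAfaces, -, hAcard⟩ := mem_clusters.1 hA
    simpa only [hAcard] using
      binomProb_exists_powerset_subfaces_le hp hb hAfaces Q hB (hbound A hA)
  have hcard : ((clusters (FaceAdj (j + 1)) (faces V k) m).card : ℝ) ≤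
      (Fintype.card V : ℝ) ^ (k + 1) * (4 * (2 ^ (k + 1) * (Fintype.card V : ℝ) ^ (k - j))) ^ m :=
    by exact_mod_cast card_clusters_faces_le k j m
  have hone : (1 : ℝ) ≤ 4 * 2 ^ (k + 1) := by
    have := one_le_pow₀ (one_le_two : (1 : ℝ) ≤ 2) (n := k + 1)
    linarith
  refine ((binomProb_exists_le hp _ _).trans (Finset.sum_le_card_nsmul _ _ _ hterm)).trans ?_
  rw [nsmul_eq_mul]
  calc (clusters (FaceAdj (j + 1)) (faces V k) m).card *
        (2 ^ (2 ^ (k + 1) * (m + 1)) * (p ^ (m + 1) * b))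
      ≤ (Fintype.card V : ℝ) ^ (k + 1) *
          (4 * (2 ^ (k + 1) * (Fintype.card V : ℝ) ^ (k - j))) ^ m *
          (2 ^ (2 ^ (k + 1) * (m + 1)) * (p ^ (m + 1) * b)) := by gcongr
    _ = (4 * 2 ^ (k + 1)) ^ m * ((Fintype.card V : ℝ) ^ (k + 1) * p *
          (2 ^ 2 ^ (k + 1)) ^ (m + 1) * (p * (Fintype.card V : ℝ) ^ (k - j)) ^ m * b) := by
        rw [← mul_assoc 4, mul_pow (4 * 2 ^ (k + 1)), pow_mul (2 : ℝ), mul_pow p]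
        ring
    _ ≤ (4 * 2 ^ (k + 1)) ^ (m + 1) * ((Fintype.card V : ℝ) ^ (k + 1) * p *
          (2 ^ 2 ^ (k + 1)) ^ (m + 1) * (p * (Fintype.card V : ℝ) ^ (k - j)) ^ m * b) := by
        gcongr
        exact Nat.le_succ m
    _ = expectedClustersBound k j m (Fintype.card V) p * b := by
        rw [expectedClustersBound, clusterGrowth, mul_pow (4 * 2 ^ (k + 1))]
        ring

lemma le_card_isolatingFaces {A S : Finset (Finset V)} (hjk : j < k) (hA : A ⊆ faces V k)
    (hAM : A.card ≤ M) (hS : S ⊆ subfaces (j + 1) A) (hScard : k - j + 2 ≤ S.card) :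
    ((k - j + 2 : ℕ) : ℝ) * (Fintype.card V - (j + 1)).choose (k - j) -
        (2 ^ (k + 1) * M) ^ 2 * (Fintype.card V : ℝ) ^ (k - (j + 1)) ≤
      (isolatingFaces k S).card := by
  have hcount := card_mul_choose_le_card_isolatingFaces_add (k := k) (m := j + 1) (by omega)
    fun σ hσ => (mem_subfaces.1 (hS hσ)).1
  rw [Nat.add_sub_add_right] at hcount
  have hSM : S.card ≤ 2 ^ (k + 1) * M :=
    (Finset.card_le_card hS).trans ((card_subfaces_le hA).trans (by rw [mul_comm]; gcongr))
  have hnat : (k - j + 2) * (Fintype.card V - (j + 1)).choose (k - j) ≤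
      (isolatingFaces k S).card + (2 ^ (k + 1) * M) ^ 2 * Fintype.card V ^ (k - (j + 1)) :=
    (Nat.mul_le_mul_right _ hScard).trans (hcount.trans (by gcongr))
  rw [sub_le_iff_le_add]
  exact_mod_cast hnat

lemma card_mul_expansionRate_le {S : Finset (Finset V)} (hm : m ≤ k)
    (hS : Fintype.card V * S.card ≤
      (m + 1) * (supportIn Finset.univ (m + 1) (δ (indicator S))).card) :
    S.card * expansionRate k m (Fintype.card V) ≤ (nonCocycleFaces k m (indicator S)).card := by
  have hcount := card_mul_choose_le_card_facesContaining_mul (k := k) (m := m + 1) (by omega)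
    (S := supportIn Finset.univ (m + 1) (δ (indicator S)))
    fun σ hσ => (mem_supportIn_univ.1 hσ).1
  rw [← nonCocycleFaces_eq, Nat.add_sub_add_right] at hcount
  set Z := (Fintype.card V - (m + 1)).choose (k - m)
  have hnat : S.card * (Fintype.card V * Z) ≤
      (nonCocycleFaces k m (indicator S)).card * (2 ^ (k + 1) * (m + 1)) :=
    calc S.card * (Fintype.card V * Z) = Fintype.card V * S.card * Z := by ring
      _ ≤ (m + 1) * (supportIn Finset.univ (m + 1) (δ (indicator S))).card * Z := by gcongr
      _ = (m + 1) * ((supportIn Finset.univ (m + 1) (δ (indicator S))).card * Z) := by ring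
      _ ≤ (m + 1) * ((nonCocycleFaces k m (indicator S)).card * 2 ^ (k + 1)) := by gcongr
      _ = (nonCocycleFaces k m (indicator S)).card * (2 ^ (k + 1) * (m + 1)) := by ring
  rw [expansionRate, ← mul_div_assoc, div_le_iff₀ (by positivity)]
  exact_mod_cast hnat

lemma binomProb_not_smallClustersIsolate_le (hp : p ∈ Set.Icc 0 1) (hjk : j < k) (M : ℕ) :
    binomProb p (faces V k) (fun H => ¬ SmallClustersIsolate k j M H) ≤
      ∑ m ∈ Finset.range M, expectedClustersBound k j m (Fintype.card V) p *
        Real.exp (-(p * (((k - j + 2 : ℕ) : ℝ) * (Fintype.card V - (j + 1)).choose (k - j) -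
          (2 ^ (k + 1) * M) ^ 2 * (Fintype.card V : ℝ) ^ (k - (j + 1))))) := by
  have hevent : ∀ H ⊆ faces V k, ¬ SmallClustersIsolate k j M H → ∃ m ∈ Finset.range M,
      ∃ A ∈ clusters (FaceAdj (j + 1)) (faces V k) m, ∃ S ∈ (subfaces (j + 1) A).powerset,
        k - j + 2 ≤ S.card ∧ A ⊆ H ∧ Disjoint (isolatingFaces k S) H := by
    intro H hH h
    unfold SmallClustersIsolate at h
    push Not at h
    obtain ⟨A, hAH, hcluster, hAM, S, hS, hScard, hdisjoint⟩ := h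
    have hpos : 0 < A.card := Finset.card_pos.2 hcluster.nonempty
    exact ⟨A.card - 1, Finset.mem_range.2 (by omega), A,
      mem_clusters.2 ⟨hAH.trans hH, hcluster, by omega⟩, S, Finset.mem_powerset.2 hS, hScard,
      hAH, hdisjoint⟩
  refine (binomProb_mono hp hevent).trans ((binomProb_exists_le hp _ _).trans ?_)
  refine Finset.sum_le_sum fun m hm => ?_
  refine binomProb_exists_clusters_le hp (Real.exp_nonneg _) (fun S => k - j + 2 ≤ S.card)
    (fun S => Finset.filter_subset _ _) fun A hA S hS hScard => ?_
  obtain ⟨hAfaces, -, hAcard⟩ := mem_clusters.1 hA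
  refine (one_sub_pow_le_exp_neg_mul hp.2 _).trans (Real.exp_le_exp.2 (neg_le_neg ?_))
  exact mul_le_mul_of_nonneg_left
    (le_card_isolatingFaces hjk hAfaces (hAcard.trans_le (Finset.mem_range.1 hm)) hS hScard) hp.1

lemma binomProb_not_largeClustersExpand_le (hp : p ∈ Set.Icc 0 1) (hjk : j < k) (M : ℕ) :
    binomProb p (faces V k) (fun H => ¬ LargeClustersExpand k j M H) ≤
      ∑ m ∈ Finset.Ico M (faces V k).card, expectedClustersBound k j m (Fintype.card V) p *
        Real.exp (-(p * ((m + 1) * expansionRate k (j + 1) (Fintype.card V)))) := by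
  have hevent : ∀ H ⊆ faces V k, ¬ LargeClustersExpand k j M H →
      ∃ m ∈ Finset.Ico M (faces V k).card, ∃ A ∈ clusters (FaceAdj (j + 1)) (faces V k) m,
        ∃ S ∈ (subfaces (j + 1) A).powerset,
          (m + 1 ≤ S.card ∧ Fintype.card V * S.card ≤
            (j + 2) * (supportIn Finset.univ (j + 2) (δ (indicator S))).card) ∧
          A ⊆ H ∧ Disjoint (nonCocycleFaces k (j + 1) (indicator S)) H := by
    intro H hH h
    unfold LargeClustersExpand at h
    push Not at h
    obtain ⟨A, hAH, hcluster, hAM, S, hS, hScard, hexp, hdisjoint⟩ := h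
    have hpos : 0 < A.card := Finset.card_pos.2 hcluster.nonempty
    have hle := Finset.card_le_card (hAH.trans hH)
    exact ⟨A.card - 1, Finset.mem_Ico.2 ⟨by omega, by omega⟩, A,
      mem_clusters.2 ⟨hAH.trans hH, hcluster, by omega⟩, S, Finset.mem_powerset.2 hS,
      ⟨by omega, hexp⟩, hAH, hdisjoint⟩
  refine (binomProb_mono hp hevent).trans ((binomProb_exists_le hp _ _).trans ?_)
  refine Finset.sum_le_sum fun m _ => ?_
  refine binomProb_exists_clusters_le hp (Real.exp_nonneg _)
    (fun S => m + 1 ≤ S.card ∧ Fintype.card V * S.card ≤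
      (j + 2) * (supportIn Finset.univ (j + 2) (δ (indicator S))).card)
    (fun S => Finset.filter_subset _ _) ?_
  rintro A - S - ⟨hScard, hexp⟩
  refine (one_sub_pow_le_exp_neg_mul hp.2 _).trans (Real.exp_le_exp.2 (neg_le_neg ?_))
  refine mul_le_mul_of_nonneg_left (le_trans ?_ (card_mul_expansionRate_le hjk hexp)) hp.1
  refine mul_le_mul_of_nonneg_right (by exact_mod_cast hScard) ?_
  unfold expansionRate
  positivity

lemma exists_expanding_indicator {g : Finset V → ZMod 2}
    (hg : ¬ IsCocycleOn g m Finset.univ) :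
    ∃ S : Finset (Finset V), (∀ σ ∈ S, σ.card = m) ∧ S.Nonempty ∧
      Fintype.card V * S.card ≤
        (m + 1) * (supportIn Finset.univ (m + 1) (δ (indicator S))).card ∧
      ∀ k, nonCocycleFaces k m (indicator S) = nonCocycleFaces k m g := by
  let size (h : Finset V → ZMod 2) : ℕ := (supportIn Finset.univ m (g + δ h)).card
  set f := g + δ (Function.argmin size) with hf
  have hmin : ∀ h, (supportIn Finset.univ m f).card ≤ (supportIn Finset.univ m (f + δ h)).card :=
    fun h => by simpa [size, hf, add_assoc] using Function.argmin_le size (Function.argmin size + h)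
  have hδ : δ f = δ g := by rw [hf, map_add, fullCoboundary_fullCoboundary, add_zero]
  have hsupport : supportIn Finset.univ (m + 1) (δ (indicator (supportIn Finset.univ m f))) =
      supportIn Finset.univ (m + 1) (δ g) := by
    rw [supportIn_fullCoboundary_indicator_supportIn, hδ]
  refine ⟨supportIn Finset.univ m f, fun σ hσ => (mem_supportIn_univ.1 hσ).1, ?_, ?_, fun k => ?_⟩
  · rw [Finset.nonempty_iff_ne_empty]
    intro hempty
    obtain ⟨ρ, hρ, -⟩ := not_isCocycleOn_iff.1 hg
    have hzero : indicator (∅ : Finset (Finset V)) = 0 := by ext σ; simp [indicator]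
    rw [← hsupport, hempty, hzero, map_zero] at hρ
    exact (mem_supportIn_univ.1 hρ).2 rfl
  · rw [hsupport, ← hδ]
    exact card_mul_card_supportIn_le hmin
  · rw [nonCocycleFaces_eq, nonCocycleFaces_eq, hsupport]

lemma binomProb_card_nonCocycleFaces_inter_le (hp : p ∈ Set.Icc 0 1) (hm : m ≤ k)
    {S : Finset (Finset V)} (hne : S.Nonempty) (hS : Fintype.card V * S.card ≤
      (m + 1) * (supportIn Finset.univ (m + 1) (δ (indicator S))).card) :
    binomProb p (faces V k)
        (fun H => (nonCocycleFaces k m (indicator S) ∩ H).card ≤ Fintype.card V) ≤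
      (2 ^ Fintype.card V * Real.exp (-(p / 2 * expansionRate k m (Fintype.card V)))) ^ S.card := by
  obtain ⟨hp0, hp1⟩ := hp
  have hfactor : (1 - p / 2) ^ (nonCocycleFaces k m (indicator S)).card ≤
      Real.exp (-(p / 2 * expansionRate k m (Fintype.card V))) ^ S.card := by
    refine (one_sub_pow_le_exp_neg_mul (by linarith) _).trans ?_
    rw [← Real.exp_nat_mul, Real.exp_le_exp, mul_neg, neg_le_neg_iff, mul_left_comm]
    exact mul_le_mul_of_nonneg_left (card_mul_expansionRate_le hm hS) (by positivity)
  have htwo : (2 : ℝ) ^ Fintype.card V ≤ (2 ^ Fintype.card V) ^ S.card :=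
    le_self_pow₀ (one_le_pow₀ one_le_two) (Finset.card_pos.2 hne).ne'
  have hchernoff := binomProb_card_inter_le (U := faces V k) (p := p) ⟨hp0, hp1⟩
    (B := nonCocycleFaces k m (indicator S)) (Finset.filter_subset _ _) (Fintype.card V)
  rw [mul_pow]
  refine (Eq.le ?_).trans (hchernoff.trans (mul_le_mul htwo hfactor ?_ (by positivity)))
  · exact binomProb_congr fun H _ => by convert Iff.rfl
  · exact pow_nonneg (by linarith) _

lemma binomProb_not_hasCoboundaryExpansion_le (hp : p ∈ Set.Icc 0 1) (hjk : j ≤ k) :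
    binomProb p (faces V k) (fun H => ¬ HasCoboundaryExpansion j H) ≤
      Real.exp ((Fintype.card V : ℝ) ^ j * (2 ^ Fintype.card V *
        Real.exp (-(p / 2 * expansionRate k j (Fintype.card V))))) - 1 := by
  set x : ℝ := 2 ^ Fintype.card V * Real.exp (-(p / 2 * expansionRate k j (Fintype.card V)))
  have hx : 0 ≤ x := by positivity
  let J : Finset (Finset V) := Finset.powersetCard j Finset.univ
  let I : Finset (Finset (Finset V)) := (J.powerset.erase ∅).filter fun S =>
    Fintype.card V * S.card ≤ (j + 1) * (supportIn Finset.univ (j + 1) (δ (indicator S))).card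
  have hevent : ∀ H ⊆ faces V k, ¬ HasCoboundaryExpansion j H →
      ∃ S ∈ I, (nonCocycleFaces k j (indicator S) ∩ H).card ≤ Fintype.card V := by
    intro H _ h
    unfold HasCoboundaryExpansion at h
    push Not at h
    obtain ⟨g, hg, hcard⟩ := h
    obtain ⟨S, hScard, hne, hexp, hfaces⟩ := exists_expanding_indicator hg
    refine ⟨S, Finset.mem_filter.2 ⟨Finset.mem_erase.2 ⟨hne.ne_empty, ?_⟩, hexp⟩, ?_⟩
    · exact Finset.mem_powerset.2 fun σ hσ =>
        Finset.mem_powersetCard.2 ⟨Finset.subset_univ _, hScard σ hσ⟩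
    · rw [hfaces k]
      refine (Finset.card_le_card fun K hK => ?_).trans hcard
      obtain ⟨hKfaces, hKH⟩ := Finset.mem_inter.1 hK
      exact Finset.mem_filter.2 ⟨hKH, (Finset.mem_filter.1 hKfaces).2⟩
  have hterm : ∀ S ∈ I, binomProb p (faces V k)
      (fun H => (nonCocycleFaces k j (indicator S) ∩ H).card ≤ Fintype.card V) ≤ x ^ S.card := by
    intro S hS
    obtain ⟨hSJ, hexp⟩ := Finset.mem_filter.1 hS
    exact binomProb_card_nonCocycleFaces_inter_le hp hjk
      (Finset.nonempty_iff_ne_empty.2 (Finset.ne_of_mem_erase hSJ)) hexp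
  have hJ : (J.card : ℝ) ≤ (Fintype.card V : ℝ) ^ j := by
    rw [Finset.card_powersetCard, Finset.card_univ]
    exact_mod_cast Nat.choose_le_pow _ _
  calc binomProb p (faces V k) (fun H => ¬ HasCoboundaryExpansion j H)
      ≤ ∑ S ∈ I, binomProb p (faces V k)
          (fun H => (nonCocycleFaces k j (indicator S) ∩ H).card ≤ Fintype.card V) :=
        (binomProb_mono hp hevent).trans (binomProb_exists_le hp _ _)
    _ ≤ ∑ S ∈ I, x ^ S.card := Finset.sum_le_sum hterm
    _ ≤ ∑ S ∈ J.powerset.erase ∅, x ^ S.card :=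
        Finset.sum_le_sum_of_subset_of_nonneg (Finset.filter_subset _ _)
          fun S _ _ => pow_nonneg hx _
    _ ≤ Real.exp (J.card * x) - 1 := sum_pow_card_powerset_erase_empty_le J hx
    _ ≤ Real.exp ((Fintype.card V : ℝ) ^ j * x) - 1 := by gcongr

end FailureProbabilities

section LogarithmicAsymptotics

lemma tendsto_log_natCast_atTop : Tendsto (fun n : ℕ => Real.log n) atTop atTop :=
  Real.tendsto_log_atTop.comp tendsto_natCast_atTop_atTop

lemma tendsto_log_pow_mul_exp_neg_mul_log {ε : ℝ} (hε : 0 < ε) (r : ℕ) :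
    Tendsto (fun n : ℕ => Real.log n ^ r * Real.exp (-(ε * Real.log n))) atTop (nhds 0) := by
  simpa [Function.comp_def] using
    (tendsto_rpow_mul_exp_neg_mul_atTop_nhds_zero r ε hε).comp tendsto_log_natCast_atTop

lemma tendsto_log_pow_div_natCast (r : ℕ) :
    Tendsto (fun n : ℕ => Real.log n ^ r / n) atTop (nhds 0) :=
  Real.isLittleO_pow_log_id_atTop.tendsto_div_nhds_zero.comp tendsto_natCast_atTop_atTop

/-- The binomial coefficient `(n - r).choose e` relative to its leading term `n ^ e / e!`. -/
noncomputable def chooseRatio (r e n : ℕ) : ℝ :=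
  (n - r).choose e * e.factorial / (n : ℝ) ^ e

variable {r e n : ℕ}

lemma chooseRatio_le_one : chooseRatio r e n ≤ 1 := by
  refine div_le_one_of_le₀ ?_ (by positivity)
  calc ((n - r).choose e * e.factorial : ℝ)
      ≤ ((n - r : ℕ) : ℝ) ^ e := by
        rw [← le_div_iff₀ (by positivity)]
        exact Nat.choose_le_pow_div e (n - r)
    _ ≤ (n : ℝ) ^ e := by gcongr; exact Nat.sub_le n r

lemma one_sub_div_le_chooseRatio (hn : r + e < n) :
    1 - (e * (r + e) : ℝ) / n ≤ chooseRatio r e n := by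
  have hn0 : (0 : ℝ) < n := by exact_mod_cast (Nat.zero_le _).trans_lt hn
  have hle : ((r + e : ℕ) : ℝ) / n ≤ 1 := (div_le_one hn0).2 (by exact_mod_cast hn.le)
  have hchoose : ((n - (r + e) : ℕ) : ℝ) ^ e ≤ (n - r).choose e * e.factorial := by
    rw [← div_le_iff₀ (by positivity)]
    have hle : n - (r + e) ≤ n - r + 1 - e := by omega
    exact (div_le_div_of_nonneg_right (by exact_mod_cast Nat.pow_le_pow_left hle e)
      (by positivity)).trans (Nat.pow_le_choose e (n - r))
  rw [chooseRatio, le_div_iff₀ (by positivity)]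
  calc (1 - (e * (r + e) : ℝ) / n) * (n : ℝ) ^ e
      = (1 + e * -(((r + e : ℕ) : ℝ) / n)) * (n : ℝ) ^ e := by push_cast; ring
    _ ≤ (1 + -(((r + e : ℕ) : ℝ) / n)) ^ e * (n : ℝ) ^ e := by
        gcongr
        exact one_add_mul_le_pow (by linarith) e
    _ = ((n - (r + e) : ℕ) : ℝ) ^ e := by
        rw [← mul_pow, Nat.cast_sub hn.le]
        congr 1
        field_simp
        ring
    _ ≤ (n - r).choose e * e.factorial := hchoose

lemma tendsto_log_mul_one_sub_chooseRatio (r e : ℕ) :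
    Tendsto (fun n : ℕ => Real.log n * (1 - chooseRatio r e n)) atTop (nhds 0) := by
  have hbound := (tendsto_log_pow_div_natCast 1).mul_const (e * (r + e) : ℝ)
  rw [zero_mul] at hbound
  refine squeeze_zero' (Eventually.of_forall fun n => ?_) ?_ hbound
  · exact mul_nonneg (Real.log_natCast_nonneg n) (sub_nonneg.2 chooseRatio_le_one)
  · filter_upwards [eventually_gt_atTop (r + e)] with n hn
    rw [pow_one, div_mul_eq_mul_div, mul_div_assoc]
    have := one_sub_div_le_chooseRatio hn
    exact mul_le_mul_of_nonneg_left (by linarith) (Real.log_natCast_nonneg n)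

lemma tendsto_chooseRatio (r e : ℕ) : Tendsto (chooseRatio r e) atTop (nhds 1) := by
  have hlower : Tendsto (fun n : ℕ => 1 - (e * (r + e) : ℝ) / n) atTop (nhds 1) := by
    simpa using (tendsto_const_div_atTop_nhds_zero_nat (e * (r + e) : ℝ)).const_sub 1
  refine tendsto_of_tendsto_of_tendsto_of_le_of_le' hlower tendsto_const_nhds ?_
    (Eventually.of_forall fun _ => chooseRatio_le_one)
  filter_upwards [eventually_gt_atTop (r + e)] with n hn using one_sub_div_le_chooseRatio hn

lemma eventually_pow_div_le_choose (r e : ℕ) :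
    ∀ᶠ n : ℕ in atTop, (n : ℝ) ^ e / (2 * e.factorial) ≤ (n - r).choose e := by
  filter_upwards [(tendsto_chooseRatio r e).eventually_const_lt one_half_lt_one,
    eventually_gt_atTop 0] with n hratio hn
  rw [chooseRatio, lt_div_iff₀ (by positivity)] at hratio
  rw [div_le_iff₀ (by positivity)]
  linarith

end LogarithmicAsymptotics

section CriticalWindow

/-- The probability `p n`, rescaled so that it is of order `log n` in the critical window. -/
noncomputable def scaledProb (k j : ℕ) (p : ℕ → ℝ) (n : ℕ) : ℝ :=
  ((k - j + 1 : ℕ) : ℝ) * (p n * (n : ℝ) ^ (k - j)) / (k - j).factorial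

/-- The sequence `p` lies in the critical window for `H^j`, at position `c`. -/
def InCriticalWindow (k j : ℕ) (c : ℝ) (p : ℕ → ℝ) : Prop :=
  Tendsto (fun n : ℕ =>
      scaledProb k j p n - ((j + 1) * Real.log n + Real.log (Real.log n)))
    atTop (nhds c)

/-- The limit of `p n * n ^ (k - j) / log n` in the critical window. -/
noncomputable def windowConst (k j : ℕ) : ℝ :=
  (j + 1) * (k - j).factorial / (k - j + 1 : ℕ)

/-- The limit form `exp (-p * (n - j - 1).choose (k - j))` of the probability that a given simplex
of dimension `j` lies in no random face. -/
noncomputable def isolationFactor (k j n : ℕ) (p : ℝ) : ℝ :=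
  Real.exp (-(p * (n - (j + 1)).choose (k - j)))

lemma windowConst_pos (k j : ℕ) : 0 < windowConst k j := by
  unfold windowConst
  positivity

variable {k j : ℕ} {c : ℝ} {p : ℕ → ℝ}

namespace InCriticalWindow

lemma tendsto_scaledProb_div_log (h : InCriticalWindow k j c p) :
    Tendsto (fun n => scaledProb k j p n / Real.log n) atTop (nhds (j + 1)) := by
  have hloglog : Tendsto (fun n : ℕ => Real.log (Real.log n) / Real.log n) atTop (nhds 0) :=
    Real.isLittleO_log_id_atTop.tendsto_div_nhds_zero.comp tendsto_log_natCast_atTop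
  have hsum := ((h.div_atTop tendsto_log_natCast_atTop).add hloglog).const_add ((j : ℝ) + 1)
  simp only [add_zero] at hsum
  refine hsum.congr' ?_
  filter_upwards [tendsto_log_natCast_atTop.eventually_gt_atTop 0] with n hlog
  field_simp
  ring

lemma tendsto_mul_pow_div_log (h : InCriticalWindow k j c p) :
    Tendsto (fun n => p n * (n : ℝ) ^ (k - j) / Real.log n) atTop (nhds (windowConst k j)) := by
  have hscaled := h.tendsto_scaledProb_div_log.mul_const
    ((k - j).factorial / (k - j + 1 : ℕ) : ℝ)
  rw [← mul_div_assoc] at hscaled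
  refine hscaled.congr fun n => ?_
  unfold scaledProb
  field_simp

lemma eventually_le_mul_pow (h : InCriticalWindow k j c p) :
    ∀ᶠ n : ℕ in atTop, windowConst k j / 2 * Real.log n ≤ p n * (n : ℝ) ^ (k - j) := by
  filter_upwards [h.tendsto_mul_pow_div_log.eventually_const_lt
      (half_lt_self (windowConst_pos k j)),
    tendsto_log_natCast_atTop.eventually_gt_atTop 0] with n hlt hlog
  exact ((lt_div_iff₀ hlog).1 hlt).le

lemma eventually_mul_pow_le (h : InCriticalWindow k j c p) :
    ∀ᶠ n : ℕ in atTop, p n * (n : ℝ) ^ (k - j) ≤ 2 * windowConst k j * Real.log n := by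
  filter_upwards [h.tendsto_mul_pow_div_log.eventually_lt_const
      (lt_two_mul_self (windowConst_pos k j)),
    tendsto_log_natCast_atTop.eventually_gt_atTop 0] with n hlt hlog
  exact ((div_lt_iff₀ hlog).1 hlt).le

lemma eventually_pos (h : InCriticalWindow k j c p) : ∀ᶠ n in atTop, 0 < p n := by
  filter_upwards [h.eventually_le_mul_pow, tendsto_log_natCast_atTop.eventually_gt_atTop 0]
    with n hle hlog
  have hpos := (mul_pos (half_pos (windowConst_pos k j)) hlog).trans_le hle
  exact pos_of_mul_pos_left hpos (by positivity)

lemma tendsto_mul_pow_succ (h : InCriticalWindow k j c p) (hjk : j < k) (r : ℕ) :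
    Tendsto (fun n => p n * (n : ℝ) ^ (k - (j + 1)) * Real.log n ^ r) atTop (nhds 0) := by
  have hprod := h.tendsto_mul_pow_div_log.mul (tendsto_log_pow_div_natCast (r + 1))
  rw [mul_zero] at hprod
  refine hprod.congr' ?_
  filter_upwards [tendsto_log_natCast_atTop.eventually_gt_atTop 0, eventually_gt_atTop 0]
    with n hlog hn
  rw [show k - j = k - (j + 1) + 1 by omega]
  field_simp
  ring

lemma tendsto_mul_log_pow (h : InCriticalWindow k j c p) (hjk : j < k) (r : ℕ) :
    Tendsto (fun n => p n * Real.log n ^ r) atTop (nhds 0) := by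
  refine squeeze_zero' ?_ ?_ (h.tendsto_mul_pow_succ hjk r)
  · filter_upwards [h.eventually_pos] with n hp
    have := Real.log_natCast_nonneg n
    positivity
  · filter_upwards [h.eventually_pos, eventually_gt_atTop 0] with n hp hn
    have := Real.log_natCast_nonneg n
    gcongr
    exact le_mul_of_one_le_right hp.le (one_le_pow₀ (by exact_mod_cast hn))

lemma tendsto_zero (h : InCriticalWindow k j c p) (hjk : j < k) : Tendsto p atTop (nhds 0) := by
  simpa using h.tendsto_mul_log_pow hjk 0

lemma eventually_le_half (h : InCriticalWindow k j c p) (hjk : j < k) :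
    ∀ᶠ n in atTop, p n ≤ 1 / 2 :=
  (h.tendsto_zero hjk).eventually_le_const (by norm_num)

lemma eventually_mem_Icc (h : InCriticalWindow k j c p) (hjk : j < k) :
    ∀ᶠ n in atTop, p n ∈ Set.Icc 0 1 := by
  filter_upwards [h.eventually_pos, h.eventually_le_half hjk] with n hpos hhalf
  exact ⟨hpos.le, hhalf.trans (by norm_num)⟩

lemma tendsto_scaledProb_sub_mul_choose (h : InCriticalWindow k j c p) :
    Tendsto (fun n => scaledProb k j p n -
        ((k - j + 1 : ℕ) : ℝ) * (p n * (n - (j + 1)).choose (k - j)))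
      atTop (nhds 0) := by
  have hprod := h.tendsto_scaledProb_div_log.mul
    (tendsto_log_mul_one_sub_chooseRatio (j + 1) (k - j))
  rw [mul_zero] at hprod
  refine hprod.congr' ?_
  filter_upwards [tendsto_log_natCast_atTop.eventually_gt_atTop 0, eventually_gt_atTop 0]
    with n hlog hn
  unfold scaledProb chooseRatio
  field_simp

lemma tendsto_pow_mul_exp_neg_scaledProb (h : InCriticalWindow k j c p) (hjk : j ≤ k) :
    Tendsto (fun n : ℕ => (n : ℝ) ^ (k + 1) * p n * Real.exp (-scaledProb k j p n)) atTop
      (nhds (windowConst k j * Real.exp (-c))) := by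
  refine (h.tendsto_mul_pow_div_log.mul h.neg.rexp).congr' ?_
  filter_upwards [tendsto_log_natCast_atTop.eventually_gt_atTop 0, eventually_gt_atTop 0]
    with n hlog hn
  have hn0 : (0 : ℝ) < n := by exact_mod_cast hn
  have hexp : Real.exp ((j + 1) * Real.log n) = (n : ℝ) ^ (j + 1) := by
    rw [← Nat.cast_succ, Real.exp_nat_mul, Real.exp_log hn0]
  rw [neg_sub, Real.exp_sub, Real.exp_add, hexp, Real.exp_log hlog, Real.exp_neg,
    show k + 1 = k - j + (j + 1) by omega, pow_add (n : ℝ)]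
  field_simp
  ring

lemma tendsto_pow_mul_isolationFactor_pow (h : InCriticalWindow k j c p) (hjk : j ≤ k) :
    Tendsto (fun n : ℕ => (n : ℝ) ^ (k + 1) * p n * isolationFactor k j n (p n) ^ (k - j + 1)) atTop
      (nhds (windowConst k j * Real.exp (-c))) := by
  have hprod := (h.tendsto_pow_mul_exp_neg_scaledProb hjk).mul
    h.tendsto_scaledProb_sub_mul_choose.rexp
  rw [Real.exp_zero, mul_one] at hprod
  refine hprod.congr fun n => ?_
  rw [isolationFactor, mul_assoc _ (Real.exp _), ← Real.exp_add, ← Real.exp_nat_mul]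
  congr 2
  ring

lemma tendsto_isolationFactor_mul_log_pow (h : InCriticalWindow k j c p) (r : ℕ) :
    Tendsto (fun n : ℕ => isolationFactor k j n (p n) * Real.log n ^ r) atTop (nhds 0) := by
  set A := ((k - j + 1 : ℕ) : ℝ)
  have hA : 0 < A := by positivity
  have hprod := (tendsto_log_pow_mul_exp_neg_mul_log (show 0 < 1 / (2 * A) by positivity) r).mul
    (h.tendsto_scaledProb_sub_mul_choose.div_const A).rexp
  rw [zero_mul] at hprod
  refine squeeze_zero' (Eventually.of_forall fun n => ?_) ?_ hprod
  · exact mul_nonneg (Real.exp_nonneg _) (pow_nonneg (Real.log_natCast_nonneg n) r)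
  · have hhalf : (1 / 2 : ℝ) < j + 1 := by
      have := Nat.cast_nonneg (α := ℝ) j
      linarith
    filter_upwards [h.tendsto_scaledProb_div_log.eventually_const_lt hhalf,
      tendsto_log_natCast_atTop.eventually_gt_atTop 0] with n hlt hlog
    rw [lt_div_iff₀ hlog] at hlt
    rw [mul_assoc, ← Real.exp_add, mul_comm, isolationFactor]
    gcongr
    calc -(p n * (n - (j + 1)).choose (k - j))
        = -(scaledProb k j p n / A) +
            (scaledProb k j p n - A * (p n * (n - (j + 1)).choose (k - j))) / A := by
          field_simp
          ring
      _ ≤ -(1 / 2 * Real.log n / A) +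
            (scaledProb k j p n - A * (p n * (n - (j + 1)).choose (k - j))) / A := by
          gcongr
      _ = -(1 / (2 * A) * Real.log n) +
            (scaledProb k j p n - A * (p n * (n - (j + 1)).choose (k - j))) / A := by
          field_simp

lemma tendsto_isolationFactor (h : InCriticalWindow k j c p) :
    Tendsto (fun n => isolationFactor k j n (p n)) atTop (nhds 0) := by
  simpa using h.tendsto_isolationFactor_mul_log_pow 0

lemma windowConst_mul_exp_div (hjk : j ≤ k) (c : ℝ) :
    windowConst k j * Real.exp (-c) * ((k + 1).choose j / (k + 1).factorial) = lamj k j c := by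
  have hchoose : ((k + 1).choose j : ℝ) ≠ 0 := by
    exact_mod_cast (Nat.choose_pos (hjk.trans k.le_succ)).ne'
  have hfactorial : ((k + 1).factorial : ℝ) =
      (k + 1).choose j * j.factorial * (((k - j + 1 : ℕ) : ℝ) * (k - j).factorial) := by
    have := Nat.choose_mul_factorial_mul_factorial (hjk.trans k.le_succ)
    rw [Nat.succ_sub hjk, Nat.factorial_succ] at this
    exact_mod_cast this.symm
  rw [hfactorial, windowConst, lamj]
  field_simp

/-- The main term of the expected number of copies of `M_j^-`. -/
lemma tendsto_card_flags_mul (h : InCriticalWindow k j c p) (hjk : j ≤ k) :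
    Tendsto (fun n : ℕ => ((n.choose (k + 1) * (k + 1).choose j : ℕ) : ℝ) *
      (p n * isolationFactor k j n (p n) ^ (k - j + 1))) atTop (nhds (lamj k j c)) := by
  have hprod := ((tendsto_chooseRatio 0 (k + 1)).mul
    (h.tendsto_pow_mul_isolationFactor_pow hjk)).mul_const
      ((k + 1).choose j / (k + 1).factorial : ℝ)
  rw [one_mul, windowConst_mul_exp_div hjk] at hprod
  refine hprod.congr' ?_
  filter_upwards [eventually_gt_atTop 0] with n hn
  rw [chooseRatio, Nat.sub_zero]
  push_cast
  field_simp

end InCriticalWindow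

end CriticalWindow

section ExpansionInCriticalWindow

variable {k j m n : ℕ} {c : ℝ} {p : ℕ → ℝ}

/-- The constant in the lower bound for `expansionRate` by `n ^ (k - m + 1)`. -/
noncomputable def expansionConst (k m : ℕ) : ℝ :=
  1 / (2 * (k - m).factorial * (2 ^ (k + 1) * (m + 1)))

lemma expansionConst_pos (k m : ℕ) : 0 < expansionConst k m := by
  unfold expansionConst
  positivity

lemma eventually_le_expansionRate (k m : ℕ) :
    ∀ᶠ n : ℕ in atTop, expansionConst k m * (n : ℝ) ^ (k - m + 1) ≤ expansionRate k m n := by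
  filter_upwards [eventually_pow_div_le_choose (m + 1) (k - m)] with n hchoose
  calc expansionConst k m * (n : ℝ) ^ (k - m + 1)
      = n * ((n : ℝ) ^ (k - m) / (2 * (k - m).factorial)) / (2 ^ (k + 1) * (m + 1)) := by
        rw [expansionConst]
        field_simp
        ring
    _ ≤ expansionRate k m n := by
        rw [expansionRate]
        gcongr

lemma tendsto_pow_mul_log_mul_exp_pow {C ε : ℝ} {d M : ℕ} (hC : 0 ≤ C)
    (hM : d + 1 ≤ ε * (M + 1)) :
    Tendsto (fun n : ℕ =>
      (n : ℝ) ^ d * (C * (Real.log n * Real.exp (-(ε * Real.log n)))) ^ (M + 1))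
      atTop (nhds 0) := by
  have hbound := (tendsto_log_pow_mul_exp_neg_mul_log one_pos (M + 1)).const_mul (C ^ (M + 1))
  rw [mul_zero] at hbound
  refine squeeze_zero' (Eventually.of_forall fun n => ?_) ?_ hbound
  · have := Real.log_natCast_nonneg n
    positivity
  · filter_upwards [eventually_gt_atTop 0] with n hn
    have := Real.log_natCast_nonneg n
    have hpow : (n : ℝ) ^ d = Real.exp (d * Real.log n) := by
      rw [Real.exp_nat_mul, Real.exp_log (by exact_mod_cast hn)]
    calc (n : ℝ) ^ d * (C * (Real.log n * Real.exp (-(ε * Real.log n)))) ^ (M + 1)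
        = C ^ (M + 1) * (Real.log n ^ (M + 1) *
            Real.exp (d * Real.log n - ε * (M + 1) * Real.log n)) := by
          rw [hpow, mul_pow, mul_pow, ← Real.exp_nat_mul, sub_eq_add_neg, Real.exp_add]
          push_cast
          ring_nf
      _ ≤ C ^ (M + 1) * (Real.log n ^ (M + 1) * Real.exp (-(1 * Real.log n))) := by
          gcongr
          nlinarith

lemma clusterGrowth_pos (k : ℕ) : 0 < clusterGrowth k := by
  unfold clusterGrowth
  positivity

lemma expectedClustersBound_mul_exp_le {p : ℝ} (hp : 0 ≤ p) (hn : 0 < n) (r : ℝ) :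
    expectedClustersBound k j m n p * Real.exp (-(p * ((m + 1) * r))) ≤
      (n : ℝ) ^ (k + 1) *
        (clusterGrowth k * (p * (n : ℝ) ^ (k - j) * Real.exp (-(p * r)))) ^ (m + 1) := by
  have hpow : p ≤ p * (n : ℝ) ^ (k - j) :=
    le_mul_of_one_le_right hp (one_le_pow₀ (by exact_mod_cast hn))
  have hexp : Real.exp (-(p * ((m + 1) * r))) = Real.exp (-(p * r)) ^ (m + 1) := by
    rw [← Real.exp_nat_mul]
    push_cast
    ring_nf
  have hgrowth := (clusterGrowth_pos k).le
  rw [expectedClustersBound, hexp]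
  calc (n : ℝ) ^ (k + 1) * p * clusterGrowth k ^ (m + 1) * (p * (n : ℝ) ^ (k - j)) ^ m *
        Real.exp (-(p * r)) ^ (m + 1)
      ≤ (n : ℝ) ^ (k + 1) * (p * (n : ℝ) ^ (k - j)) * clusterGrowth k ^ (m + 1) *
        (p * (n : ℝ) ^ (k - j)) ^ m * Real.exp (-(p * r)) ^ (m + 1) := by gcongr
    _ = (n : ℝ) ^ (k + 1) *
        (clusterGrowth k * (p * (n : ℝ) ^ (k - j) * Real.exp (-(p * r)))) ^ (m + 1) := by ring

namespace InCriticalWindow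

lemma eventually_two_mul_le_mul_expansionRate (h : InCriticalWindow k j c p) :
    ∀ᶠ n : ℕ in atTop, 2 * (n : ℝ) ≤ p n / 2 * expansionRate k j n := by
  have hconst : 0 < expansionConst k j / 2 * (windowConst k j / 2) :=
    mul_pos (half_pos (expansionConst_pos k j)) (half_pos (windowConst_pos k j))
  filter_upwards [h.eventually_pos, h.eventually_le_mul_pow, eventually_le_expansionRate k j,
    (tendsto_log_natCast_atTop.const_mul_atTop hconst).eventually_ge_atTop 2]
    with n hp hwindow hrate hlog
  have hconst := expansionConst_pos k j
  calc 2 * (n : ℝ)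
      ≤ expansionConst k j / 2 * (windowConst k j / 2) * Real.log n * n := by gcongr
    _ = expansionConst k j / 2 * (windowConst k j / 2 * Real.log n) * n := by ring
    _ ≤ expansionConst k j / 2 * (p n * (n : ℝ) ^ (k - j)) * n := by gcongr
    _ = p n / 2 * (expansionConst k j * (n : ℝ) ^ (k - j + 1)) := by ring
    _ ≤ p n / 2 * expansionRate k j n := by gcongr

lemma tendsto_binomProb_not_hasCoboundaryExpansion (h : InCriticalWindow k j c p) (hjk : j < k) :
    Tendsto (fun n => binomProb (p n) (faces (Fin n) k) fun H => ¬ HasCoboundaryExpansion j H)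
      atTop (nhds 0) := by
  have hbound : Tendsto (fun n : ℕ => Real.exp ((n : ℝ) ^ j * Real.exp (-(n : ℝ))) - 1) atTop
      (nhds 0) := by
    simpa using (((Real.tendsto_pow_mul_exp_neg_atTop_nhds_zero j).comp
      tendsto_natCast_atTop_atTop).rexp).sub_const 1
  refine squeeze_zero' ?_ ?_ hbound
  · filter_upwards [h.eventually_mem_Icc hjk] with n hp using binomProb_nonneg hp _
  · filter_upwards [h.eventually_mem_Icc hjk, h.eventually_two_mul_le_mul_expansionRate]
      with n hp hrate
    refine (binomProb_not_hasCoboundaryExpansion_le hp hjk.le).trans ?_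
    rw [Fintype.card_fin]
    gcongr
    calc (2 : ℝ) ^ n * Real.exp (-(p n / 2 * expansionRate k j n))
        ≤ Real.exp 1 ^ n * Real.exp (-(2 * n)) := by
          gcongr
          linarith [Real.add_one_le_exp 1]
      _ = Real.exp (-(n : ℝ)) := by
          rw [← Real.exp_nat_mul, ← Real.exp_add]
          ring_nf

lemma tendsto_expectedClustersBound_mul_exp (h : InCriticalWindow k j c p) (hjk : j < k)
    (m : ℕ) (a : ℝ) :
    Tendsto (fun n => expectedClustersBound k j m n (p n) *
        Real.exp (-(p n * (((k - j + 2 : ℕ) : ℝ) * (n - (j + 1)).choose (k - j) -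
          a * (n : ℝ) ^ (k - (j + 1)))))) atTop (nhds 0) := by
  have hprod := (((h.tendsto_pow_mul_isolationFactor_pow hjk.le).mul
    ((h.tendsto_mul_pow_div_log.pow m).mul (h.tendsto_isolationFactor_mul_log_pow m))).mul_const
    (clusterGrowth k ^ (m + 1))).mul ((h.tendsto_mul_pow_succ hjk 0).const_mul a).rexp
  simp only [mul_zero, zero_mul, pow_zero, mul_one] at hprod
  refine hprod.congr' ?_
  filter_upwards [tendsto_log_natCast_atTop.eventually_gt_atTop 0] with n hlog
  have hexp : Real.exp (-(p n * (((k - j + 2 : ℕ) : ℝ) * (n - (j + 1)).choose (k - j) -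
        a * (n : ℝ) ^ (k - (j + 1))))) =
      isolationFactor k j n (p n) ^ (k - j + 1) * isolationFactor k j n (p n) *
        Real.exp (a * (p n * (n : ℝ) ^ (k - (j + 1)))) := by
    rw [← pow_succ, isolationFactor, ← Real.exp_nat_mul, ← Real.exp_add]
    congr 1
    push_cast
    ring
  rw [hexp, expectedClustersBound, div_pow]
  field_simp

lemma tendsto_binomProb_not_smallClustersIsolate (h : InCriticalWindow k j c p) (hjk : j < k)
    (M : ℕ) :
    Tendsto (fun n => binomProb (p n) (faces (Fin n) k) fun H => ¬ SmallClustersIsolate k j M H)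
      atTop (nhds 0) := by
  have hbound := tendsto_finsetSum (Finset.range M) fun m _ =>
    h.tendsto_expectedClustersBound_mul_exp hjk m ((2 ^ (k + 1) * M) ^ 2)
  rw [Finset.sum_const_zero] at hbound
  refine squeeze_zero' ?_ ?_ hbound
  · filter_upwards [h.eventually_mem_Icc hjk] with n hp using binomProb_nonneg hp _
  · filter_upwards [h.eventually_mem_Icc hjk] with n hp
    simpa only [Fintype.card_fin] using
      binomProb_not_smallClustersIsolate_le (V := Fin n) hp hjk M

lemma exists_eventually_mul_log_le_mul_expansionRate (h : InCriticalWindow k j c p)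
    (hjk : j < k) :
    ∃ ε > 0, ∀ᶠ n : ℕ in atTop, ε * Real.log n ≤ p n * expansionRate k (j + 1) n := by
  have hconst := expansionConst_pos k (j + 1)
  refine ⟨expansionConst k (j + 1) * (windowConst k j / 2),
    mul_pos hconst (half_pos (windowConst_pos k j)), ?_⟩
  filter_upwards [h.eventually_pos, h.eventually_le_mul_pow,
    eventually_le_expansionRate k (j + 1)] with n hp hwindow hrate
  rw [show k - (j + 1) + 1 = k - j by omega] at hrate
  calc expansionConst k (j + 1) * (windowConst k j / 2) * Real.log n
      = expansionConst k (j + 1) * (windowConst k j / 2 * Real.log n) := mul_assoc _ _ _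
    _ ≤ expansionConst k (j + 1) * (p n * (n : ℝ) ^ (k - j)) := by gcongr
    _ = p n * (expansionConst k (j + 1) * (n : ℝ) ^ (k - j)) := by ring
    _ ≤ p n * expansionRate k (j + 1) n := by gcongr

lemma sum_expectedClustersBound_mul_exp_le {p q r : ℝ} {M : ℕ} {I : Finset ℕ} (hp : 0 ≤ p)
    (hn : 0 < n) (hq : clusterGrowth k * (p * (n : ℝ) ^ (k - j) * Real.exp (-(p * r))) ≤ q)
    (hq1 : q ≤ 1) (hM : ∀ m ∈ I, M ≤ m) :
    ∑ m ∈ I, expectedClustersBound k j m n p * Real.exp (-(p * ((m + 1) * r))) ≤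
      I.card * ((n : ℝ) ^ (k + 1) * q ^ (M + 1)) := by
  rw [← nsmul_eq_mul]
  refine Finset.sum_le_card_nsmul _ _ _ fun m hm =>
    (expectedClustersBound_mul_exp_le hp hn r).trans ?_
  have hnonneg : 0 ≤ clusterGrowth k * (p * (n : ℝ) ^ (k - j) * Real.exp (-(p * r))) :=
    mul_nonneg (clusterGrowth_pos k).le (by positivity)
  gcongr
  calc (clusterGrowth k * (p * (n : ℝ) ^ (k - j) * Real.exp (-(p * r)))) ^ (m + 1)
      ≤ q ^ (m + 1) := by gcongr
    _ ≤ q ^ (M + 1) :=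
        pow_le_pow_of_le_one (hnonneg.trans hq) hq1 (Nat.succ_le_succ (hM m hm))

lemma exists_eventually_clusterGrowth_mul_exp_le (h : InCriticalWindow k j c p) (hjk : j < k) :
    ∃ C ε : ℝ, 0 ≤ C ∧ 0 < ε ∧ ∀ᶠ n : ℕ in atTop,
      clusterGrowth k *
          (p n * (n : ℝ) ^ (k - j) * Real.exp (-(p n * expansionRate k (j + 1) n))) ≤
        C * (Real.log n * Real.exp (-(ε * Real.log n))) := by
  obtain ⟨ε, hε, hrate⟩ := h.exists_eventually_mul_log_le_mul_expansionRate hjk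
  have hgrowth := (clusterGrowth_pos k).le
  have hconst := (windowConst_pos k j).le
  refine ⟨clusterGrowth k * (2 * windowConst k j), ε, by positivity, hε, ?_⟩
  filter_upwards [h.eventually_mul_pow_le, hrate] with n hwindow hrate
  have := Real.log_natCast_nonneg n
  rw [mul_assoc (clusterGrowth k), ← mul_assoc (2 * windowConst k j)]
  gcongr

lemma exists_tendsto_binomProb_not_largeClustersExpand (h : InCriticalWindow k j c p)
    (hjk : j < k) :
    ∃ M, 1 ≤ M ∧ Tendsto (fun n =>
      binomProb (p n) (faces (Fin n) k) fun H => ¬ LargeClustersExpand k j M H)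
      atTop (nhds 0) := by
  obtain ⟨C, ε, hC, hε, hgrowth⟩ := h.exists_eventually_clusterGrowth_mul_exp_le hjk
  obtain ⟨M, hM⟩ := exists_nat_ge ((2 * (k + 1) + 1) / ε)
  rw [div_le_iff₀' hε] at hM
  have hsmall := (tendsto_log_pow_mul_exp_neg_mul_log hε 1).const_mul C
  simp only [pow_one, mul_zero] at hsmall
  have hbound := tendsto_pow_mul_log_mul_exp_pow (d := 2 * (k + 1)) (M := M + 1) (ε := ε) hC
    (by push_cast; nlinarith)
  refine ⟨M + 1, M.succ_pos, squeeze_zero' ?_ ?_ hbound⟩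
  · filter_upwards [h.eventually_mem_Icc hjk] with n hp using binomProb_nonneg hp _
  · filter_upwards [h.eventually_mem_Icc hjk, hgrowth, hsmall.eventually_le_const one_pos,
      eventually_gt_atTop 0] with n hp hgrowth hsmall hn
    have hcard : ((Finset.Ico (M + 1) (faces (Fin n) k).card).card : ℝ) ≤ (n : ℝ) ^ (k + 1) := by
      rw [Nat.card_Ico, card_faces, Fintype.card_fin]
      exact_mod_cast (Nat.sub_le _ _).trans (Nat.choose_le_pow _ _)
    have := Real.log_natCast_nonneg n
    refine (binomProb_not_largeClustersExpand_le hp hjk (M + 1)).trans ?_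
    rw [Fintype.card_fin]
    refine (sum_expectedClustersBound_mul_exp_le hp.1 hn hgrowth hsmall
      fun m hm => (Finset.mem_Ico.1 hm).1).trans ?_
    rw [two_mul, pow_add _ (k + 1), mul_assoc]
    exact mul_le_mul_of_nonneg_right hcard (by positivity)

end InCriticalWindow

end ExpansionInCriticalWindow

section PairwiseCounting

variable {α : Type*}

lemma card_filter_powersetCard_pair_subset_le [DecidableEq α] (X : Finset α) (r : ℕ) {a b : α}
    (ha : a ∈ X) (hb : b ∈ X) (hab : a ≠ b) :
    ((X.powersetCard r).filter ({a, b} ⊆ ·)).card ≤ X.card ^ (r - 2) := by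
  obtain hr | hr := le_or_gt 2 r
  · rw [Finset.card_filter_powersetCard_subset _ _ _
      (Finset.insert_subset ha (Finset.singleton_subset_iff.2 hb))
      ((Finset.card_pair hab).trans_le hr), Finset.card_pair hab]
    exact (Nat.choose_le_pow _ _).trans (Nat.pow_le_pow_left (Nat.sub_le _ _) _)
  · rw [Finset.filter_false_of_mem, Finset.card_empty]
    · exact Nat.zero_le _
    · intro T hT hsub
      have hcard := Finset.card_le_card hsub
      rw [Finset.card_pair hab, (Finset.mem_powersetCard.1 hT).2] at hcard
      exact hr.not_ge hcard

lemma card_filter_not_pairwise_le {R : α → α → Prop} {X : Finset α} {d : ℕ}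
    (hd : ∀ a ∈ X, (X.filter (¬ R a ·)).card ≤ d) (r : ℕ) :
    ((X.powersetCard r).filter fun T : Finset α => ¬ (T : Set α).Pairwise R).card ≤
      r * (d * X.card ^ (r - 1)) := by
  obtain hr | hr := lt_or_ge r 2
  · rw [Finset.filter_false_of_mem, Finset.card_empty]
    · exact Nat.zero_le _
    · intro T hT hnot
      have hcard := (Finset.mem_powersetCard.1 hT).2
      refine hnot fun a ha b hb hab => absurd ?_ hab
      exact Finset.card_le_one.1 (by omega) a ha b hb
  · have hcover : ((X.powersetCard r).filter fun T : Finset α => ¬ (T : Set α).Pairwise R) ⊆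
        X.biUnion fun a => (X.filter fun b => ¬ R a b ∧ a ≠ b).biUnion fun b =>
          (X.powersetCard r).filter ({a, b} ⊆ ·) := by
      intro T hT
      obtain ⟨hT, hnot⟩ := Finset.mem_filter.1 hT
      obtain ⟨a, ha, b, hb, hab, hR⟩ : ∃ a ∈ T, ∃ b ∈ T, a ≠ b ∧ ¬ R a b := by
        simpa [Set.Pairwise] using hnot
      have hTX := (Finset.mem_powersetCard.1 hT).1
      exact Finset.mem_biUnion.2 ⟨a, hTX ha, Finset.mem_biUnion.2 ⟨b,
        Finset.mem_filter.2 ⟨hTX hb, hR, hab⟩, Finset.mem_filter.2 ⟨hT,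
          Finset.insert_subset ha (Finset.singleton_subset_iff.2 hb)⟩⟩⟩
    calc _ ≤ X.card * (d * X.card ^ (r - 2)) := by
          refine (Finset.card_le_card hcover).trans
            (Finset.card_biUnion_le_card_mul _ _ _ fun a ha => ?_)
          refine (Finset.card_biUnion_le_card_mul _ _ (X.card ^ (r - 2)) fun b hb => ?_).trans
            (Nat.mul_le_mul_right _ ((Finset.card_le_card ?_).trans (hd a ha)))
          · obtain ⟨hb, -, hab⟩ := Finset.mem_filter.1 hb
            exact card_filter_powersetCard_pair_subset_le X r ha hb hab
          · exact Finset.monotone_filter_right X fun b _ hb => hb.1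
      _ = d * X.card ^ (r - 1) := by
          rw [mul_left_comm, ← pow_succ', show r - 2 + 1 = r - 1 by omega]
      _ ≤ r * (d * X.card ^ (r - 1)) := Nat.le_mul_of_pos_left _ (by omega)

end PairwiseCounting

section JointCopies

/-- Every member of `T` is a copy of `M_j^-` in the complex generated by `H`. -/
def AreMinusCopies (H : Finset (Finset V)) (j : ℕ) (T : Finset (Finset V × Finset V)) : Prop :=
  ∀ a ∈ T, IsMinusCopy H j a.1 a.2

/-- The `k`-simplices of the flags in `T`. -/
noncomputable def bases (T : Finset (Finset V × Finset V)) : Finset (Finset V) :=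
  T.image Prod.fst

/-- The petals of the flags in `T`. -/
noncomputable def allPetals (T : Finset (Finset V × Finset V)) : Finset (Finset V) :=
  T.biUnion fun a => petals a.1 a.2

variable {k j r : ℕ} {T : Finset (Finset V × Finset V)} {H : Finset (Finset V)}

lemma mem_bases {K : Finset V} : K ∈ bases T ↔ ∃ a ∈ T, a.1 = K := Finset.mem_image

lemma mem_allPetals {P : Finset V} : P ∈ allPetals T ↔ ∃ a ∈ T, P ∈ petals a.1 a.2 :=
  Finset.mem_biUnion

lemma card_bases_le (T : Finset (Finset V × Finset V)) : (bases T).card ≤ T.card :=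
  Finset.card_image_le

/-- No petal belongs to two bases, because its only `k`-simplex is the base of its flag. -/
lemma AreMinusCopies.card_allPetals (h : AreMinusCopies H j T) :
    (allPetals T).card = ∑ K ∈ bases T, (allPetals (T.filter fun a => a.1 = K)).card := by
  have hunion : allPetals T = (bases T).biUnion fun K => allPetals (T.filter fun a => a.1 = K) := by
    ext P
    simp only [mem_allPetals, Finset.mem_biUnion, mem_bases, Finset.mem_filter]
    exact ⟨fun ⟨a, ha, hP⟩ => ⟨a.1, ⟨a, ha, rfl⟩, a, ⟨ha, rfl⟩, hP⟩,
      fun ⟨_, _, a, ⟨ha, _⟩, hP⟩ => ⟨a, ha, hP⟩⟩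
  rw [hunion, Finset.card_biUnion]
  intro K _ K' _ hne
  refine Finset.disjoint_left.2 fun P hP hP' => hne ?_
  obtain ⟨a, ha, hPa⟩ := mem_allPetals.1 hP
  obtain ⟨b, hb, hPb⟩ := mem_allPetals.1 hP'
  obtain ⟨haT, rfl⟩ := Finset.mem_filter.1 ha
  obtain ⟨hbT, rfl⟩ := Finset.mem_filter.1 hb
  exact ((h a haT).2.2.2 P hPa _ (h b hbT).1 (subset_of_mem_petals (h b hbT).2.1 hPb)).symm

lemma AreMinusCopies.bases_subset (h : AreMinusCopies H j T) : bases T ⊆ H := by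
  intro K hK
  obtain ⟨a, ha, rfl⟩ := mem_bases.1 hK
  exact (h a ha).1

variable [Fintype V]

lemma card_of_mem_allPetals (hT : T ⊆ flags V k j) {P : Finset V} (hP : P ∈ allPetals T) :
    P.card = j + 1 := by
  obtain ⟨a, ha, hP⟩ := mem_allPetals.1 hP
  rw [card_of_mem_petals hP, (mem_flags.1 (hT ha)).2.1]

lemma card_allPetals_le (hjk : j ≤ k) (hT : T ⊆ flags V k j) :
    (allPetals T).card ≤ T.card * (k - j + 1) :=
  Finset.card_biUnion_le_card_mul _ _ _ fun _ ha => (card_petals_of_mem_flags hjk (hT ha)).le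

lemma bases_subset_faces (hT : T ⊆ flags V k j) : bases T ⊆ faces V k := by
  intro K hK
  obtain ⟨a, ha, rfl⟩ := mem_bases.1 hK
  exact mem_faces.2 (mem_flags.1 (hT ha)).1

lemma card_petals_le_card_allPetals_filter (hjk : j ≤ k) (hT : T ⊆ flags V k j) {K : Finset V}
    (hK : K ∈ bases T) : k - j + 1 ≤ (allPetals (T.filter fun a => a.1 = K)).card := by
  obtain ⟨a, ha, rfl⟩ := mem_bases.1 hK
  rw [← card_petals_of_mem_flags hjk (hT ha)]
  exact Finset.card_le_card fun P hP =>
    mem_allPetals.2 ⟨a, Finset.mem_filter.2 ⟨ha, rfl⟩, hP⟩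

lemma AreMinusCopies.card_bases_mul_le (h : AreMinusCopies H j T) (hjk : j ≤ k)
    (hT : T ⊆ flags V k j) : (bases T).card * (k - j + 1) ≤ (allPetals T).card := by
  rw [h.card_allPetals, ← smul_eq_mul]
  exact Finset.card_nsmul_le_sum _ _ _ fun K hK =>
    card_petals_le_card_allPetals_filter hjk hT hK

lemma AreMinusCopies.card_bases_mul_lt (h : AreMinusCopies H j T) (hjk : j < k)
    (hT : T ⊆ flags V k j) (hlt : (bases T).card < T.card) :
    (bases T).card * (k - j + 1) < (allPetals T).card := by
  obtain ⟨⟨K, C⟩, ha, ⟨K', C'⟩, hb, hne, rfl : K = K'⟩ :=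
    Finset.exists_ne_map_eq_of_card_lt_of_maps_to hlt
      fun a ha => Finset.mem_coe.2 (mem_bases.2 ⟨a, ha, rfl⟩)
  rw [h.card_allPetals, ← smul_eq_mul, ← Finset.sum_const]
  refine Finset.sum_lt_sum (fun K hK => card_petals_le_card_allPetals_filter hjk.le hT hK)
    ⟨K, mem_bases.2 ⟨_, ha, rfl⟩, ?_⟩
  have hlt_union := card_petals_lt_card_petals_union hjk (hT ha) (hT hb)
    fun heq => hne (by rw [heq])
  refine hlt_union.trans_le (Finset.card_le_card (Finset.union_subset ?_ ?_))
  · exact fun P hP => mem_allPetals.2 ⟨_, Finset.mem_filter.2 ⟨ha, rfl⟩, hP⟩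
  · exact fun P hP => mem_allPetals.2 ⟨_, Finset.mem_filter.2 ⟨hb, rfl⟩, hP⟩

lemma AreMinusCopies.disjoint_isolatingFaces_sdiff (h : AreMinusCopies H j T) :
    Disjoint (isolatingFaces k (allPetals T) \ bases T) H := by
  refine Finset.disjoint_left.2 fun K' hK' hH => ?_
  obtain ⟨hiso, hbase⟩ := Finset.mem_sdiff.1 hK'
  have hone : ((allPetals T).filter (· ⊆ K')).card = 1 := (Finset.mem_filter.1 hiso).2
  obtain ⟨P, hP⟩ := Finset.card_pos.1 (hone ▸ Nat.one_pos)
  obtain ⟨hP, hPK'⟩ := Finset.mem_filter.1 hP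
  obtain ⟨a, ha, hP⟩ := mem_allPetals.1 hP
  exact hbase (mem_bases.2 ⟨a, ha, ((h a ha).2.2.2 P hP K' hH hPK').symm⟩)

end JointCopies

section FactorialMoments

variable [Fintype V] {k j r : ℕ} {p : ℝ} {T : Finset (Finset V × Finset V)}

/-- The asymptotic form of the probability that a given flag is a copy of `M_j^-`. -/
noncomputable def copyProb (k j n : ℕ) (p : ℝ) : ℝ :=
  p * isolationFactor k j n p ^ (k - j + 1)

/-- A lower bound for the probability that a given flag is a copy of `M_j^-`: the base is a face,
and no other `(k + 1)`-set that contains a petal is one. -/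
noncomputable def isolatedCopyProb (k j n : ℕ) (p : ℝ) : ℝ :=
  p * (1 - p) ^ ((k - j + 1) * (n - (j + 1)).choose (k - j))

/-- A bound for the correction factor in the probability that `r` given flags are all copies of
`M_j^-`. It accounts for the faces that contain several petals and for the at most `r` bases. -/
noncomputable def overlapFactor (k j r n : ℕ) (p : ℝ) : ℝ :=
  Real.exp (p * ((r * (k - j + 1) : ℕ) ^ 2 * n ^ (k - (j + 1)) + r))

lemma isolationFactor_nonneg (k j n : ℕ) (p : ℝ) : 0 ≤ isolationFactor k j n p :=
  Real.exp_nonneg _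

lemma overlapFactor_nonneg (k j r n : ℕ) (p : ℝ) : 0 ≤ overlapFactor k j r n p :=
  Real.exp_nonneg _

lemma copyProb_nonneg (hp : 0 ≤ p) (k j n : ℕ) : 0 ≤ copyProb k j n p :=
  mul_nonneg hp (pow_nonneg (isolationFactor_nonneg k j n p) _)

lemma isolatedCopyProb_nonneg (hp : p ∈ Set.Icc 0 1) (k j n : ℕ) : 0 ≤ isolatedCopyProb k j n p :=
  mul_nonneg hp.1 (pow_nonneg (sub_nonneg.2 hp.2) _)

lemma binomExp_choose_card_minusCopies (p : ℝ) (k j r : ℕ) :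
    binomExp p (faces V k) (fun H => ((minusCopies k j H).card.choose r : ℝ)) =
      ∑ T ∈ (flags V k j).powersetCard r,
        binomProb p (faces V k) fun H => AreMinusCopies H j T := by
  simp only [binomProb, ← binomExp_sum]
  refine binomExp_congr fun H hH => ?_
  rw [← Finset.card_powersetCard, Finset.sum_boole]
  congr 2
  ext T
  simp only [Finset.mem_powersetCard, Finset.mem_filter]
  constructor
  · rintro ⟨hT, hcard⟩
    exact ⟨⟨hT.trans (Finset.filter_subset _ _), hcard⟩, fun a ha => (mem_minusCopies hH).1 (hT ha)⟩
  · rintro ⟨⟨-, hcard⟩, hT⟩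
    exact ⟨fun a ha => (mem_minusCopies hH).2 (hT a ha), hcard⟩

lemma mul_choose_le_card_isolatingFaces_sdiff_add (hjk : j < k) (hT : T ⊆ flags V k j) {w : ℕ}
    (hw : w ≤ (allPetals T).card) :
    w * (Fintype.card V - (j + 1)).choose (k - j) ≤
      (isolatingFaces k (allPetals T) \ bases T).card +
        ((T.card * (k - j + 1)) ^ 2 * Fintype.card V ^ (k - (j + 1)) + T.card) := by
  have hiso := card_mul_choose_le_card_isolatingFaces_add hjk
    fun P hP => card_of_mem_allPetals hT hP
  rw [Nat.add_sub_add_right] at hiso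
  have hsq : (allPetals T).card ^ 2 ≤ (T.card * (k - j + 1)) ^ 2 :=
    Nat.pow_le_pow_left (card_allPetals_le hjk.le hT) 2
  have hsdiff : (isolatingFaces k (allPetals T)).card ≤
      (isolatingFaces k (allPetals T) \ bases T).card + T.card :=
    (Nat.sub_le_iff_le_add.1 (Finset.le_card_sdiff _ _)).trans
      (Nat.add_le_add_left (card_bases_le T) _)
  refine ((Nat.mul_le_mul_right _ hw).trans hiso).trans
    ((add_le_add hsdiff (Nat.mul_le_mul_right _ hsq)).trans_eq ?_)
  rw [add_assoc, add_comm T.card]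

lemma binomProb_areMinusCopies_le (hp : p ∈ Set.Icc 0 1) (hjk : j < k) (hT : T ⊆ flags V k j)
    {w : ℕ} (hw : ∀ H, AreMinusCopies H j T → w ≤ (allPetals T).card) :
    binomProb p (faces V k) (fun H => AreMinusCopies H j T) ≤
      p ^ (bases T).card * isolationFactor k j (Fintype.card V) p ^ w *
        overlapFactor k j T.card (Fintype.card V) p := by
  by_cases hex : ∃ H, AreMinusCopies H j T
  · obtain ⟨H, hH⟩ := hex
    have hexponent := mul_le_mul_of_nonneg_left (Nat.cast_le (α := ℝ).2
      (mul_choose_le_card_isolatingFaces_sdiff_add hjk hT (hw H hH))) hp.1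
    calc _ ≤ binomProb p (faces V k) fun H =>
            bases T ⊆ H ∧ Disjoint (isolatingFaces k (allPetals T) \ bases T) H :=
          binomProb_mono hp fun H _ h => ⟨h.bases_subset, h.disjoint_isolatingFaces_sdiff⟩
      _ ≤ p ^ (bases T).card * (1 - p) ^ (isolatingFaces k (allPetals T) \ bases T).card :=
          binomProb_subset_and_disjoint_le hp (bases_subset_faces hT)
            (Finset.sdiff_subset.trans (Finset.filter_subset _ _))
      _ ≤ _ := by
          rw [mul_assoc]
          refine mul_le_mul_of_nonneg_left ((one_sub_pow_le_exp_neg_mul hp.2 _).trans ?_)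
            (pow_nonneg hp.1 _)
          rw [isolationFactor, overlapFactor, ← Real.exp_nat_mul, ← Real.exp_add]
          refine Real.exp_le_exp.2 ?_
          push_cast at hexponent ⊢
          linarith
  · have hfalse : binomProb p (faces V k) (fun H => AreMinusCopies H j T) = 0 := by
      simp only [binomProb, if_neg fun h => hex ⟨_, h⟩, binomExp, mul_zero, Finset.sum_const_zero]
    rw [hfalse]
    exact mul_nonneg (mul_nonneg (pow_nonneg hp.1 _) (pow_nonneg (isolationFactor_nonneg ..) _))
      (overlapFactor_nonneg ..)

lemma binomProb_areMinusCopies_le_copyProb_pow (hp : p ∈ Set.Icc 0 1) (hjk : j < k)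
    (hT : T ⊆ flags V k j) (hbases : (bases T).card = T.card) :
    binomProb p (faces V k) (fun H => AreMinusCopies H j T) ≤
      copyProb k j (Fintype.card V) p ^ T.card *
        overlapFactor k j T.card (Fintype.card V) p := by
  refine (binomProb_areMinusCopies_le hp hjk hT
    fun H h => h.card_bases_mul_le hjk.le hT).trans_eq ?_
  rw [hbases, copyProb, mul_pow, ← pow_mul, mul_comm T.card]

lemma binomProb_areMinusCopies_le_of_card_bases_lt (hp : p ∈ Set.Icc 0 1) (hjk : j < k)
    (hT : T ⊆ flags V k j) (hbases : (bases T).card < T.card) :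
    binomProb p (faces V k) (fun H => AreMinusCopies H j T) ≤
      copyProb k j (Fintype.card V) p ^ (bases T).card * isolationFactor k j (Fintype.card V) p *
        overlapFactor k j T.card (Fintype.card V) p := by
  refine (binomProb_areMinusCopies_le hp hjk hT
    fun H h => h.card_bases_mul_lt hjk hT hbases).trans_eq ?_
  rw [copyProb, mul_pow, ← pow_mul, pow_succ, mul_comm (k - j + 1)]
  ring

/-- The flags whose base belongs to `S`. -/
noncomputable def flagsOver (k j : ℕ) (S : Finset (Finset V)) : Finset (Finset V × Finset V) :=
  (flags V k j).filter fun a => a.1 ∈ S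

lemma mem_flagsOver {S : Finset (Finset V)} {a : Finset V × Finset V} :
    a ∈ flagsOver k j S ↔ a ∈ flags V k j ∧ a.1 ∈ S := Finset.mem_filter

lemma card_filter_flagsOver_fst_eq {S : Finset (Finset V)} (hS : S ⊆ faces V k) {K : Finset V}
    (hK : K ∈ S) : ((flagsOver k j S).filter fun a => a.1 = K).card = (k + 1).choose j := by
  have hfiber : ((flagsOver k j S).filter fun a => a.1 = K) =
      (K.powersetCard j).image (Prod.mk K) := by
    ext ⟨L, C⟩
    simp only [Finset.mem_filter, mem_flagsOver, mem_flags, Finset.mem_image,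
      Finset.mem_powersetCard, Prod.mk.injEq]
    constructor
    · rintro ⟨⟨⟨-, hcenter, hsub⟩, -⟩, rfl⟩
      exact ⟨C, ⟨hsub, hcenter⟩, rfl, rfl⟩
    · rintro ⟨C, ⟨hsub, hcenter⟩, rfl, rfl⟩
      exact ⟨⟨⟨mem_faces.1 (hS hK), hcenter, hsub⟩, hK⟩, rfl⟩
  rw [hfiber, Finset.card_image_of_injective _ (Prod.mk_right_injective K),
    Finset.card_powersetCard, mem_faces.1 (hS hK)]

lemma card_flagsOver {S : Finset (Finset V)} (hS : S ⊆ faces V k) (j : ℕ) :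
    (flagsOver k j S).card = S.card * (k + 1).choose j := by
  rw [Finset.card_eq_sum_card_fiberwise fun a ha =>
    Finset.mem_coe.2 (mem_flagsOver.1 (Finset.mem_coe.1 ha)).2]
  exact Finset.sum_const_nat fun K hK => card_filter_flagsOver_fst_eq hS hK

lemma card_flags (V : Type*) [Fintype V] (k j : ℕ) :
    (flags V k j).card = (Fintype.card V).choose (k + 1) * (k + 1).choose j := by
  rw [← card_faces, ← card_flagsOver subset_rfl, flagsOver, Finset.filter_true_of_mem]
  exact fun a ha => mem_faces.2 (mem_flags.1 ha).1

lemma card_flagsOver_le {S : Finset (Finset V)} (hS : S ⊆ faces V k) (j : ℕ) :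
    (flagsOver k j S).card ≤ S.card * 2 ^ (k + 1) :=
  (card_flagsOver hS j).trans_le (Nat.mul_le_mul_left _ (Nat.choose_le_two_pow _ _))

lemma card_filter_card_bases_le (k j r i : ℕ) :
    (((flags V k j).powersetCard r).filter fun T => (bases T).card = i).card ≤
      (Fintype.card V ^ (k + 1)) ^ i * 2 ^ (i * 2 ^ (k + 1)) := by
  have hcover : (((flags V k j).powersetCard r).filter fun T => (bases T).card = i) ⊆
      ((faces V k).powersetCard i).biUnion fun S => (flagsOver k j S).powerset := by
    intro T hT
    obtain ⟨hT, hi⟩ := Finset.mem_filter.1 hT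
    have hsub := (Finset.mem_powersetCard.1 hT).1
    refine Finset.mem_biUnion.2 ⟨bases T,
      Finset.mem_powersetCard.2 ⟨bases_subset_faces hsub, hi⟩, Finset.mem_powerset.2 fun a ha => ?_⟩
    exact mem_flagsOver.2 ⟨hsub ha, mem_bases.2 ⟨a, ha, rfl⟩⟩
  refine (Finset.card_le_card hcover).trans ((Finset.card_biUnion_le_card_mul _ _
    (2 ^ (i * 2 ^ (k + 1))) fun S hS => ?_).trans (Nat.mul_le_mul_right _ ?_))
  · obtain ⟨hSfaces, rfl⟩ := Finset.mem_powersetCard.1 hS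
    rw [Finset.card_powerset]
    exact Nat.pow_le_pow_right two_pos (card_flagsOver_le hSfaces j)
  · rw [Finset.card_powersetCard, card_faces]
    exact (Nat.choose_le_pow _ _).trans (Nat.pow_le_pow_left (Nat.choose_le_pow _ _) _)

/-- The sets `T` of `r` flags are grouped by their number of bases. The main term has `r` bases;
with fewer bases there is an additional petal, whence the extra `isolationFactor`. -/
lemma binomExp_choose_card_minusCopies_le (hp : p ∈ Set.Icc 0 1) (hjk : j < k) (r : ℕ) :
    binomExp p (faces V k) (fun H => ((minusCopies k j H).card.choose r : ℝ)) ≤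
      (∑ i ∈ Finset.range r, ((Fintype.card V : ℝ) ^ (k + 1)) ^ i * 2 ^ (i * 2 ^ (k + 1)) *
          (copyProb k j (Fintype.card V) p ^ i * isolationFactor k j (Fintype.card V) p) +
        ((flags V k j).card.choose r : ℝ) * copyProb k j (Fintype.card V) p ^ r) *
      overlapFactor k j r (Fintype.card V) p := by
  have hq := copyProb_nonneg hp.1 k j (Fintype.card V)
  have hθ := isolationFactor_nonneg k j (Fintype.card V) p
  have hE := overlapFactor_nonneg k j r (Fintype.card V) p
  have hmaps : ∀ T ∈ (flags V k j).powersetCard r, (bases T).card ∈ Finset.range (r + 1) :=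
    fun T hT => Finset.mem_range_succ_iff.2
      ((card_bases_le T).trans_eq (Finset.mem_powersetCard.1 hT).2)
  rw [binomExp_choose_card_minusCopies, ← Finset.sum_fiberwise_of_maps_to hmaps,
    Finset.sum_range_succ, add_mul, Finset.sum_mul]
  refine add_le_add (Finset.sum_le_sum fun i hi => ?_) ?_
  · refine (Finset.sum_le_card_nsmul _ _ (copyProb k j (Fintype.card V) p ^ i *
      isolationFactor k j (Fintype.card V) p * overlapFactor k j r (Fintype.card V) p)
      fun T hT => ?_).trans ?_
    · obtain ⟨hTmem, rfl⟩ := Finset.mem_filter.1 hT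
      obtain ⟨hTsub, rfl⟩ := Finset.mem_powersetCard.1 hTmem
      exact binomProb_areMinusCopies_le_of_card_bases_lt hp hjk hTsub (Finset.mem_range.1 hi)
    · rw [nsmul_eq_mul, mul_assoc (_ * _)]
      refine mul_le_mul_of_nonneg_right ?_ (by positivity)
      exact_mod_cast card_filter_card_bases_le k j r i
  · refine (Finset.sum_le_card_nsmul _ _ (copyProb k j (Fintype.card V) p ^ r *
      overlapFactor k j r (Fintype.card V) p) fun T hT => ?_).trans ?_
    · obtain ⟨hTmem, hbases⟩ := Finset.mem_filter.1 hT
      obtain ⟨hTsub, rfl⟩ := Finset.mem_powersetCard.1 hTmem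
      exact binomProb_areMinusCopies_le_copyProb_pow hp hjk hTsub hbases
    · rw [nsmul_eq_mul, mul_assoc]
      refine mul_le_mul_of_nonneg_right ?_ (by positivity)
      rw [← Finset.card_powersetCard]
      exact_mod_cast Finset.card_filter_le _ _

lemma card_facesContaining_le (hjk : j ≤ k) {S : Finset (Finset V)}
    (hS : ∀ P ∈ S, P.card = j + 1) :
    (facesContaining k S).card ≤ S.card * (Fintype.card V - (j + 1)).choose (k - j) := by
  have hcover : facesContaining k S ⊆ S.biUnion fun P => (faces V k).filter (P ⊆ ·) := by
    intro K hK
    obtain ⟨hK, P, hP, hPK⟩ := mem_facesContaining.1 hK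
    exact Finset.mem_biUnion.2 ⟨P, hP, Finset.mem_filter.2 ⟨hK, hPK⟩⟩
  refine (Finset.card_le_card hcover).trans (Finset.card_biUnion_le_card_mul _ _ _ fun P hP => ?_)
  rw [card_filter_subset_faces (by rw [hS P hP]; omega), hS P hP, Nat.add_sub_add_right]

lemma areMinusCopies_of_pairwiseDisjoint (hT : T ⊆ flags V k j)
    (hdisj : (T : Set (Finset V × Finset V)).PairwiseDisjoint Prod.fst) {H : Finset (Finset V)}
    (hH : H ⊆ faces V k) (hbases : bases T ⊆ H)
    (hpetals : Disjoint (facesContaining k (allPetals T) \ bases T) H) :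
    AreMinusCopies H j T := by
  intro a ha
  obtain ⟨-, hcenter, hsub⟩ := mem_flags.1 (hT ha)
  refine ⟨hbases (mem_bases.2 ⟨a, ha, rfl⟩), hsub, hcenter, fun P hP K' hK' hPK' => ?_⟩
  have hbase : K' ∈ bases T := by
    by_contra hnot
    exact Finset.disjoint_left.1 hpetals (Finset.mem_sdiff.2 ⟨mem_facesContaining.2
      ⟨hH hK', P, mem_allPetals.2 ⟨a, ha, hP⟩, hPK'⟩, hnot⟩) hK'
  obtain ⟨b, hb, rfl⟩ := mem_bases.1 hbase
  obtain ⟨v, -, rfl⟩ := mem_petals.1 hP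
  refine congrArg Prod.fst (hdisj.elim_finset hb ha v (hPK' (Finset.mem_insert_self _ _)) ?_)
  exact subset_of_mem_petals hsub hP (Finset.mem_insert_self _ _)

lemma le_binomProb_areMinusCopies (hp : p ∈ Set.Icc 0 1) (hjk : j ≤ k) (hT : T ⊆ flags V k j)
    (hdisj : (T : Set (Finset V × Finset V)).PairwiseDisjoint Prod.fst) :
    isolatedCopyProb k j (Fintype.card V) p ^ T.card ≤
      binomProb p (faces V k) fun H => AreMinusCopies H j T := by
  have hcard : (facesContaining k (allPetals T) \ bases T).card ≤
      (k - j + 1) * (Fintype.card V - (j + 1)).choose (k - j) * T.card := by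
    rw [mul_comm, ← mul_assoc]
    exact (Finset.card_le_card Finset.sdiff_subset).trans
      ((card_facesContaining_le hjk fun P hP => card_of_mem_allPetals hT hP).trans
        (Nat.mul_le_mul_right _ (card_allPetals_le hjk hT)))
  calc _ ≤ p ^ (bases T).card * (1 - p) ^ (facesContaining k (allPetals T) \ bases T).card := by
        rw [isolatedCopyProb, mul_pow, ← pow_mul]
        have hp' := sub_nonneg.2 hp.2
        exact mul_le_mul (pow_le_pow_of_le_one hp.1 hp.2 (card_bases_le T))
          (pow_le_pow_of_le_one hp' (sub_le_self _ hp.1) hcard) (pow_nonneg hp' _)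
          (pow_nonneg hp.1 _)
    _ = binomProb p (faces V k) fun H =>
          bases T ⊆ H ∧ Disjoint (facesContaining k (allPetals T) \ bases T) H :=
        (binomProb_subset_and_disjoint (bases_subset_faces hT)
          (fun K hK => (mem_facesContaining.1 (Finset.mem_sdiff.1 hK).1).1)
          Finset.disjoint_sdiff).symm
    _ ≤ _ := binomProb_mono hp fun H hH h => areMinusCopies_of_pairwiseDisjoint hT hdisj hH h.1 h.2

/-- A bound for the number of flags whose base meets a given base. -/
def flagDegreeBound (k n : ℕ) : ℕ := (k + 1) * (n ^ k * 2 ^ (k + 1))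

lemma card_filter_not_disjoint_le {a : Finset V × Finset V} (ha : a ∈ flags V k j) :
    ((flags V k j).filter fun b => ¬ Disjoint a.1 b.1).card ≤
      flagDegreeBound k (Fintype.card V) := by
  have hcover : ((flags V k j).filter fun b => ¬ Disjoint a.1 b.1) ⊆
      a.1.biUnion fun v => flagsOver k j ((faces V k).filter ({v} ⊆ ·)) := by
    intro b hb
    obtain ⟨hb, hmeet⟩ := Finset.mem_filter.1 hb
    obtain ⟨v, hva, hvb⟩ := Finset.not_disjoint_iff.1 hmeet
    exact Finset.mem_biUnion.2 ⟨v, hva, mem_flagsOver.2 ⟨hb, Finset.mem_filter.2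
      ⟨mem_faces.2 (mem_flags.1 hb).1, Finset.singleton_subset_iff.2 hvb⟩⟩⟩
  refine (Finset.card_le_card hcover).trans ((Finset.card_biUnion_le_card_mul _ _
    (Fintype.card V ^ k * 2 ^ (k + 1)) fun v _ => ?_).trans_eq ?_)
  · refine (card_flagsOver_le (Finset.filter_subset _ _) j).trans (Nat.mul_le_mul_right _ ?_)
    simpa using card_filter_subset_faces_le k {v}
  · rw [(mem_flags.1 ha).1, flagDegreeBound]

lemma le_binomExp_choose_card_minusCopies (hp : p ∈ Set.Icc 0 1) (hjk : j ≤ k) (r : ℕ) :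
    (((flags V k j).card.choose r : ℝ) -
        r * (flagDegreeBound k (Fintype.card V) * (flags V k j).card ^ (r - 1))) *
      isolatedCopyProb k j (Fintype.card V) p ^ r ≤
    binomExp p (faces V k) (fun H => ((minusCopies k j H).card.choose r : ℝ)) := by
  let IsScattered (T : Finset (Finset V × Finset V)) : Prop :=
    (T : Set (Finset V × Finset V)).PairwiseDisjoint Prod.fst
  set S := (flags V k j).powersetCard r with hS
  have hcount : ((flags V k j).card.choose r : ℝ) ≤ (S.filter IsScattered).card +
      r * (flagDegreeBound k (Fintype.card V) * (flags V k j).card ^ (r - 1)) := by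
    have hnot : (S.filter fun T => ¬ IsScattered T).card ≤
        r * (flagDegreeBound k (Fintype.card V) * (flags V k j).card ^ (r - 1)) := by
      convert card_filter_not_pairwise_le (R := Function.onFun Disjoint Prod.fst)
        (X := flags V k j) (fun a ha => by convert card_filter_not_disjoint_le ha) r
      exact Iff.rfl
    rw [← Finset.card_powersetCard, ← hS, ← S.card_filter_add_card_filter_not IsScattered]
    exact_mod_cast Nat.add_le_add_left hnot _
  rw [binomExp_choose_card_minusCopies]
  calc _ ≤ ∑ _T ∈ S.filter IsScattered, isolatedCopyProb k j (Fintype.card V) p ^ r := by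
        rw [Finset.sum_const, nsmul_eq_mul]
        exact mul_le_mul_of_nonneg_right (sub_le_iff_le_add.2 hcount)
          (pow_nonneg (isolatedCopyProb_nonneg hp ..) r)
    _ ≤ ∑ T ∈ S.filter IsScattered, binomProb p (faces V k) fun H => AreMinusCopies H j T := by
        refine Finset.sum_le_sum fun T hT => ?_
        obtain ⟨hTS, hdisj⟩ := Finset.mem_filter.1 hT
        obtain ⟨hTsub, rfl⟩ := Finset.mem_powersetCard.1 hTS
        exact le_binomProb_areMinusCopies hp hjk hTsub hdisj
    _ ≤ _ := Finset.sum_le_sum_of_subset_of_nonneg (Finset.filter_subset _ _)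
        fun T _ _ => binomProb_nonneg hp _

end FactorialMoments

section MomentLimits

lemma tendsto_choose_mul_pow {ι : Type*} {l : Filter ι} {N : ι → ℕ} {q : ι → ℝ} {lam : ℝ}
    (hq : Tendsto q l (nhds 0)) (hN : Tendsto (fun n => N n * q n) l (nhds lam)) (r : ℕ) :
    Tendsto (fun n => ((N n).choose r : ℝ) * q n ^ r) l (nhds (lam ^ r / r.factorial)) := by
  have hfactors := (tendsto_finsetProd (Finset.range r) fun i _ =>
    hN.sub (hq.const_mul (i : ℝ))).div_const (r.factorial : ℝ)
  simp only [mul_zero, sub_zero, Finset.prod_const, Finset.card_range] at hfactors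
  refine hfactors.congr fun n => ?_
  have hfactorial : (r.factorial : ℝ) ≠ 0 := by positivity
  have hchoose : (r.factorial * (N n).choose r : ℝ) = ∏ i ∈ Finset.range r, ((N n : ℝ) - i) := by
    rw [← descPochhammer_eval_eq_prod_range, descPochhammer_eval_eq_descFactorial,
      Nat.descFactorial_eq_factorial_mul_choose, Nat.cast_mul]
  rw [div_eq_iff hfactorial, mul_right_comm, mul_comm ((N n).choose r : ℝ), hchoose]
  simp only [← sub_mul, Finset.prod_mul_distrib, Finset.prod_const, Finset.card_range]

lemma exp_neg_le_one_sub_pow {q : ℝ} (hq : q ≤ 1 / 2) (N : ℕ) :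
    Real.exp (-(q * N + 2 * q ^ 2 * N)) ≤ (1 - q) ^ N := by
  have hpos : 0 < 1 - q := by linarith
  have hinv : (1 - q)⁻¹ ≤ 1 + q + 2 * q ^ 2 := by
    rw [inv_le_iff_one_le_mul₀ hpos]
    nlinarith [mul_nonneg (sq_nonneg q) (show 0 ≤ 1 - 2 * q by linarith)]
  have hexp : Real.exp (-(q + 2 * q ^ 2)) ≤ 1 - q := by
    have hlog := Real.one_sub_inv_le_log_of_pos hpos
    exact (Real.le_log_iff_exp_le hpos).1 (by linarith)
  refine (pow_le_pow_left₀ (Real.exp_nonneg _) hexp N).trans_eq' ?_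
  rw [← Real.exp_nat_mul]
  ring_nf

variable {k j : ℕ} {c : ℝ} {p : ℕ → ℝ}

lemma isolationFactor_pow (k j n : ℕ) (p : ℝ) :
    isolationFactor k j n p ^ (k - j + 1) =
      Real.exp (-(p * ((k - j + 1) * (n - (j + 1)).choose (k - j) : ℕ))) := by
  rw [isolationFactor, ← Real.exp_nat_mul]
  push_cast
  ring_nf

lemma isolatedCopyProb_le_copyProb {p : ℝ} (hp : p ∈ Set.Icc 0 1) (k j n : ℕ) :
    isolatedCopyProb k j n p ≤ copyProb k j n p := by
  rw [copyProb, isolationFactor_pow]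
  exact mul_le_mul_of_nonneg_left (one_sub_pow_le_exp_neg_mul hp.2 _) hp.1

lemma copyProb_mul_exp_le_isolatedCopyProb {p : ℝ} (hp : 0 ≤ p) (hp' : p ≤ 1 / 2) (k j n : ℕ) :
    copyProb k j n p *
        Real.exp (-(2 * (k - j + 1 : ℕ) * (p ^ 2 * (n - (j + 1)).choose (k - j)))) ≤
      isolatedCopyProb k j n p := by
  rw [copyProb, isolationFactor_pow, mul_assoc, ← Real.exp_add]
  refine mul_le_mul_of_nonneg_left ((exp_neg_le_one_sub_pow hp' _).trans_eq' ?_) hp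
  push_cast
  ring_nf

namespace InCriticalWindow

lemma tendsto_sq_mul_choose (h : InCriticalWindow k j c p) (hjk : j < k) :
    Tendsto (fun n : ℕ => p n ^ 2 * (n - (j + 1)).choose (k - j)) atTop (nhds 0) := by
  have hbound := (h.tendsto_mul_log_pow hjk 1).const_mul (2 * windowConst k j)
  rw [mul_zero] at hbound
  refine squeeze_zero' (Eventually.of_forall fun n => by positivity) ?_ hbound
  filter_upwards [h.eventually_mul_pow_le, h.eventually_pos] with n hle hpos
  have hchoose : ((n - (j + 1)).choose (k - j) : ℝ) ≤ (n : ℝ) ^ (k - j) := by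
    exact_mod_cast (Nat.choose_le_pow _ _).trans (Nat.pow_le_pow_left (Nat.sub_le _ _) _)
  calc p n ^ 2 * ((n - (j + 1)).choose (k - j) : ℝ)
      ≤ p n ^ 2 * (n : ℝ) ^ (k - j) := by gcongr
    _ = p n * (p n * (n : ℝ) ^ (k - j)) := by ring
    _ ≤ p n * (2 * windowConst k j * Real.log n) := by gcongr
    _ = 2 * windowConst k j * (p n * Real.log n ^ 1) := by ring

lemma tendsto_mul_isolatedCopyProb (h : InCriticalWindow k j c p) (hjk : j < k) {f : ℕ → ℝ}
    (hf : ∀ n, 0 ≤ f n) {l : ℝ}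
    (hl : Tendsto (fun n => f n * copyProb k j n (p n)) atTop (nhds l)) :
    Tendsto (fun n => f n * isolatedCopyProb k j n (p n)) atTop (nhds l) := by
  have hlower := hl.mul ((h.tendsto_sq_mul_choose hjk).const_mul (2 * (k - j + 1 : ℕ) : ℝ)).neg.rexp
  simp only [mul_zero, neg_zero, Real.exp_zero, mul_one] at hlower
  refine tendsto_of_tendsto_of_tendsto_of_le_of_le' hlower hl ?_ ?_
  · filter_upwards [h.eventually_pos, h.eventually_le_half hjk] with n hpos hhalf
    rw [mul_assoc]
    exact mul_le_mul_of_nonneg_left (copyProb_mul_exp_le_isolatedCopyProb hpos.le hhalf k j n)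
      (hf n)
  · filter_upwards [h.eventually_mem_Icc hjk] with n hp
    exact mul_le_mul_of_nonneg_left (isolatedCopyProb_le_copyProb hp k j n) (hf n)

lemma tendsto_copyProb (h : InCriticalWindow k j c p) (hjk : j < k) :
    Tendsto (fun n => copyProb k j n (p n)) atTop (nhds 0) := by
  simpa [copyProb] using (h.tendsto_zero hjk).mul (h.tendsto_isolationFactor.pow (k - j + 1))

lemma tendsto_card_flags_mul_copyProb (h : InCriticalWindow k j c p) (hjk : j ≤ k) :
    Tendsto (fun n => ((flags (Fin n) k j).card : ℝ) * copyProb k j n (p n)) atTop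
      (nhds (lamj k j c)) := by
  simpa only [card_flags, Fintype.card_fin, copyProb] using h.tendsto_card_flags_mul hjk

lemma tendsto_overlapFactor (h : InCriticalWindow k j c p) (hjk : j < k) (r : ℕ) :
    Tendsto (fun n => overlapFactor k j r n (p n)) atTop (nhds 1) := by
  have hexponent := ((h.tendsto_mul_pow_succ hjk 0).const_mul ((r * (k - j + 1) : ℕ) ^ 2 : ℝ)).add
    ((h.tendsto_zero hjk).const_mul (r : ℝ))
  rw [mul_zero, mul_zero, add_zero] at hexponent
  simpa only [Real.exp_zero] using hexponent.rexp.congr fun n => by rw [overlapFactor]; ring_nf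

lemma tendsto_moment_upper_bound (h : InCriticalWindow k j c p) (hjk : j < k) (r : ℕ) :
    Tendsto (fun n : ℕ =>
      (∑ i ∈ Finset.range r, ((n : ℝ) ^ (k + 1)) ^ i * 2 ^ (i * 2 ^ (k + 1)) *
          (copyProb k j n (p n) ^ i * isolationFactor k j n (p n)) +
        ((flags (Fin n) k j).card.choose r : ℝ) * copyProb k j n (p n) ^ r) *
      overlapFactor k j r n (p n)) atTop (nhds (lamj k j c ^ r / r.factorial)) := by
  have hfewBases (i : ℕ) : Tendsto (fun n : ℕ => ((n : ℝ) ^ (k + 1)) ^ i * 2 ^ (i * 2 ^ (k + 1)) *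
      (copyProb k j n (p n) ^ i * isolationFactor k j n (p n))) atTop (nhds 0) := by
    have hprod := (((h.tendsto_pow_mul_isolationFactor_pow hjk.le).pow i).mul
      h.tendsto_isolationFactor).mul_const ((2 : ℝ) ^ (i * 2 ^ (k + 1)))
    rw [mul_zero, zero_mul] at hprod
    refine hprod.congr fun n => ?_
    rw [copyProb]
    ring
  have hsum := ((tendsto_finsetSum (Finset.range r) fun i _ => hfewBases i).add
    (tendsto_choose_mul_pow (h.tendsto_copyProb hjk)
      (h.tendsto_card_flags_mul_copyProb hjk.le) r)).mul (h.tendsto_overlapFactor hjk r)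
  rwa [Finset.sum_const_zero, zero_add, mul_one] at hsum

lemma tendsto_flagDegreeBound_mul_isolatedCopyProb (h : InCriticalWindow k j c p) (hjk : j < k) :
    Tendsto (fun n => (flagDegreeBound k n : ℝ) * isolatedCopyProb k j n (p n)) atTop (nhds 0) := by
  refine h.tendsto_mul_isolatedCopyProb hjk (fun n => Nat.cast_nonneg _) ?_
  have hprod := ((h.tendsto_pow_mul_isolationFactor_pow hjk.le).mul
    tendsto_inv_atTop_nhds_zero_nat).const_mul ((k + 1) * 2 ^ (k + 1) : ℝ)
  rw [mul_zero, mul_zero] at hprod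
  refine hprod.congr' ?_
  filter_upwards [eventually_ne_atTop 0] with n hn
  rw [flagDegreeBound, copyProb]
  push_cast
  field_simp
  ring

lemma tendsto_moment_lower_bound (h : InCriticalWindow k j c p) (hjk : j < k) (r : ℕ) :
    Tendsto (fun n : ℕ => (((flags (Fin n) k j).card.choose r : ℝ) -
        r * (flagDegreeBound k n * (flags (Fin n) k j).card ^ (r - 1))) *
      isolatedCopyProb k j n (p n) ^ r) atTop (nhds (lamj k j c ^ r / r.factorial)) := by
  have hy : Tendsto (fun n => isolatedCopyProb k j n (p n)) atTop (nhds 0) := by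
    simpa using h.tendsto_mul_isolatedCopyProb hjk (f := 1) (fun _ => zero_le_one)
      (by simpa using h.tendsto_copyProb hjk)
  have hNy := h.tendsto_mul_isolatedCopyProb hjk (fun n => Nat.cast_nonneg _)
    (h.tendsto_card_flags_mul_copyProb hjk.le)
  have herror : Tendsto (fun n : ℕ => r * (flagDegreeBound k n *
      (flags (Fin n) k j).card ^ (r - 1)) * isolatedCopyProb k j n (p n) ^ r) atTop (nhds 0) := by
    cases r with
    | zero => simp
    | succ s =>
      have hprod := ((h.tendsto_flagDegreeBound_mul_isolatedCopyProb hjk).mul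
        (hNy.pow s)).const_mul ((s + 1 : ℕ) : ℝ)
      rw [zero_mul, mul_zero] at hprod
      refine hprod.congr fun n => ?_
      rw [Nat.add_sub_cancel]
      ring
  simpa only [sub_mul, sub_zero] using (tendsto_choose_mul_pow hy hNy r).sub herror

lemma tendsto_binomExp_choose_card_minusCopies (h : InCriticalWindow k j c p) (hjk : j < k)
    (r : ℕ) :
    Tendsto (fun n => binomExp (p n) (faces (Fin n) k)
      fun H => ((minusCopies k j H).card.choose r : ℝ)) atTop
      (nhds (lamj k j c ^ r / r.factorial)) := by
  refine tendsto_of_tendsto_of_tendsto_of_le_of_le' (h.tendsto_moment_lower_bound hjk r)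
    (h.tendsto_moment_upper_bound hjk r) ?_ ?_
  · filter_upwards [h.eventually_mem_Icc hjk] with n hp
    simpa only [Fintype.card_fin] using
      le_binomExp_choose_card_minusCopies (V := Fin n) hp hjk.le r
  · filter_upwards [h.eventually_mem_Icc hjk] with n hp
    simpa only [Fintype.card_fin] using binomExp_choose_card_minusCopies_le (V := Fin n) hp hjk r

lemma tendsto_binomProb_card_minusCopies_eq (h : InCriticalWindow k j c p) (hjk : j < k) (s : ℕ) :
    Tendsto (fun n => binomProb (p n) (faces (Fin n) k) fun H => (minusCopies k j H).card = s)
      atTop (nhds (Real.exp (-lamj k j c) * lamj k j c ^ s / s.factorial)) :=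
  tendsto_binomProb_poisson (h.eventually_mem_Icc hjk)
    (h.tendsto_binomExp_choose_card_minusCopies hjk) s

lemma tendsto_binomProb_lt_card_minusCopies (h : InCriticalWindow k j c p) (hjk : j < k) :
    Tendsto (fun n => binomProb (p n) (faces (Fin n) k) fun H => n < (minusCopies k j H).card)
      atTop (nhds 0) := by
  have hmarkov := (h.tendsto_binomExp_choose_card_minusCopies hjk 1).mul
    tendsto_inv_atTop_nhds_zero_nat
  simp only [mul_zero, Nat.choose_one_right] at hmarkov
  refine squeeze_zero' ?_ ?_ hmarkov
  · filter_upwards [h.eventually_mem_Icc hjk] with n hp using binomProb_nonneg hp _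
  · filter_upwards [h.eventually_mem_Icc hjk, eventually_gt_atTop 0] with n hp hn
    exact binomProb_lt_le_binomExp_div hp _ hn

end InCriticalWindow

end MomentLimits

section Transfer

variable {α : ℕ → Type*} {p : ℕ → ℝ} {U : ∀ n, Finset (α n)} {Q Q' G : ∀ n, Finset (α n) → Prop}

lemma tendsto_binomProb_not_and (hp : ∀ᶠ n in atTop, p n ∈ Set.Icc 0 1)
    (hQ : Tendsto (fun n => binomProb (p n) (U n) fun H => ¬ Q n H) atTop (nhds 0))
    (hQ' : Tendsto (fun n => binomProb (p n) (U n) fun H => ¬ Q' n H) atTop (nhds 0)) :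
    Tendsto (fun n => binomProb (p n) (U n) fun H => ¬ (Q n H ∧ Q' n H)) atTop (nhds 0) := by
  have hsum := hQ.add hQ'
  rw [add_zero] at hsum
  refine squeeze_zero' ?_ ?_ hsum
  · filter_upwards [hp] with n hn using binomProb_nonneg hn _
  · filter_upwards [hp] with n hn
    exact (binomProb_mono hn fun H _ h => not_and_or.1 h).trans (binomProb_or_le hn _ _)

lemma tendsto_binomProb_of_eventually_iff (hp : ∀ᶠ n in atTop, p n ∈ Set.Icc 0 1)
    (hG : Tendsto (fun n => binomProb (p n) (U n) fun H => ¬ G n H) atTop (nhds 0))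
    (hiff : ∀ᶠ n in atTop, ∀ H ⊆ U n, G n H → (Q n H ↔ Q' n H)) {l : ℝ}
    (hl : Tendsto (fun n => binomProb (p n) (U n) (Q' n)) atTop (nhds l)) :
    Tendsto (fun n => binomProb (p n) (U n) (Q n)) atTop (nhds l) := by
  have hlower := hl.sub hG
  have hupper := hl.add hG
  rw [sub_zero] at hlower
  rw [add_zero] at hupper
  refine tendsto_of_tendsto_of_tendsto_of_le_of_le' hlower hupper ?_ ?_
  · filter_upwards [hp, hiff] with n hn hn'
    rw [sub_le_iff_le_add]
    exact (binomProb_mono hn fun H hH hQ' => or_iff_not_imp_right.2 fun hG =>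
      (hn' H hH (not_not.1 hG)).2 hQ').trans (binomProb_or_le hn (Q n) _)
  · filter_upwards [hp, hiff] with n hn hn'
    exact (binomProb_mono hn fun H hH hQ => or_iff_not_imp_right.2 fun hG =>
      (hn' H hH (not_not.1 hG)).1 hQ).trans (binomProb_or_le hn (Q' n) _)

lemma complexAt_eq_generatedComplex (k n : ℕ) (t : Finset (Fin n) → ℝ) (p : ℝ) :
    complexAt k n t p = generatedComplex ((faces (Fin n) k).filter fun K => t K ≤ p) := by
  ext A
  simp only [complexAt, generatedComplex, Set.mem_ofPred_eq, Finset.mem_filter, mem_faces,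
    and_assoc]

lemma tendsto_birthMeasure_complexAt {k : ℕ} (hp : ∀ᶠ n in atTop, p n ∈ Set.Icc 0 1)
    (Q : ∀ n, Set (Finset (Fin n)) → Prop) {l : ℝ}
    (hl : Tendsto (fun n => binomProb (p n) (faces (Fin n) k) fun H => Q n (generatedComplex H))
      atTop (nhds l)) :
    Tendsto (fun n => birthMeasure n {t | Q n (complexAt k n t (p n))}) atTop
      (nhds (ENNReal.ofReal l)) := by
  refine (ENNReal.tendsto_ofReal hl).congr' ?_
  filter_upwards [hp] with n hn
  simp only [complexAt_eq_generatedComplex]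
  exact (pi_uniform_eq_binomProb hn (faces (Fin n) k) fun H => Q n (generatedComplex H)).symm

end Transfer

section TypicalComplexes

variable {k j M : ℕ}

/-- The properties that determine the cohomology in degrees at most `j`. In the critical window,
the random set of faces has them with high probability. -/
structure IsTypical [Fintype V] (k j M : ℕ) (H : Finset (Finset V)) : Prop where
  hasCoboundaryExpansion : HasCoboundaryExpansion j H
  smallClustersIsolate : SmallClustersIsolate k j M H
  largeClustersExpand : LargeClustersExpand k j M H
  card_minusCopies_le : (minusCopies k j H).card ≤ Fintype.card V

namespace IsTypical

variable [Fintype V] {H : Finset (Finset V)}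

lemma finrank_cohomology (h : IsTypical k j M H) (hj : 1 ≤ j) (hjk : j < k) (hM : 1 ≤ M)
    (hH : H ⊆ faces V k) :
    Module.finrank (ZMod 2) (cohomology (generatedComplex H) j) = (minusCopies k j H).card :=
  finrank_cohomology_eq_card_minusCopies hj hjk hM hH h.hasCoboundaryExpansion
    h.smallClustersIsolate h.largeClustersExpand h.card_minusCopies_le

lemma cohomConnected_pred (h : IsTypical k j M H) (hj : 1 ≤ j) (hV : j < Fintype.card V) :
    CohomConnected (generatedComplex H) (j - 1) :=
  ⟨h.hasCoboundaryExpansion.nonempty_cohomology_zero_equiv hV hj, fun _ hi hij =>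
    h.hasCoboundaryExpansion.subsingleton_cohomology hV hi (Nat.add_le_of_le_sub hj hij)⟩

lemma cohomConnected_iff (h : IsTypical k j M H) (hj : 1 ≤ j) (hV : j < Fintype.card V) :
    CohomConnected (generatedComplex H) j ↔
      Module.finrank (ZMod 2) (cohomology (generatedComplex H) j) = 0 := by
  obtain ⟨hzero, hlow⟩ := h.cohomConnected_pred hj hV
  rw [Module.finrank_zero_iff]
  refine ⟨fun hconn => hconn.2 j hj le_rfl, fun hvanish => ⟨hzero, fun i hi hij => ?_⟩⟩
  obtain rfl | hlt := hij.eq_or_lt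
  · exact hvanish
  · exact hlow i hi (Nat.le_sub_one_of_lt hlt)

end IsTypical

namespace InCriticalWindow

variable {c : ℝ} {p : ℕ → ℝ}

lemma exists_tendsto_binomProb_not_isTypical (h : InCriticalWindow k j c p) (hjk : j < k) :
    ∃ M, 1 ≤ M ∧
      Tendsto (fun n => binomProb (p n) (faces (Fin n) k) fun H => ¬ IsTypical k j M H)
        atTop (nhds 0) := by
  obtain ⟨M, hM, hlarge⟩ := h.exists_tendsto_binomProb_not_largeClustersExpand hjk
  have hp := h.eventually_mem_Icc hjk
  have hcard := h.tendsto_binomProb_lt_card_minusCopies hjk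
  simp only [← not_le] at hcard
  refine ⟨M, hM, (tendsto_binomProb_not_and hp
    (tendsto_binomProb_not_and hp (h.tendsto_binomProb_not_hasCoboundaryExpansion hjk)
      (h.tendsto_binomProb_not_smallClustersIsolate hjk M))
    (tendsto_binomProb_not_and hp hlarge hcard)).congr fun n => binomProb_congr fun H _ => ?_⟩
  refine not_congr ⟨fun ⟨⟨hexp, hsmall⟩, hlarge, hcard⟩ => ⟨hexp, hsmall, hlarge, ?_⟩,
    fun ⟨hexp, hsmall, hlarge, hcard⟩ => ⟨⟨hexp, hsmall⟩, hlarge, ?_⟩⟩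
  · rwa [Fintype.card_fin]
  · rwa [Fintype.card_fin] at hcard

lemma tendsto_binomProb_finrank_cohomology_eq (h : InCriticalWindow k j c p) (hj : 1 ≤ j)
    (hjk : j < k) (s : ℕ) :
    Tendsto (fun n => binomProb (p n) (faces (Fin n) k) fun H =>
      Module.finrank (ZMod 2) (cohomology (generatedComplex H) j) = s) atTop
      (nhds (Real.exp (-lamj k j c) * lamj k j c ^ s / s.factorial)) := by
  obtain ⟨M, hM, htypical⟩ := h.exists_tendsto_binomProb_not_isTypical hjk
  refine tendsto_binomProb_of_eventually_iff (h.eventually_mem_Icc hjk) htypical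
    (Eventually.of_forall fun n H hH hG => ?_) (h.tendsto_binomProb_card_minusCopies_eq hjk s)
  rw [hG.finrank_cohomology hj hjk hM hH]

lemma tendsto_binomProb_cohomConnected_pred (h : InCriticalWindow k j c p) (hj : 1 ≤ j)
    (hjk : j < k) :
    Tendsto (fun n => binomProb (p n) (faces (Fin n) k) fun H =>
      CohomConnected (generatedComplex H) (j - 1)) atTop (nhds 1) := by
  obtain ⟨M, -, htypical⟩ := h.exists_tendsto_binomProb_not_isTypical hjk
  refine tendsto_binomProb_of_eventually_iff (Q' := fun _ _ => True) (h.eventually_mem_Icc hjk)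
    htypical ?_ (tendsto_const_nhds.congr fun n => ?_)
  · filter_upwards [eventually_gt_atTop j] with n hn H _ hG
    exact iff_true_intro (hG.cohomConnected_pred hj (by rwa [Fintype.card_fin]))
  · simp only [binomProb, if_true, binomExp_one]

lemma tendsto_binomProb_cohomConnected (h : InCriticalWindow k j c p) (hj : 1 ≤ j)
    (hjk : j < k) :
    Tendsto (fun n => binomProb (p n) (faces (Fin n) k) fun H =>
      CohomConnected (generatedComplex H) j) atTop (nhds (Real.exp (-lamj k j c))) := by
  obtain ⟨M, -, htypical⟩ := h.exists_tendsto_binomProb_not_isTypical hjk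
  have hvanish := h.tendsto_binomProb_finrank_cohomology_eq hj hjk 0
  rw [pow_zero, mul_one, Nat.factorial_zero, Nat.cast_one, div_one] at hvanish
  refine tendsto_binomProb_of_eventually_iff (h.eventually_mem_Icc hjk) htypical ?_ hvanish
  filter_upwards [eventually_gt_atTop j] with n hn H _ hG
  exact hG.cohomConnected_iff hj (by rwa [Fintype.card_fin])

end InCriticalWindow

lemma inCriticalWindow_of_forall_eq {c : ℝ} {cseq p : ℕ → ℝ} (hc : Tendsto cseq atTop (nhds c))
    (hp : ∀ n : ℕ, p n =
      ((j + 1 : ℝ) * Real.log n + Real.log (Real.log n) + cseq n) * (Nat.factorial (k - j)) /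
        (((k - j + 1 : ℕ) : ℝ) * (n : ℝ) ^ (k - j))) : InCriticalWindow k j c p := by
  refine hc.congr' ?_
  filter_upwards [eventually_ne_atTop 0] with n hn
  rw [scaledProb, hp]
  field_simp
  ring

end TypicalComplexes

/-- Theorem 1.7: inside the critical window, `dim H^j(G_p;F₂)` converges in distribution
to `Po(λ_j)`; moreover whp `H^0 ≅ F₂` and `H^i = 0` for `1 ≤ i ≤ j-1`; in particular
`Pr(G_p is j-cohom-connected) → e^{-λ_j}`. -/
theorem statement4 (k j : ℕ) (hk : 2 ≤ k) (hj : 1 ≤ j) (hjk : j < k)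
    (c : ℝ) (cseq : ℕ → ℝ) (hc : Tendsto cseq atTop (nhds c))
    (p : ℕ → ℝ)
    (hp : ∀ n : ℕ, p n =
      ((j + 1 : ℝ) * Real.log n + Real.log (Real.log n) + cseq n) * (Nat.factorial (k - j)) /
        (((k - j + 1 : ℕ) : ℝ) * (n : ℝ) ^ (k - j))) :
    (∀ s : ℕ,
      Tendsto (fun n : ℕ => birthMeasure n {t : Finset (Fin n) → ℝ |
          Module.finrank (ZMod 2) (cohomology (complexAt k n t (p n)) j) = s})
        atTop
        (nhds (ENNReal.ofReal
          (Real.exp (-(lamj k j c)) * (lamj k j c) ^ s / (Nat.factorial s))))) ∧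
    Tendsto (fun n : ℕ => birthMeasure n {t : Finset (Fin n) → ℝ |
        Nonempty (cohomology (complexAt k n t (p n)) 0 ≃ₗ[ZMod 2] ZMod 2) ∧
        ∀ i, 1 ≤ i → i ≤ j - 1 → Subsingleton (cohomology (complexAt k n t (p n)) i)})
      atTop (nhds 1) ∧
    Tendsto (fun n : ℕ => birthMeasure n {t : Finset (Fin n) → ℝ |
        CohomConnected (complexAt k n t (p n)) j})
      atTop (nhds (ENNReal.ofReal (Real.exp (-(lamj k j c))))) := by
  have hwindow : InCriticalWindow k j c p := inCriticalWindow_of_forall_eq hc hp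
  have hp01 := hwindow.eventually_mem_Icc hjk
  refine ⟨fun s => ?_, ?_, ?_⟩
  · exact tendsto_birthMeasure_complexAt hp01
      (fun _ G => Module.finrank (ZMod 2) (cohomology G j) = s)
      (hwindow.tendsto_binomProb_finrank_cohomology_eq hj hjk s)
  · rw [← ENNReal.ofReal_one]
    exact tendsto_birthMeasure_complexAt hp01 (fun _ G => CohomConnected G (j - 1))
      (hwindow.tendsto_binomProb_cohomConnected_pred hj hjk)
  · exact tendsto_birthMeasure_complexAt hp01 (fun _ G => CohomConnected G j)
      (hwindow.tendsto_binomProb_cohomConnected hj hjk)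

end RSC
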